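/- arXiv:2209.01934 — 2 statements merged into one kernel-verified Lean document; each statement's English description precedes it below -/
import Mathlib

section
/- Universality of the one-point function at the singular origin (Theorem 1.2(c), k = 1). Under the singular-origin setup with fixed real L ≥ 0, set δ := (n+L)/N. Then as N → ∞, (1/(Nδ))·R_{N,1}(z/√(Nδ)) converges to (conj(z) − z)·e^{−2|z|²}·κ_o(z, conj(z)), uniformly for z in compact subsets of ℂ, where κ_o(z, conj(z)) = 2(2|z|²)^{2L} ∫_0^1 s^{2L}( z e^{(1−s²)z²} − conj(z) e^{(1−s²)conj(z)²} )·E_{2,1+2L}((2s|z|²)²) ds. -/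
open MeasureTheory Filter Finset

noncomputable section

namespace SI

/-- The weight `w(ζ) = |ζ|^{4L}(1+|ζ|²)^{-2(n+L+1)}`. -/
def wfun (n L : ℝ) (ζ : ℂ) : ℝ :=
  ‖ζ‖ ^ (4*L) * (1 + ‖ζ‖ ^ 2) ^ (-(2*(n+L+1)))

/-- The (unnormalised) joint eigenvalue density of the symplectic induced
spherical ensemble. -/
def jointDen (N : ℕ) (n L : ℝ) (ζs : Fin N → ℂ) : ℝ :=
  (∏ j : Fin N, ∏ k ∈ Finset.Ioi j,
     ‖ζs j - ζs k‖ ^ 2 * ‖ζs j - (starRingEnd ℂ) (ζs k)‖ ^ 2) *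
  ∏ j : Fin N, (‖ζs j - (starRingEnd ℂ) (ζs j)‖ ^ 2 * wfun n L (ζs j))

/-- The normalisation constant `Z_N` (the factor `π⁻ᴺ` accounts for `dA = d²ζ/π`). -/
def ZN (N : ℕ) (n L : ℝ) : ℝ :=
  (Real.pi)⁻¹ ^ N * ∫ ζs : Fin N → ℂ, jointDen N n L ζs

/-- The one-point correlation function `R_{N,1}`. -/
def R1 (N : ℕ) (n L : ℝ) (ζ : ℂ) : ℝ :=
  N * (ZN N n L)⁻¹ * (Real.pi)⁻¹ ^ (N-1) *
    ∫ ζs : Fin (N-1) → ℂ, jointDen (N-1+1) n L (Fin.cons ζ ζs)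

/-- The density value `δ = ((n+L)/N)(1+p²)⁻²`. -/
def dlt (N : ℕ) (n L p : ℝ) : ℝ := ((n+L)/N) * (1+p^2)^(-2 : ℝ)

/-- `√(Nδ)`. -/
def sc (N : ℕ) (n L p : ℝ) : ℝ := Real.sqrt (N * dlt N n L p)

/-- The admissible system sizes in the singular-origin regime:
positive `N` for which `n = (b+1)N` is an integer. -/
def Ssing (b : ℝ) : Set ℕ :=
  {N | 0 < N ∧ ∃ nm : ℕ, (nm : ℝ) = (b+1)*N}

/-- The real two-parametric Mittag-Leffler function `E_{2,1+2L}` (general real `L ≥ 0`). -/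
def MLER (L : ℝ) (x : ℝ) : ℝ := ∑' k : ℕ, x ^ k / Real.Gamma (2*k+1+2*L)

/-- The limiting kernel `κ_o(z, conj z)` at the singular origin for general real `L ≥ 0`. -/
def koConj (L : ℝ) (z : ℂ) : ℂ :=
  2 * (((2 * ‖z‖ ^ 2) ^ (2*L) : ℝ) : ℂ) *
    ∫ s in (0:ℝ)..1, ((s ^ (2*L) : ℝ) : ℂ) *
      (z * Complex.exp ((1-(s:ℂ)^2)*z^2)
        - (starRingEnd ℂ) z * Complex.exp ((1-(s:ℂ)^2)*((starRingEnd ℂ) z)^2)) *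
      ((MLER L ((2*s*‖z‖^2)^2) : ℝ) : ℂ)

/-!
The density of the ensemble is a Vandermonde determinant at the `2N` points `ζ_j`, `conj ζ_j`.
Writing it over a skew-orthogonal basis of polynomials, only the permutations that preserve the
blocks `{2k, 2k + 1}` survive integration, so the one-point function is a finite skew-orthogonal
sum, the prekernel. For a radial weight the basis is explicit in terms of the radial moments, which
for `wfun n L` are Beta integrals.

Set `m = n + L`. At scale `√m` the prekernel becomes a truncated power series in
`z^(2j) z̄^(2(i+j)+1) - z̄^(2j) z^(2(i+j)+1)`. As `N → ∞` its coefficients converge, by the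
asymptotics of Gamma ratios, and for `(b + 1) N ≤ n` they have a summable bound that does not depend
on `N`. Dominated convergence along `(N, w) → (∞, z)` therefore gives locally uniform convergence.
The limiting series is the expansion of `κ_o(z, z̄)`: expand the exponentials and the Mittag-Leffler
function, integrate term by term with `∫₀¹ s^(2L+2j) (1-s²)^i ds`, and apply Legendre's duplication
formula.
-/

section BlockPermutations

open Equiv

variable {ι : Type*}

/-- The permutation of `ι × Fin 2` that carries the block `{j} × Fin 2` to `{τ j} × Fin 2`, acting
by `ε j` inside the block. -/
def blockPerm (τ : Perm ι) (ε : ι → Perm (Fin 2)) : Perm (ι × Fin 2) :=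
  prodShear τ ε

lemma blockPerm_apply (τ : Perm ι) (ε : ι → Perm (Fin 2)) (j : ι) (e : Fin 2) :
    blockPerm τ ε (j, e) = (τ j, ε j e) :=
  rfl

lemma blockPerm_injective :
    Function.Injective fun x : Perm ι × (ι → Perm (Fin 2)) => blockPerm x.1 x.2 := by
  rintro ⟨τ, ε⟩ ⟨τ', ε'⟩ h
  have hval (j : ι) (e : Fin 2) : (τ j, ε j e) = (τ' j, ε' j e) := congr($h (j, e))
  exact Prod.ext (Equiv.ext fun j => congr_arg Prod.fst (hval j 0))
    (funext fun j => Equiv.ext fun e => congr_arg Prod.snd (hval j e))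

lemma sign_blockPerm [Fintype ι] [DecidableEq ι] (τ : Perm ι) (ε : ι → Perm (Fin 2)) :
    Perm.sign (blockPerm τ ε) = ∏ j, Perm.sign (ε j) := by
  have hfactor : blockPerm τ ε = prodCongrLeft (fun _ => τ) * prodCongrRight ε := rfl
  rw [hfactor, Perm.sign_mul, Perm.sign_prodCongrLeft, Perm.sign_prodCongrRight]
  simp

lemma eq_or_eq_of_fst_eq {p q r : ι × Fin 2} (hpq : p ≠ q) (h : p.1 = q.1) (hr : r.1 = p.1) :
    r = p ∨ r = q := by
  have hsnd : p.2 ≠ q.2 := fun h2 => hpq (Prod.ext h h2)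
  rcases (by lia : r.2 = p.2 ∨ r.2 = q.2) with h2 | h2
  · exact .inl (Prod.ext hr h2)
  · exact .inr (Prod.ext (hr.trans h) h2)

lemma fst_ne_fst_of_pairs_block {σ : Perm (ι × Fin 2)} {j : ι}
    (hj : (σ (j, 0)).1 = (σ (j, 1)).1) {p : ι × Fin 2} (hp : p.1 ≠ j) :
    (σ p).1 ≠ (σ (j, 0)).1 := by
  intro h
  rcases eq_or_eq_of_fst_eq (σ.injective.ne (by simp)) hj h with h | h
  all_goals exact hp congr(($(σ.injective h)).1)

lemma pairs_block_of_forall_ne {σ : Perm (ι × Fin 2)} {j₀ : ι}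
    (hσ : ∀ j ≠ j₀, (σ (j, 0)).1 = (σ (j, 1)).1) : (σ (j₀, 0)).1 = (σ (j₀, 1)).1 := by
  set q := σ.symm ((σ (j₀, 0)).1, (σ (j₀, 0)).2 + 1)
  have hσq : σ q = ((σ (j₀, 0)).1, (σ (j₀, 0)).2 + 1) := σ.apply_symm_apply _
  have hqj : q.1 = j₀ := by
    by_contra hne
    refine fst_ne_fst_of_pairs_block (hσ _ hne) (p := (j₀, 0)) (Ne.symm hne) ?_
    rcases (by lia : q.2 = 0 ∨ q.2 = 1) with h2 | h2
    · rw [(Prod.ext rfl h2.symm : (q.1, 0) = q), hσq]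
    · rw [hσ _ hne, (Prod.ext rfl h2.symm : (q.1, 1) = q), hσq]
  have hq1 : q = (j₀, 1) := by
    refine Prod.ext hqj ?_
    by_contra h2
    have h0 : q = (j₀, 0) := Prod.ext hqj (by lia)
    have := congr_arg Prod.snd hσq
    rw [h0] at this
    simp at this
  rw [← hq1, hσq]

lemma exists_blockPerm_eq [Finite ι] {σ : Perm (ι × Fin 2)}
    (hσ : ∀ j, (σ (j, 0)).1 = (σ (j, 1)).1) : ∃ τ ε, blockPerm τ ε = σ := by
  have hfst (j : ι) (e : Fin 2) : (σ (j, e)).1 = (σ (j, 0)).1 := by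
    fin_cases e
    exacts [rfl, (hσ j).symm]
  have hτ : Function.Injective fun j => (σ (j, 0)).1 := fun j k hjk => by
    by_contra hne
    exact fst_ne_fst_of_pairs_block (hσ k) (p := (j, 0)) hne hjk
  have hε (j : ι) : Function.Injective fun e => (σ (j, e)).2 := fun e e' h =>
    congr_arg Prod.snd (σ.injective (Prod.ext ((hfst j e).trans (hfst j e').symm) h))
  refine ⟨.ofBijective _ (Finite.injective_iff_bijective.mp hτ),
    fun j => .ofBijective _ (Finite.injective_iff_bijective.mp (hε j)), ?_⟩
  ext1 ⟨j, e⟩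
  exact Prod.ext (hfst j e).symm rfl

variable [Fintype ι] [DecidableEq ι] {R : Type*} [CommRing R]

lemma sum_perm_fin_two_sign_mul (f : Perm (Fin 2) → R) :
    ∑ e, ((Perm.sign e : ℤ) : R) * f e = f 1 - f (swap 0 1) := by
  have huniv : (univ : Finset (Perm (Fin 2))) = {1, swap 0 1} := by decide
  rw [huniv, sum_pair (by decide), Perm.sign_swap (by decide)]
  simp [sub_eq_add_neg]

lemma sum_sign_mul_prod_eq_sum_prod_sub (j₀ : ι) (F : ι → ι × Fin 2 → ι × Fin 2 → R)
    (hF : ∀ j ≠ j₀, ∀ p q : ι × Fin 2, p.1 ≠ q.1 → F j p q = 0) :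
    ∑ σ : Perm (ι × Fin 2), ((Perm.sign σ : ℤ) : R) * ∏ j, F j (σ (j, 0)) (σ (j, 1)) =
      ∑ τ : Perm ι, ∏ j, (F j (τ j, 0) (τ j, 1) - F j (τ j, 1) (τ j, 0)) := by
  set term : Perm (ι × Fin 2) → R :=
    fun σ => ((Perm.sign σ : ℤ) : R) * ∏ j, F j (σ (j, 0)) (σ (j, 1)) with hterm
  have hsupport : ∀ σ ∉ univ.image fun x : Perm ι × (ι → Perm (Fin 2)) => blockPerm x.1 x.2,
      term σ = 0 := by
    intro σ hσ
    obtain ⟨j, hj, hne⟩ : ∃ j ≠ j₀, (σ (j, 0)).1 ≠ (σ (j, 1)).1 := by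
      by_contra! hpairs
      obtain ⟨τ, ε, rfl⟩ := exists_blockPerm_eq fun j =>
        (eq_or_ne j j₀).elim (fun h => h ▸ pairs_block_of_forall_ne hpairs) (hpairs j)
      exact hσ (mem_image_of_mem _ (mem_univ (τ, ε)))
    rw [hterm]
    simp only
    rw [prod_eq_zero (mem_univ j) (hF j hj _ _ hne), mul_zero]
  calc ∑ σ, term σ
      = ∑ τ : Perm ι, ∑ ε : ι → Perm (Fin 2), term (blockPerm τ ε) := by
        rw [← sum_subset (subset_univ _) fun σ _ => hsupport σ,
          sum_image blockPerm_injective.injOn, Fintype.sum_prod_type]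
    _ = ∑ τ : Perm ι, ∑ ε : ι → Perm (Fin 2),
          ∏ j, ((Perm.sign (ε j) : ℤ) : R) * F j (τ j, ε j 0) (τ j, ε j 1) := by
        simp only [hterm, sign_blockPerm, blockPerm_apply, prod_mul_distrib, Units.coe_prod,
          Int.cast_prod]
    _ = ∑ τ : Perm ι, ∏ j, ∑ e : Perm (Fin 2),
          ((Perm.sign e : ℤ) : R) * F j (τ j, e 0) (τ j, e 1) := by
        simp only [prod_univ_sum, Fintype.piFinset_univ]
    _ = _ := by simp [sum_perm_fin_two_sign_mul]

lemma sum_perm_apply_zero {M : ℕ} (g : Fin (M + 1) → R) :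
    ∑ τ : Perm (Fin (M + 1)), g (τ 0) = M.factorial * ∑ k, g k := by
  rw [← Equiv.sum_comp Perm.decomposeFin.symm, Fintype.sum_prod_type]
  simp [Fintype.card_perm, mul_sum]

end BlockPermutations

section SkewDensities

variable {X : Type*}

/-- The function `(x_j) ↦ ∑_σ sgn σ ∏_j ψ_{σ(j,0),σ(j,1)}(x_j)`, the sum being over the
permutations of `ι × Fin 2`: the joint density of a Pfaffian point process, expanded as a
determinant along blocks of two rows. -/
def skewDensity {ι : Type*} [Fintype ι] [DecidableEq ι] (ψ : ι × Fin 2 → ι × Fin 2 → X → ℂ)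
    (x : ι → X) : ℂ :=
  ∑ σ : Equiv.Perm (ι × Fin 2),
    ((Equiv.Perm.sign σ : ℤ) : ℂ) * ∏ j, ψ (σ (j, 0)) (σ (j, 1)) (x j)

variable [MeasureSpace X] [SigmaFinite (volume : Measure X)] {M : ℕ}
  {ψ : Fin (M + 1) × Fin 2 → Fin (M + 1) × Fin 2 → X → ℂ}

/-- The antisymmetrised integral `∫ ψ_{(k,0),(k,1)} - ∫ ψ_{(k,1),(k,0)}` over the `k`-th block. -/
def blockNorm (ψ : Fin (M + 1) × Fin 2 → Fin (M + 1) × Fin 2 → X → ℂ) (k : Fin (M + 1)) : ℂ :=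
  (∫ x, ψ (k, 0) (k, 1) x) - ∫ x, ψ (k, 1) (k, 0) x

lemma integral_skewDensity (hψ : ∀ p q, Integrable (ψ p q))
    (horth : ∀ p q, p.1 ≠ q.1 → ∫ x, ψ p q x = 0) :
    ∫ x : Fin (M + 1) → X, skewDensity ψ x = (M + 1).factorial * ∏ k, blockNorm ψ k := by
  have hterm (σ : Equiv.Perm (Fin (M + 1) × Fin 2)) :
      ∫ x : Fin (M + 1) → X, ∏ j, ψ (σ (j, 0)) (σ (j, 1)) (x j) =
        ∏ j, ∫ x, ψ (σ (j, 0)) (σ (j, 1)) x :=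
    integral_fintype_prod_volume_eq_prod fun j => ψ (σ (j, 0)) (σ (j, 1))
  simp only [skewDensity]
  rw [integral_finsetSum _ fun σ _ =>
    (Integrable.fintype_prod fun j => hψ (σ (j, 0)) (σ (j, 1))).const_mul _]
  simp only [integral_const_mul, hterm]
  rw [sum_sign_mul_prod_eq_sum_prod_sub 0 (fun _ p q => ∫ x, ψ p q x) fun _ _ => horth]
  have hperm (τ : Equiv.Perm (Fin (M + 1))) : ∏ j, blockNorm ψ (τ j) = ∏ k, blockNorm ψ k :=
    Equiv.prod_comp τ _
  change ∑ τ : Equiv.Perm (Fin (M + 1)), ∏ j, blockNorm ψ (τ j) = _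
  simp [hperm, Fintype.card_perm]

lemma integral_skewDensity_cons (hψ : ∀ p q, Integrable (ψ p q))
    (horth : ∀ p q, p.1 ≠ q.1 → ∫ x, ψ p q x = 0) (hnorm : ∀ k, blockNorm ψ k ≠ 0) (x : X) :
    ∫ y : Fin M → X, skewDensity ψ (Fin.cons x y) =
      M.factorial * (∏ k, blockNorm ψ k) *
        ∑ k, (ψ (k, 0) (k, 1) x - ψ (k, 1) (k, 0) x) / blockNorm ψ k := by
  set total := ∏ k, blockNorm ψ k with htotal
  have hterm (σ : Equiv.Perm (Fin (M + 1) × Fin 2)) :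
      ∫ y : Fin M → X, ∏ j : Fin M, ψ (σ (j.succ, 0)) (σ (j.succ, 1)) (y j) =
        ∏ j : Fin M, ∫ x, ψ (σ (j.succ, 0)) (σ (j.succ, 1)) x :=
    integral_fintype_prod_volume_eq_prod fun j : Fin M => ψ (σ (j.succ, 0)) (σ (j.succ, 1))
  simp only [skewDensity, Fin.prod_univ_succ, Fin.cons_zero, Fin.cons_succ]
  rw [integral_finsetSum _ fun σ _ => ((Integrable.fintype_prod fun j : Fin M =>
    hψ (σ (j.succ, 0)) (σ (j.succ, 1))).const_mul _).const_mul _]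
  simp only [integral_const_mul, hterm]
  have hsum := sum_sign_mul_prod_eq_sum_prod_sub 0
    (Fin.cons (fun p q => ψ p q x) fun _ p q => ∫ y, ψ p q y :
      Fin (M + 1) → Fin (M + 1) × Fin 2 → Fin (M + 1) × Fin 2 → ℂ)
    (Fin.cases (fun h => absurd rfl h) fun _ _ => horth)
  simp only [Fin.prod_univ_succ, Fin.cons_zero, Fin.cons_succ] at hsum
  rw [hsum, mul_assoc, mul_sum, ← sum_perm_apply_zero]
  refine sum_congr rfl fun τ _ => ?_
  rw [htotal, ← Equiv.prod_comp τ, Fin.prod_univ_succ, mul_right_comm, mul_div_cancel₀ _ (hnorm _)]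
  rfl

lemma one_point_skewDensity (hψ : ∀ p q, Integrable (ψ p q))
    (horth : ∀ p q, p.1 ≠ q.1 → ∫ x, ψ p q x = 0) (hnorm : ∀ k, blockNorm ψ k ≠ 0) (x : X) :
    (M + 1 : ℕ) * (∫ y : Fin (M + 1) → X, skewDensity ψ y)⁻¹ *
        ∫ y : Fin M → X, skewDensity ψ (Fin.cons x y) =
      ∑ k, (ψ (k, 0) (k, 1) x - ψ (k, 1) (k, 0) x) / blockNorm ψ k := by
  rw [integral_skewDensity hψ horth, integral_skewDensity_cons hψ horth hnorm, Nat.factorial_succ]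
  have hprod : ∏ k, blockNorm ψ k ≠ 0 := prod_ne_zero_iff.mpr fun k _ => hnorm k
  have hfact : (M.factorial : ℂ) ≠ 0 := mod_cast M.factorial_ne_zero
  have hsucc : ((M + 1 : ℕ) : ℂ) ≠ 0 := mod_cast M.succ_ne_zero
  push_cast at hsucc ⊢
  field_simp

end SkewDensities

section ConjugateVandermonde

open ComplexConjugate Polynomial

/-- The joint density of the planar symplectic ensemble with weight `w`, without normalisation. -/
def symplecticDensity {N : ℕ} (w : ℂ → ℝ) (ζ : Fin N → ℂ) : ℝ :=
  (∏ j, ∏ k ∈ Ioi j, ‖ζ j - ζ k‖ ^ 2 * ‖ζ j - conj (ζ k)‖ ^ 2) *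
    ∏ j, (‖ζ j - conj (ζ j)‖ ^ 2 * w (ζ j))

/-- The points `ζ j` together with their conjugates, the latter being indexed by `(j, 1)`. -/
def conjPairs {ι : Type*} (ζ : ι → ℂ) (p : ι × Fin 2) : ℂ :=
  ![ζ p.1, conj (ζ p.1)] p.2

lemma finProdFinEquiv_lt_iff {N : ℕ} {p q : Fin N × Fin 2} :
    finProdFinEquiv p < finProdFinEquiv q ↔ p.1 < q.1 ∨ p.1 = q.1 ∧ p.2 < q.2 := by
  simp only [Fin.lt_def, finProdFinEquiv_apply_val, Fin.ext_iff]
  lia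

lemma prod_Ioi_finProdFinEquiv {N : ℕ} {R : Type*} [CommMonoid R]
    (f : Fin N × Fin 2 → Fin N × Fin 2 → R) :
    ∏ x, ∏ y ∈ Ioi x, f (finProdFinEquiv.symm x) (finProdFinEquiv.symm y) =
      ∏ j, ((∏ k ∈ Ioi j, ((f (j, 0) (k, 0) * f (j, 0) (k, 1)) *
        (f (j, 1) (k, 0) * f (j, 1) (k, 1)))) * f (j, 0) (j, 1)) := by
  have hIoi {m : ℕ} (x : Fin m) (g : Fin m → R) :
      ∏ y ∈ Ioi x, g y = ∏ y, if x < y then g y else 1 := by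
    rw [← prod_filter, filter_lt_eq_Ioi]
  have hblock (j k : Fin N) (e e' : Fin 2) :
      (if finProdFinEquiv (j, e) < finProdFinEquiv (k, e') then f (j, e) (k, e') else 1) =
        (if j < k then f (j, e) (k, e') else 1) *
          if j = k ∧ e < e' then f (j, e) (k, e') else 1 := by
    rcases lt_trichotomy j k with h | rfl | h
    · simp [finProdFinEquiv_lt_iff, h, h.ne]
    · simp [finProdFinEquiv_lt_iff]
    · simp [finProdFinEquiv_lt_iff, h.ne', h.not_gt]
  simp only [hIoi, ← Equiv.prod_comp finProdFinEquiv, Equiv.symm_apply_apply,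
    Fintype.prod_prod_type, Fin.prod_univ_two, hblock]
  refine prod_congr rfl fun j _ => ?_
  simp only [Fin.zero_lt_one, lt_irrefl, not_lt_zero, and_false, and_true, if_false, mul_one,
    prod_mul_distrib, prod_ite_eq, mem_univ, if_true, ← hIoi]
  ac_rfl

lemma det_vandermonde_conjPairs {N : ℕ} (ζ : Fin N → ℂ) :
    (Matrix.vandermonde fun x => conjPairs ζ (finProdFinEquiv.symm x)).det =
      (∏ j, ∏ k ∈ Ioi j, ((‖ζ j - ζ k‖ ^ 2 * ‖ζ j - conj (ζ k)‖ ^ 2 : ℝ) : ℂ)) *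
        ∏ j, (conj (ζ j) - ζ j) := by
  rw [Matrix.det_vandermonde,
    prod_Ioi_finProdFinEquiv fun p q => conjPairs ζ q - conjPairs ζ p, prod_mul_distrib]
  refine congr_arg₂ _ (prod_congr rfl fun j _ => prod_congr rfl fun k _ => ?_) rfl
  push_cast
  rw [← Complex.mul_conj', ← Complex.mul_conj']
  simp only [conjPairs, Matrix.cons_val_zero, Matrix.cons_val_one, Matrix.cons_val_fin_one,
    map_sub, Complex.conj_conj]
  ring

lemma det_vandermonde_conjPairs_eq_skewDensity {N : ℕ} (ζ : Fin N → ℂ) {P : ℕ → ℂ[X]}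
    (hP : ∀ i, (P i).Monic) (hdeg : ∀ i, (P i).natDegree = i) :
    (Matrix.vandermonde fun x => conjPairs ζ (finProdFinEquiv.symm x)).det =
      skewDensity (fun p q z => (P (finProdFinEquiv p : Fin (N * 2))).eval z *
        (P (finProdFinEquiv q : Fin (N * 2))).eval (conj z)) ζ := by
  rw [Matrix.det_eval_matrixOfPolynomials_eq_det_vandermonde _ (fun i => P i) (fun i => hdeg i)
      fun i => hP i, ← Matrix.det_transpose, ← Matrix.det_submatrix_equiv_self finProdFinEquiv,
    Matrix.det_apply']
  refine sum_congr rfl fun σ _ => congr_arg _ ?_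
  rw [Fintype.prod_prod_type]
  simp only [conjPairs, Matrix.submatrix_apply, Matrix.transpose_apply, Matrix.of_apply,
    Equiv.symm_apply_apply, Fin.prod_univ_two, Matrix.cons_val_zero, Matrix.cons_val_one,
    Matrix.cons_val_fin_one]

/-- The integrand of the skew product of a symplectic ensemble. -/
def skewIntegrand (w : ℂ → ℝ) (p q : ℂ[X]) (z : ℂ) : ℂ :=
  p.eval z * q.eval (conj z) * ((z - conj z) * (w z : ℂ))

lemma symplecticDensity_eq_skewDensity {N : ℕ} (w : ℂ → ℝ) (ζ : Fin N → ℂ) {P : ℕ → ℂ[X]}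
    (hP : ∀ i, (P i).Monic) (hdeg : ∀ i, (P i).natDegree = i) :
    (symplecticDensity w ζ : ℂ) = skewDensity (fun p q => skewIntegrand w
      (P (finProdFinEquiv p : Fin (N * 2))) (P (finProdFinEquiv q : Fin (N * 2)))) ζ := by
  have hdiag (j : Fin N) : ((‖ζ j - conj (ζ j)‖ ^ 2 * w (ζ j) : ℝ) : ℂ) =
      (conj (ζ j) - ζ j) * ((ζ j - conj (ζ j)) * w (ζ j)) := by
    push_cast
    rw [← Complex.mul_conj', map_sub, Complex.conj_conj]
    ring
  calc (symplecticDensity w ζ : ℂ)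
      = (Matrix.vandermonde fun x => conjPairs ζ (finProdFinEquiv.symm x)).det *
          ∏ j, ((ζ j - conj (ζ j)) * w (ζ j)) := by
        rw [det_vandermonde_conjPairs, mul_assoc, ← prod_mul_distrib, ← prod_congr rfl fun j _ =>
          hdiag j, symplecticDensity]
        push_cast
        rfl
    _ = _ := by
        rw [det_vandermonde_conjPairs_eq_skewDensity ζ hP hdeg]
        simp only [skewDensity, sum_mul, mul_assoc, ← prod_mul_distrib, skewIntegrand]

end ConjugateVandermonde

section RadialWeights

open ComplexConjugate Polynomial

lemma integral_eq_zero_of_comp_eq_neg {E F : Type*} [NormedAddCommGroup E] [InnerProductSpace ℝ E]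
    [FiniteDimensional ℝ E] [MeasurableSpace E] [BorelSpace E] [NormedAddCommGroup F]
    [NormedSpace ℝ F] {f : E → F} (e : E ≃ₗᵢ[ℝ] E) (hf : ∀ x, f (e x) = -f x) :
    ∫ x, f x = 0 := by
  have hcomp : ∫ x, f (e x) = ∫ x, f x :=
    e.measurePreserving.integral_comp e.toHomeomorph.measurableEmbedding f
  have : IsAddTorsionFree F := .of_isTorsionFree ℝ F
  rwa [integral_congr_ae (.of_forall hf), integral_neg, neg_eq_self] at hcomp

/-- A weight on `ℂ` that depends on the modulus only. -/
def IsRadial (w : ℂ → ℝ) : Prop :=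
  ∀ ⦃z ξ : ℂ⦄, ‖z‖ = ‖ξ‖ → w z = w ξ

/-- A weight on `ℂ` whose absolute moments of order less than `d` exist. -/
def HasMomentsBelow (w : ℂ → ℝ) (d : ℕ) : Prop :=
  ∀ k < d, Integrable fun z => ‖z‖ ^ k * w z

/-- The moment `∫ |z|^(2k) w(z) d²z` of even order of a weight on `ℂ`. -/
def radialMoment (w : ℂ → ℝ) (k : ℕ) : ℝ :=
  ∫ z : ℂ, ‖z‖ ^ (2 * k) * w z

variable {w : ℂ → ℝ} {a b d : ℕ}

lemma integrable_monomial_mul (hmom : HasMomentsBelow w d) (hd : a + b < d) :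
    Integrable fun z : ℂ => z ^ a * conj z ^ b * (w z : ℂ) := by
  have hw : AEStronglyMeasurable w := by simpa using (hmom 0 (by lia)).aestronglyMeasurable
  refine (hmom _ hd).mono ?_ (.of_forall fun z => by simp [pow_add])
  exact (by fun_prop : Continuous fun z : ℂ => z ^ a * conj z ^ b).aestronglyMeasurable.mul
    (Complex.continuous_ofReal.comp_aestronglyMeasurable hw)

lemma integral_monomial_mul_self (w : ℂ → ℝ) (a : ℕ) :
    ∫ z : ℂ, z ^ a * conj z ^ a * (w z : ℂ) = radialMoment w a := by
  rw [radialMoment, ← integral_complex_ofReal]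
  refine integral_congr_ae (.of_forall fun z => ?_)
  simp only
  rw [← mul_pow, Complex.mul_conj']
  push_cast
  ring

lemma integral_monomial_mul_of_ne (hw : IsRadial w) (hab : a ≠ b) :
    ∫ z : ℂ, z ^ a * conj z ^ b * (w z : ℂ) = 0 := by
  set c : Circle := Circle.exp (Real.pi / ((a : ℝ) - b))
  have hne : (a : ℂ) - b ≠ 0 := sub_ne_zero.mpr (mod_cast hab)
  have hc : (c : ℂ) ^ a * conj (c : ℂ) ^ b = -1 := by
    rw [Circle.coe_exp, ← Complex.exp_conj, ← Complex.exp_nat_mul, ← Complex.exp_nat_mul,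
      ← Complex.exp_add, ← Complex.exp_pi_mul_I]
    congr 1
    simp only [Complex.ofReal_div, Complex.ofReal_sub, Complex.ofReal_natCast, map_mul, map_div₀,
      Complex.conj_ofReal, map_sub, map_natCast, Complex.conj_I, mul_neg]
    field_simp
    ring
  refine integral_eq_zero_of_comp_eq_neg (rotation c) fun z => ?_
  rw [hw ((rotation c).norm_map z), rotation_apply, map_mul]
  linear_combination (z ^ a * conj z ^ b * w z) * hc

/-- The skew product `⟨p, q⟩ = ∫ p(z) q(z̄) (z - z̄) w(z) d²z`. -/
def skewProduct (w : ℂ → ℝ) (p q : ℂ[X]) : ℂ :=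
  ∫ z, skewIntegrand w p q z

lemma integrable_skewIntegrand (hmom : HasMomentsBelow w d) {p q : ℂ[X]}
    (hd : p.natDegree + q.natDegree + 1 < d) : Integrable (skewIntegrand w p q) := by
  have hexpand : skewIntegrand w p q = fun z =>
      ∑ i ∈ range (p.natDegree + 1), ∑ j ∈ range (q.natDegree + 1), (p.coeff i * q.coeff j) *
        (z ^ (i + 1) * conj z ^ j * (w z : ℂ) - z ^ i * conj z ^ (j + 1) * (w z : ℂ)) := by
    ext z
    rw [skewIntegrand, eval_eq_sum_range, eval_eq_sum_range, sum_mul_sum, sum_mul]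
    refine sum_congr rfl fun i _ => ?_
    rw [sum_mul]
    refine sum_congr rfl fun j _ => ?_
    ring
  rw [hexpand]
  refine integrable_finsetSum _ fun i hi => integrable_finsetSum _ fun j hj => ?_
  rw [mem_range] at hi hj
  exact ((integrable_monomial_mul hmom (by lia)).sub
    (integrable_monomial_mul hmom (by lia))).const_mul _

lemma skewProduct_swap (hw : IsRadial w) (p q : ℂ[X]) :
    skewProduct w p q = -skewProduct w q p := by
  rw [skewProduct, skewProduct, ← integral_neg, ← Complex.conjLIE.measurePreserving.integral_comp
    Complex.conjLIE.toHomeomorph.measurableEmbedding]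
  refine integral_congr_ae (.of_forall fun z => ?_)
  simp only [skewIntegrand, Complex.conjLIE_apply, Complex.conj_conj, hw (Complex.norm_conj z)]
  ring

lemma skewProduct_eq_zero_of_parity (hw : IsRadial w) {p q : ℂ[X]} {s : ℂ} (hs : s * s = 1)
    (hp : ∀ z, p.eval (-z) = s * p.eval z) (hq : ∀ z, q.eval (-z) = s * q.eval z) :
    skewProduct w p q = 0 := by
  refine integral_eq_zero_of_comp_eq_neg (LinearIsometryEquiv.neg ℝ) fun z => ?_
  simp only [LinearIsometryEquiv.coe_neg, skewIntegrand, map_neg, hp, hq, hw (norm_neg z)]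
  linear_combination (-(p.eval z * q.eval (conj z) * ((z - conj z) * w z))) * hs

lemma skewProduct_X_pow_X_pow (hw : IsRadial w) (hmom : HasMomentsBelow w d) (hd : a + b + 1 < d) :
    skewProduct w (X ^ a) (X ^ b) =
      (if a + 1 = b then (radialMoment w b : ℂ) else 0) -
        if a = b + 1 then (radialMoment w a : ℂ) else 0 := by
  have hmonomial (i j : ℕ) : ∫ z : ℂ, z ^ i * conj z ^ j * (w z : ℂ) =
      if i = j then (radialMoment w i : ℂ) else 0 := by
    split_ifs with hij
    · rw [← hij, integral_monomial_mul_self]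
    · exact integral_monomial_mul_of_ne hw hij
  calc skewProduct w (X ^ a) (X ^ b)
      = ∫ z : ℂ, (z ^ (a + 1) * conj z ^ b * (w z : ℂ) - z ^ a * conj z ^ (b + 1) * (w z : ℂ)) := by
        refine integral_congr_ae (.of_forall fun z => ?_)
        simp only [skewIntegrand, eval_pow, eval_X]
        ring
    _ = _ := by
        rw [integral_sub (integrable_monomial_mul hmom (by lia))
          (integrable_monomial_mul hmom (by lia)), hmonomial, hmonomial]
        congr 1
        split_ifs with h
        exacts [by rw [h], rfl]

lemma skewProduct_add_C_mul (hmom : HasMomentsBelow w d) {p p' q : ℂ[X]} (c : ℂ)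
    (hd : p.natDegree + q.natDegree + 1 < d) (hd' : p'.natDegree + q.natDegree + 1 < d) :
    skewProduct w (p + C c * p') q = skewProduct w p q + c * skewProduct w p' q := by
  simp only [skewProduct]
  rw [← integral_const_mul, ← integral_add (integrable_skewIntegrand hmom hd)
    ((integrable_skewIntegrand hmom hd').const_mul _)]
  refine integral_congr_ae (.of_forall fun z => ?_)
  simp only [skewIntegrand, eval_add, eval_mul, eval_C]
  ring

end RadialWeights

section SkewOrthogonalPolynomials

open ComplexConjugate Polynomial

variable {w : ℂ → ℝ} {d k l : ℕ}

/-- The ratio `h_(2k+2) / h_(2k+1)` of consecutive radial moments. -/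
def momentRatio (w : ℂ → ℝ) (k : ℕ) : ℝ :=
  radialMoment w (2 * k + 2) / radialMoment w (2 * k + 1)

/-- The monic skew-orthogonal polynomial of degree `2k` of a radial weight. -/
def evenSkewPoly (w : ℂ → ℝ) : ℕ → ℂ[X]
  | 0 => 1
  | k + 1 => X ^ (2 * k + 2) + C (momentRatio w k : ℂ) * evenSkewPoly w k

lemma natDegree_evenSkewPoly_le (w : ℂ → ℝ) (k : ℕ) : (evenSkewPoly w k).natDegree ≤ 2 * k := by
  induction k with
  | zero => simp [evenSkewPoly]
  | succ k ih =>
    refine (natDegree_add_le _ _).trans (max_le (by simp [mul_add]) ?_)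
    exact (natDegree_C_mul_le _ _).trans (ih.trans (by lia))

lemma monic_evenSkewPoly (w : ℂ → ℝ) (k : ℕ) : (evenSkewPoly w k).Monic := by
  cases k with
  | zero => exact monic_one
  | succ k =>
    refine monic_X_pow_add (degree_le_natDegree.trans_lt (mod_cast ?_))
    exact ((natDegree_C_mul_le _ _).trans (natDegree_evenSkewPoly_le w k)).trans_lt (by lia)

lemma natDegree_evenSkewPoly (w : ℂ → ℝ) (k : ℕ) : (evenSkewPoly w k).natDegree = 2 * k := by
  cases k with
  | zero => exact natDegree_one
  | succ k =>
    refine (natDegree_add_eq_left_of_natDegree_lt ?_).trans (natDegree_X_pow _)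
    rw [natDegree_X_pow]
    exact ((natDegree_C_mul_le _ _).trans (natDegree_evenSkewPoly_le w k)).trans_lt (by lia)

lemma eval_evenSkewPoly (w : ℂ → ℝ) (k : ℕ) (z : ℂ) : (evenSkewPoly w k).eval z =
    ∑ i ∈ range (k + 1), ((∏ t ∈ Ico i k, momentRatio w t : ℝ) : ℂ) * z ^ (2 * i) := by
  induction k with
  | zero => simp [evenSkewPoly]
  | succ k ih =>
    have hterm : ∀ i ∈ range (k + 1),
        (momentRatio w k : ℂ) * (((∏ t ∈ Ico i k, momentRatio w t : ℝ) : ℂ) * z ^ (2 * i)) =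
          ((∏ t ∈ Ico i (k + 1), momentRatio w t : ℝ) : ℂ) * z ^ (2 * i) := fun i hi => by
      rw [prod_Ico_succ_top (mem_range_succ_iff.mp hi)]
      push_cast
      ring
    rw [sum_range_succ, ← sum_congr rfl hterm, ← mul_sum, ← ih, add_comm (_ * _)]
    simp [evenSkewPoly, mul_add]

lemma eval_neg_evenSkewPoly (w : ℂ → ℝ) (k : ℕ) (z : ℂ) :
    (evenSkewPoly w k).eval (-z) = (evenSkewPoly w k).eval z := by
  simp only [eval_evenSkewPoly, (even_two_mul _).neg_pow]

lemma skewProduct_evenSkewPoly_X_pow_odd (hw : IsRadial w) (hmom : HasMomentsBelow w d)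
    (hodd : ∀ i < k, radialMoment w (2 * i + 1) ≠ 0) (hd : 2 * k + 2 * l + 2 < d) :
    skewProduct w (evenSkewPoly w k) (X ^ (2 * l + 1)) =
      if k = l then (radialMoment w (2 * k + 1) : ℂ) else 0 := by
  induction k with
  | zero =>
    rw [evenSkewPoly, ← pow_zero X, skewProduct_X_pow_X_pow hw hmom (by lia),
      if_neg (by lia : ¬0 = 2 * l + 1 + 1), sub_zero]
    rcases eq_or_ne 0 l with rfl | hl
    · simp
    · rw [if_neg (by lia), if_neg hl]
  | succ k ih =>
    have hk : (radialMoment w (2 * k + 1) : ℂ) ≠ 0 := mod_cast hodd k k.lt_succ_self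
    rw [evenSkewPoly, skewProduct_add_C_mul hmom _ (by simp only [natDegree_X_pow]; lia)
        (by simp only [natDegree_X_pow, natDegree_evenSkewPoly]; lia),
      ih (fun i hi => hodd i (by lia)) (by lia), skewProduct_X_pow_X_pow hw hmom (by lia)]
    rcases eq_or_ne k l with rfl | hkl
    · rw [if_neg (by lia), if_pos rfl, if_pos rfl, if_neg (by lia), momentRatio]
      push_cast
      rw [div_mul_cancel₀ _ hk]
      ring
    · rw [if_neg (by lia : ¬2 * k + 2 = 2 * l + 1 + 1), if_neg hkl, mul_zero, add_zero, sub_zero]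
      rcases eq_or_ne (k + 1) l with rfl | hkl'
      · rw [if_pos (by lia), if_pos rfl]
      · rw [if_neg (by lia), if_neg hkl']

/-- The monic skew-orthogonal polynomials of a radial weight; those of odd degree are monomials. -/
def skewPoly (w : ℂ → ℝ) (i : ℕ) : ℂ[X] :=
  if Even i then evenSkewPoly w (i / 2) else X ^ i

lemma skewPoly_two_mul (w : ℂ → ℝ) (k : ℕ) : skewPoly w (2 * k) = evenSkewPoly w k := by
  simp [skewPoly]

lemma skewPoly_two_mul_add_one (w : ℂ → ℝ) (k : ℕ) :
    skewPoly w (2 * k + 1) = X ^ (2 * k + 1) := by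
  simp [skewPoly]

lemma monic_skewPoly (w : ℂ → ℝ) (i : ℕ) : (skewPoly w i).Monic := by
  rw [skewPoly]
  split_ifs
  exacts [monic_evenSkewPoly w _, monic_X_pow i]

lemma natDegree_skewPoly (w : ℂ → ℝ) (i : ℕ) : (skewPoly w i).natDegree = i := by
  rw [skewPoly]
  split_ifs with hi
  exacts [(natDegree_evenSkewPoly w _).trans (Nat.two_mul_div_two_of_even hi), natDegree_X_pow i]

end SkewOrthogonalPolynomials

section SymplecticEnsemble

open ComplexConjugate Polynomial

/-- The skew-orthogonal polynomials of degree less than `2N`, indexed by blocks `{2k, 2k + 1}`. -/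
def blockSkewPoly (w : ℂ → ℝ) {N : ℕ} (p : Fin N × Fin 2) : ℂ[X] :=
  skewPoly w (finProdFinEquiv p : Fin (N * 2))

variable {w : ℂ → ℝ} {N : ℕ}

lemma blockSkewPoly_zero (w : ℂ → ℝ) (k : Fin N) : blockSkewPoly w (k, 0) = evenSkewPoly w k := by
  simp [blockSkewPoly, skewPoly_two_mul]

lemma blockSkewPoly_one (w : ℂ → ℝ) (k : Fin N) :
    blockSkewPoly w (k, 1) = X ^ (2 * (k : ℕ) + 1) := by
  simp [blockSkewPoly, add_comm 1, skewPoly_two_mul_add_one]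

lemma natDegree_blockSkewPoly_lt (w : ℂ → ℝ) (p : Fin N × Fin 2) :
    (blockSkewPoly w p).natDegree < N * 2 :=
  (natDegree_skewPoly w _).trans_lt (finProdFinEquiv p).isLt

lemma skewProduct_blockSkewPoly_zero_one (hw : IsRadial w) (hmom : HasMomentsBelow w (4 * N))
    (hodd : ∀ k < N, radialMoment w (2 * k + 1) ≠ 0) (k l : Fin N) :
    skewProduct w (blockSkewPoly w (k, 0)) (blockSkewPoly w (l, 1)) =
      if k = l then (radialMoment w (2 * k + 1) : ℂ) else 0 := by
  rw [blockSkewPoly_zero, blockSkewPoly_one, skewProduct_evenSkewPoly_X_pow_odd hw hmom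
    (fun i hi => hodd i (hi.trans k.isLt)) (by lia)]
  simp only [Fin.val_inj]

lemma skewProduct_blockSkewPoly_of_ne (hw : IsRadial w) (hmom : HasMomentsBelow w (4 * N))
    (hodd : ∀ k < N, radialMoment w (2 * k + 1) ≠ 0) {p q : Fin N × Fin 2} (hpq : p.1 ≠ q.1) :
    skewProduct w (blockSkewPoly w p) (blockSkewPoly w q) = 0 := by
  obtain ⟨k, e⟩ := p
  obtain ⟨l, e'⟩ := q
  fin_cases e <;> fin_cases e'
  · refine skewProduct_eq_zero_of_parity hw (one_mul 1) ?_ ?_ <;>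
    simp [blockSkewPoly_zero, eval_neg_evenSkewPoly]
  · exact (skewProduct_blockSkewPoly_zero_one hw hmom hodd k l).trans (if_neg hpq)
  · rw [skewProduct_swap hw, neg_eq_zero]
    exact (skewProduct_blockSkewPoly_zero_one hw hmom hodd l k).trans (if_neg hpq.symm)
  · refine skewProduct_eq_zero_of_parity hw (s := -1) (by norm_num) ?_ ?_ <;>
    simp [blockSkewPoly_one, (odd_two_mul_add_one _).neg_pow]

lemma blockNorm_skewIntegrand {M : ℕ} (hw : IsRadial w) (hmom : HasMomentsBelow w (4 * (M + 1)))
    (hodd : ∀ k < M + 1, radialMoment w (2 * k + 1) ≠ 0) (k : Fin (M + 1)) :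
    blockNorm (fun p q => skewIntegrand w (blockSkewPoly w p) (blockSkewPoly w q)) k =
      2 * radialMoment w (2 * k + 1) := by
  change skewProduct w _ _ - skewProduct w _ _ = _
  rw [skewProduct_swap hw (blockSkewPoly w (k, 1)),
    skewProduct_blockSkewPoly_zero_one hw hmom hodd, if_pos rfl]
  ring

/-- The skew-orthogonal expansion `∑_k (q_(2k)(z) q_(2k+1)(z̄) - q_(2k+1)(z) q_(2k)(z̄)) / h_(2k+1)`
of the prekernel of a planar symplectic ensemble, at the point `(z, z̄)`. -/
def prekernel (w : ℂ → ℝ) (N : ℕ) (z : ℂ) : ℂ :=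
  ∑ k ∈ range N, ((evenSkewPoly w k).eval z * conj z ^ (2 * k + 1) -
    z ^ (2 * k + 1) * (evenSkewPoly w k).eval (conj z)) / (radialMoment w (2 * k + 1) : ℂ)

lemma one_point_symplecticDensity {M : ℕ} (hw : IsRadial w)
    (hmom : HasMomentsBelow w (4 * (M + 1)))
    (hodd : ∀ k < M + 1, radialMoment w (2 * k + 1) ≠ 0) (z : ℂ) :
    (((M + 1 : ℕ) * (∫ ζ : Fin (M + 1) → ℂ, symplecticDensity w ζ)⁻¹ *
        ∫ η : Fin M → ℂ, symplecticDensity w (Fin.cons z η : Fin (M + 1) → ℂ) : ℝ) : ℂ) =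
      (z - conj z) * w z / 2 * prekernel w (M + 1) z := by
  set ψ : Fin (M + 1) × Fin 2 → Fin (M + 1) × Fin 2 → ℂ → ℂ :=
    fun p q => skewIntegrand w (blockSkewPoly w p) (blockSkewPoly w q) with hψ
  have hdensity (ζ : Fin (M + 1) → ℂ) : (symplecticDensity w ζ : ℂ) = skewDensity ψ ζ :=
    symplecticDensity_eq_skewDensity w ζ (monic_skewPoly w) (natDegree_skewPoly w)
  have hint (p q : Fin (M + 1) × Fin 2) : Integrable (ψ p q) := by
    have hp := natDegree_blockSkewPoly_lt w p
    have hq := natDegree_blockSkewPoly_lt w q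
    exact integrable_skewIntegrand hmom (by lia)
  have hnorm (k : Fin (M + 1)) : blockNorm ψ k = 2 * radialMoment w (2 * k + 1) :=
    blockNorm_skewIntegrand hw hmom hodd k
  have hnorm_ne (k : Fin (M + 1)) : blockNorm ψ k ≠ 0 := by
    rw [hnorm]
    exact mul_ne_zero two_ne_zero (mod_cast hodd k k.isLt)
  simp only [Complex.ofReal_mul, Complex.ofReal_inv, ← integral_complex_ofReal,
    Complex.ofReal_natCast, hdensity]
  rw [one_point_skewDensity hint
    (fun p q => skewProduct_blockSkewPoly_of_ne hw hmom hodd) hnorm_ne, prekernel,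
    ← Fin.sum_univ_eq_sum_range, mul_sum]
  refine sum_congr rfl fun k _ => ?_
  rw [hnorm]
  simp only [hψ, skewIntegrand, blockSkewPoly_zero, blockSkewPoly_one, eval_pow, eval_X]
  ring

lemma prekernel_eq_sum (w : ℂ → ℝ) (N : ℕ) (z : ℂ) :
    prekernel w N z = ∑ k ∈ range N, ∑ i ∈ range (k + 1),
      (((∏ t ∈ Ico i k, momentRatio w t) / radialMoment w (2 * k + 1) : ℝ) : ℂ) *
        (z ^ (2 * i) * conj z ^ (2 * k + 1) - z ^ (2 * k + 1) * conj z ^ (2 * i)) := by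
  refine sum_congr rfl fun k _ => ?_
  rw [eval_evenSkewPoly, eval_evenSkewPoly, sum_mul, mul_sum, ← sum_sub_distrib, sum_div]
  refine sum_congr rfl fun i _ => ?_
  push_cast
  ring

end SymplecticEnsemble

section BetaIntegrals

open ProbabilityTheory

lemma image_div_one_add_Ioi : (fun t : ℝ => t / (1 + t)) '' Set.Ioi 0 = Set.Ioo 0 1 := by
  ext u
  simp only [Set.mem_image, Set.mem_Ioi, Set.mem_Ioo]
  constructor
  · rintro ⟨t, ht, rfl⟩
    exact ⟨by positivity, (div_lt_one (by positivity)).mpr (by linarith)⟩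
  · rintro ⟨hu0, hu1⟩
    have hne : 1 - u ≠ 0 := by linarith
    refine ⟨u / (1 - u), div_pos hu0 (by linarith), ?_⟩
    field_simp
    ring

lemma integral_Ioo_zero_one_eq_integral_Ioi {F : Type*} [NormedAddCommGroup F] [NormedSpace ℝ F]
    (f : ℝ → F) :
    ∫ x in Set.Ioo (0 : ℝ) 1, f x =
      ∫ t in Set.Ioi (0 : ℝ), (1 / (1 + t) ^ 2) • f (t / (1 + t)) := by
  have hderiv (t : ℝ) (ht : t ∈ Set.Ioi (0 : ℝ)) :
      HasDerivWithinAt (fun t => t / (1 + t)) (1 / (1 + t) ^ 2) (Set.Ioi 0) t := by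
    have hne : 1 + t ≠ 0 := by linarith [Set.mem_Ioi.mp ht]
    refine (((hasDerivAt_id' t).fun_div ((hasDerivAt_id' t).const_add 1) hne).congr_deriv
      ?_).hasDerivWithinAt
    ring
  have hinj : Set.InjOn (fun t : ℝ => t / (1 + t)) (Set.Ioi 0) := by
    intro t ht t' ht' heq
    have hne : 1 + t ≠ 0 := by linarith [Set.mem_Ioi.mp ht]
    have hne' : 1 + t' ≠ 0 := by linarith [Set.mem_Ioi.mp ht']
    field_simp at heq
    linarith
  rw [← image_div_one_add_Ioi,
    integral_image_eq_integral_abs_deriv_smul measurableSet_Ioi hderiv hinj]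
  refine setIntegral_congr_fun measurableSet_Ioi fun t _ => ?_
  simp only [abs_of_nonneg (by positivity : 0 ≤ 1 / (1 + t) ^ 2)]

lemma ofReal_rpow_mul_one_sub_rpow {x : ℝ} (hx : x ∈ Set.Ioc (0 : ℝ) 1) (α β : ℝ) :
    ((x ^ (α - 1) * (1 - x) ^ (β - 1) : ℝ) : ℂ) =
      (x : ℂ) ^ ((α : ℂ) - 1) * (1 - (x : ℂ)) ^ ((β : ℂ) - 1) := by
  rw [Complex.ofReal_mul, Complex.ofReal_cpow hx.1.le, Complex.ofReal_cpow (by linarith [hx.2])]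
  push_cast
  rfl

lemma integral_Ioo_rpow_mul_one_sub_rpow {α β : ℝ} (hα : 0 < α) (hβ : 0 < β) :
    ∫ x in Set.Ioo (0 : ℝ) 1, x ^ (α - 1) * (1 - x) ^ (β - 1) = beta α β := by
  rw [beta_eq_betaIntegralReal α β hα hβ, Complex.betaIntegral,
    intervalIntegral.integral_of_le zero_le_one, ← integral_Ioc_eq_integral_Ioo,
    ← setIntegral_congr_fun measurableSet_Ioc fun x hx => ofReal_rpow_mul_one_sub_rpow hx α β,
    integral_complex_ofReal, Complex.ofReal_re]

lemma integral_Ioi_rpow_mul_one_add_rpow {α β : ℝ} (hα : 0 < α) (hβ : 0 < β) :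
    ∫ t in Set.Ioi (0 : ℝ), t ^ (α - 1) * (1 + t) ^ (-(α + β)) = beta α β := by
  rw [← integral_Ioo_rpow_mul_one_sub_rpow hα hβ, integral_Ioo_zero_one_eq_integral_Ioi]
  refine setIntegral_congr_fun measurableSet_Ioi fun t ht => ?_
  have ht0 : (0 : ℝ) < t := ht
  have ht1 : 0 < 1 + t := by linarith
  have hcompl : 1 - t / (1 + t) = (1 + t)⁻¹ := by
    field_simp
    ring
  have hexp : (1 + t) ^ (-(α + β)) =
      ((1 + t) ^ (α - 1))⁻¹ * ((1 + t) ^ (β - 1))⁻¹ * ((1 + t) ^ 2)⁻¹ := by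
    rw [← Real.rpow_neg ht1.le, ← Real.rpow_neg ht1.le, ← Real.rpow_two, ← Real.rpow_neg ht1.le,
      ← Real.rpow_add ht1, ← Real.rpow_add ht1]
    ring_nf
  simp only [smul_eq_mul]
  rw [hcompl, hexp, Real.div_rpow ht0.le ht1.le, Real.inv_rpow ht1.le]
  ring

lemma beta_add_one_left {α β : ℝ} (hα : 0 < α) (hβ : 0 < β) :
    beta (α + 1) β * β = beta α (β + 1) * α := by
  rw [beta, beta, Real.Gamma_add_one hα.ne', Real.Gamma_add_one hβ.ne', add_right_comm, add_assoc]
  ring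

end BetaIntegrals

section SphericalWeight

open ProbabilityTheory ComplexConjugate

lemma isRadial_wfun (n L : ℝ) : IsRadial (wfun n L) := fun z ξ h => by simp only [wfun, h]

lemma integral_norm_pow_mul_wfun {n L : ℝ} (hL : 0 ≤ L) {p : ℕ} (hp : (p : ℝ) < 4 * n + 2) :
    ∫ ζ : ℂ, ‖ζ‖ ^ p * wfun n L ζ =
      Real.pi * beta (p / 2 + 2 * L + 1) (2 * n + 1 - p / 2) := by
  set φ : ℝ → ℝ := fun r => r ^ p * (r ^ (4 * L) * (1 + r ^ 2) ^ (-(2 * (n + L + 1)))) with hφ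
  have hball : volume.real (Metric.ball (0 : ℂ) 1) = Real.pi := by
    simp [Measure.real, Complex.volume_ball]
  rw [show (fun ζ : ℂ => ‖ζ‖ ^ p * wfun n L ζ) = fun ζ => φ ‖ζ‖ from rfl,
    integral_fun_norm_addHaar volume φ, Complex.finrank_real_complex, hball,
    ← integral_Ioi_rpow_mul_one_add_rpow (by positivity) (by linarith),
    ← integral_comp_rpow_Ioi (fun t => t ^ ((p : ℝ) / 2 + 2 * L + 1 - 1) * _) two_ne_zero,
    smul_eq_mul, nsmul_eq_mul, mul_left_comm,
    ← integral_const_mul]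
  congr 1
  refine setIntegral_congr_fun measurableSet_Ioi fun r hr => ?_
  have hr0 : (0 : ℝ) < r := hr
  have hpow : (r ^ (2 : ℝ)) ^ ((p : ℝ) / 2 + 2 * L + 1 - 1) = r ^ p * r ^ (4 * L) := by
    rw [← Real.rpow_mul hr0.le, ← Real.rpow_natCast, ← Real.rpow_add hr0]
    ring_nf
  have hsum : (p : ℝ) / 2 + 2 * L + 1 + (2 * n + 1 - p / 2) = 2 * (n + L + 1) := by ring
  have hlin : r ^ ((2 : ℝ) - 1) = r := by norm_num
  simp only [smul_eq_mul, hφ]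
  rw [hpow, hsum, hlin, Real.rpow_two, abs_two]
  push_cast
  ring

lemma hasMomentsBelow_wfun {n L : ℝ} (hL : 0 ≤ L) {d : ℕ} (hd : (d : ℝ) ≤ 4 * n + 2) :
    HasMomentsBelow (wfun n L) d := by
  intro k hk
  have hkd : (k : ℝ) < d := mod_cast hk
  refine .of_integral_ne_zero ?_
  rw [integral_norm_pow_mul_wfun hL (by linarith)]
  exact (mul_pos Real.pi_pos (beta_pos (by positivity) (by linarith))).ne'

lemma radialMoment_wfun {n L : ℝ} (hL : 0 ≤ L) {k : ℕ} (hk : (k : ℝ) < 2 * n + 1) :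
    radialMoment (wfun n L) k = Real.pi * beta (k + 2 * L + 1) (2 * n + 1 - k) := by
  rw [radialMoment, integral_norm_pow_mul_wfun hL (by push_cast; linarith)]
  push_cast
  ring_nf

lemma radialMoment_wfun_pos {n L : ℝ} (hL : 0 ≤ L) {k : ℕ} (hk : (k : ℝ) < 2 * n + 1) :
    0 < radialMoment (wfun n L) k := by
  rw [radialMoment_wfun hL hk]
  exact mul_pos Real.pi_pos (beta_pos (by positivity) (by linarith))

lemma momentRatio_wfun {n L : ℝ} (hL : 0 ≤ L) {k : ℕ} (hk : (2 * k + 1 : ℝ) < 2 * n) :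
    momentRatio (wfun n L) k = (2 * k + 2 + 2 * L) / (2 * n - 1 - 2 * k) := by
  have hrec := beta_add_one_left (α := 2 * k + 1 + 2 * L + 1) (β := 2 * n - 1 - 2 * k)
    (by positivity) (by linarith)
  have hbeta : 0 < beta (2 * k + 1 + 2 * L + 1) (2 * n - 1 - 2 * k + 1) :=
    beta_pos (by positivity) (by linarith)
  have hden : 2 * n - 1 - 2 * k ≠ 0 := by linarith
  rw [momentRatio, radialMoment_wfun hL (by push_cast; linarith),
    radialMoment_wfun hL (by push_cast; linarith), mul_div_mul_left _ _ Real.pi_ne_zero]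
  push_cast
  rw [show (2 * k + 2 + 2 * L + 1 : ℝ) = 2 * k + 1 + 2 * L + 1 + 1 by ring,
    show 2 * n + 1 - (2 * k + 2) = 2 * n - 1 - 2 * (k : ℝ) by ring,
    show 2 * n + 1 - (2 * k + 1) = 2 * n - 1 - 2 * (k : ℝ) + 1 by ring,
    div_eq_div_iff hbeta.ne' hden, hrec]
  ring

lemma ofReal_R1_eq_prekernel {n L : ℝ} (hL : 0 ≤ L) {N : ℕ} (hN : 0 < N) (hNn : N ≤ n) (z : ℂ) :
    (R1 N n L z : ℂ) =
      Real.pi * ((z - conj z) * wfun n L z / 2 * prekernel (wfun n L) N z) := by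
  obtain ⟨M, rfl⟩ : ∃ M, N = M + 1 := ⟨N - 1, by lia⟩
  push_cast at hNn
  rw [← one_point_symplecticDensity (isRadial_wfun n L)
    (hasMomentsBelow_wfun hL (by push_cast; linarith)) fun k hk => ?_]
  · norm_cast
    rw [R1, ZN, Nat.add_sub_cancel]
    change _ * (_ * ∫ ζ : Fin (M + 1) → ℂ, symplecticDensity (wfun n L) ζ)⁻¹ * _ *
      (∫ η : Fin M → ℂ, symplecticDensity (wfun n L) (Fin.cons z η : Fin (M + 1) → ℂ)) = _
    rw [pow_succ]
    field_simp
  · have hk' : (k : ℝ) + 1 ≤ M + 1 := mod_cast hk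
    exact (radialMoment_wfun_pos hL (by push_cast; linarith)).ne'

end SphericalWeight

section GammaRatios

open Topology

@[elab_as_elim]
lemma nonneg_induction_of_unit_step {P : ℝ → Prop} (hunit : ∀ s, 0 ≤ s → s ≤ 1 → P s)
    (hstep : ∀ s, 0 ≤ s → P s → P (s + 1)) {s : ℝ} (hs : 0 ≤ s) : P s := by
  have hshift (m : ℕ) (r : ℝ) (hr0 : 0 ≤ r) (hr1 : r ≤ 1) : P (r + m) := by
    induction m with
    | zero => simpa using hunit r hr0 hr1
    | succ m ih =>
      push_cast
      rw [← add_assoc]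
      exact hstep _ (by positivity) ih
  have := hshift ⌊s⌋₊ (s - ⌊s⌋₊) (sub_nonneg.mpr (Nat.floor_le hs))
    (by linarith [Nat.lt_floor_add_one s])
  rwa [sub_add_cancel] at this

variable {x s : ℝ}

lemma gamma_add_le_rpow_mul_gamma (hx : 0 < x) (hs : 0 ≤ s) (hs1 : s ≤ 1) :
    Real.Gamma (x + s) ≤ x ^ s * Real.Gamma x := by
  rcases hs.eq_or_lt with rfl | hs0
  · simp
  rcases hs1.eq_or_lt with rfl | hs1
  · rw [Real.Gamma_add_one hx.ne', Real.rpow_one]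
  have hΓ := Real.Gamma_pos_of_pos hx
  calc Real.Gamma (x + s) = Real.Gamma ((1 - s) * x + s * (x + 1)) := by ring_nf
    _ ≤ Real.Gamma x ^ (1 - s) * Real.Gamma (x + 1) ^ s :=
        Real.Gamma_mul_add_mul_le_rpow_Gamma_mul_rpow_Gamma hx (by linarith) (by linarith) hs0
          (by ring)
    _ = x ^ s * (Real.Gamma x ^ (1 - s) * Real.Gamma x ^ s) := by
        rw [Real.Gamma_add_one hx.ne', Real.mul_rpow hx.le hΓ.le]
        ring
    _ = x ^ s * Real.Gamma x := by rw [← Real.rpow_add hΓ, sub_add_cancel, Real.rpow_one]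

lemma mul_gamma_le_rpow_mul_gamma_add (hx : 0 < x) (hs : 0 ≤ s) (hs1 : s ≤ 1) :
    x * Real.Gamma x ≤ (x + s) ^ (1 - s) * Real.Gamma (x + s) := by
  have := gamma_add_le_rpow_mul_gamma (add_pos_of_pos_of_nonneg hx hs) (sub_nonneg.mpr hs1)
    (sub_le_self 1 hs)
  rwa [add_assoc, add_sub_cancel, Real.Gamma_add_one hx.ne'] at this

lemma gamma_add_le_add_rpow_mul_gamma (hx : 0 < x) (hs : 0 ≤ s) :
    Real.Gamma (x + s) ≤ (x + s) ^ s * Real.Gamma x := by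
  refine nonneg_induction_of_unit_step (fun s hs hs1 => ?_) (fun s hs ih => ?_) hs
  · refine (gamma_add_le_rpow_mul_gamma hx hs hs1).trans ?_
    gcongr
    linarith
  · have hxs : 0 < x + s := by positivity
    calc Real.Gamma (x + (s + 1)) = (x + s) * Real.Gamma (x + s) := by
          rw [← add_assoc, Real.Gamma_add_one hxs.ne']
      _ ≤ (x + (s + 1)) * ((x + (s + 1)) ^ s * Real.Gamma x) := by
          refine mul_le_mul (by linarith) (ih.trans ?_) (Real.Gamma_pos_of_pos hxs).le
            (by positivity)
          gcongr
          linarith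
      _ = (x + (s + 1)) ^ (s + 1) * Real.Gamma x := by
          rw [Real.rpow_add_one (by positivity)]
          ring

lemma tendsto_add_const_div_self (c : ℝ) :
    Tendsto (fun x : ℝ => (x + c) / x) atTop (𝓝 1) := by
  have hlim : Tendsto (fun x : ℝ => 1 + c / x) atTop (𝓝 (1 + 0)) :=
    tendsto_const_nhds.add (tendsto_const_nhds.div_atTop tendsto_id)
  rw [add_zero] at hlim
  refine hlim.congr' ?_
  filter_upwards [eventually_ne_atTop 0] with x hx
  rw [add_div, div_self hx]

lemma tendsto_gamma_add_div_of_le_one (hs : 0 ≤ s) (hs1 : s ≤ 1) :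
    Tendsto (fun x : ℝ => Real.Gamma (x + s) / (x ^ s * Real.Gamma x)) atTop (𝓝 1) := by
  have hlower : Tendsto (fun x : ℝ => (((x + s) / x) ^ (1 - s))⁻¹) atTop (𝓝 1) := by
    simpa using ((tendsto_add_const_div_self s).rpow_const (p := 1 - s)
      (.inl one_ne_zero)).inv₀ (by simp)
  refine tendsto_of_tendsto_of_tendsto_of_le_of_le' hlower tendsto_const_nhds ?_ ?_
  · filter_upwards [eventually_gt_atTop 0] with x hx
    have hxs : 0 < x + s := by positivity
    rw [le_div_iff₀ (by positivity), Real.div_rpow hxs.le hx.le, inv_div, div_mul_eq_mul_div,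
      div_le_iff₀ (by positivity), ← mul_assoc, ← Real.rpow_add hx, sub_add_cancel, Real.rpow_one,
      mul_comm (Real.Gamma _)]
    exact mul_gamma_le_rpow_mul_gamma_add hx hs hs1
  · filter_upwards [eventually_gt_atTop 0] with x hx
    rw [div_le_one (by positivity)]
    exact gamma_add_le_rpow_mul_gamma hx hs hs1

lemma tendsto_gamma_add_div (hs : 0 ≤ s) :
    Tendsto (fun x : ℝ => Real.Gamma (x + s) / (x ^ s * Real.Gamma x)) atTop (𝓝 1) := by
  refine nonneg_induction_of_unit_step (fun s hs hs1 => ?_) (fun s hs ih => ?_) hs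
  · exact tendsto_gamma_add_div_of_le_one hs hs1
  · have hlim := ih.mul (tendsto_add_const_div_self s)
    rw [one_mul] at hlim
    refine hlim.congr' ?_
    filter_upwards [eventually_gt_atTop 0] with x hx
    have hxs : 0 < x + s := by positivity
    rw [← add_assoc, Real.Gamma_add_one hxs.ne', Real.rpow_add_one hx.ne', div_mul_div_comm]
    ring

lemma gamma_add_div_gamma_mul_rpow_le {m c : ℝ} (hx : 0 < x) (hs : 0 ≤ s) (hm : 0 < m)
    (hc : 0 ≤ c) (hxs : x + s ≤ c * m) :
    Real.Gamma (x + s) / (Real.Gamma x * m ^ s) ≤ c ^ s := by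
  rw [div_le_iff₀ (by positivity)]
  calc Real.Gamma (x + s) ≤ (x + s) ^ s * Real.Gamma x := gamma_add_le_add_rpow_mul_gamma hx hs
    _ ≤ (c * m) ^ s * Real.Gamma x := by gcongr
    _ = c ^ s * (Real.Gamma x * m ^ s) := by
        rw [Real.mul_rpow hc hm.le]
        ring

lemma tendsto_gamma_add_div_gamma_mul_rpow {ι : Type*} {l : Filter ι} {y m : ι → ℝ} {c : ℝ}
    (hs : 0 ≤ s) (hc : 0 < c) (hy : Tendsto y l atTop)
    (hratio : Tendsto (fun i => y i / m i) l (𝓝 c)) :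
    Tendsto (fun i => Real.Gamma (y i + s) / (Real.Gamma (y i) * m i ^ s)) l (𝓝 (c ^ s)) := by
  have hlim := ((tendsto_gamma_add_div hs).comp hy).mul (hratio.rpow_const (p := s) (.inl hc.ne'))
  rw [one_mul] at hlim
  refine hlim.congr' ?_
  filter_upwards [hy.eventually_gt_atTop 0, hratio.eventually_const_lt hc] with i hyi hri
  have hmi : 0 < m i := (div_pos_iff_of_pos_left hyi).mp hri
  rw [Function.comp_apply, Real.div_rpow hyi.le hmi.le]
  field_simp

end GammaRatios

section Coefficients

open Topology

/-- The part of the coefficients of the rescaled prekernel that does not depend on `n`. -/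
def coreCoeff (L : ℝ) (p : ℕ × ℕ) : ℝ :=
  (∏ t ∈ Ico p.2 (p.1 + p.2), (t + 1 + L)) / Real.Gamma (2 * (p.1 + p.2) + 2 * L + 2)

/-- The coefficient of `z^(2j) z̄^(2(i+j)+1)`, for `p = (i, j)`, in the prekernel of `wfun n L` at
`z / √(n+L)`, multiplied by the powers of `n+L` that come from the other factors of `R1`. -/
def scaledCoeff (n L : ℝ) (p : ℕ × ℕ) : ℝ :=
  (n + L) ^ (-(2 * L + 2 + p.1 + 2 * p.2)) * (Real.pi *
    ((∏ t ∈ Ico p.2 (p.1 + p.2), momentRatio (wfun n L) t) /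
      radialMoment (wfun n L) (2 * (p.1 + p.2) + 1)))

/-- The limit of `scaledCoeff n L p` as `n → ∞`. -/
def limitCoeff (L : ℝ) (p : ℕ × ℕ) : ℝ :=
  2 ^ (2 * L + 2 + 2 * ((p.1 : ℝ) + p.2)) * coreCoeff L p

/-- An upper bound for `|scaledCoeff n L (i, j)|` in the regime `i + j < N`, `(b+1)N ≤ n`. -/
def coeffBound (b L : ℝ) (p : ℕ × ℕ) : ℝ :=
  4 ^ (2 * L + 2 + 2 * ((p.1 : ℝ) + p.2)) * ((1 + L) * (b + 1) / b) ^ p.1 *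
    ((Real.Gamma (2 * L + 2))⁻¹ * ((p.1.factorial : ℝ)⁻¹ * (p.2.factorial : ℝ)⁻¹))

lemma coreCoeff_nonneg {L : ℝ} (hL : 0 ≤ L) (p : ℕ × ℕ) : 0 ≤ coreCoeff L p :=
  div_nonneg (prod_nonneg fun t _ => by positivity)
    (Real.Gamma_pos_of_pos (by positivity)).le

lemma prod_range_mul_factorial_mul_gamma_le {L : ℝ} (hL : 0 ≤ L) (k : ℕ) :
    (∏ t ∈ range k, (t + 1 + L)) * (k.factorial * Real.Gamma (2 * L + 2)) ≤
      Real.Gamma (2 * k + 2 * L + 2) := by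
  induction k with
  | zero => simp
  | succ k ih =>
    calc (∏ t ∈ range (k + 1), (t + 1 + L)) * ((k + 1).factorial * Real.Gamma (2 * L + 2))
        = (k + 1) * ((k + 1 + L) *
            ((∏ t ∈ range k, (t + 1 + L)) * (k.factorial * Real.Gamma (2 * L + 2)))) := by
          rw [prod_range_succ, Nat.factorial_succ]
          push_cast
          ring
      _ ≤ (k + 1) * ((k + 1 + L) * Real.Gamma (2 * k + 2 * L + 2)) := by gcongr
      _ ≤ (2 * k + 2 * L + 2 + 1) * ((2 * k + 2 * L + 2) * Real.Gamma (2 * k + 2 * L + 2)) := by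
          gcongr ?_ * (?_ * _) <;> linarith
      _ = Real.Gamma (2 * (k + 1 : ℕ) + 2 * L + 2) := by
          rw [← Real.Gamma_add_one (by positivity), ← Real.Gamma_add_one (by positivity)]
          push_cast
          ring_nf

lemma coreCoeff_le {L : ℝ} (hL : 0 ≤ L) (p : ℕ × ℕ) :
    coreCoeff L p ≤
      (Real.Gamma (2 * L + 2))⁻¹ * ((p.1.factorial : ℝ)⁻¹ * (p.2.factorial : ℝ)⁻¹) := by
  obtain ⟨i, j⟩ := p
  have hΓ : 0 < Real.Gamma (2 * (i + j) + 2 * L + 2) := Real.Gamma_pos_of_pos (by positivity)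
  have hprod : ∏ t ∈ Ico j (i + j), (t + 1 + L) ≤ ∏ t ∈ range (i + j), (t + 1 + L) := by
    rw [range_eq_Ico]
    exact prod_le_prod_of_subset_of_one_le (Ico_subset_Ico_left j.zero_le)
      (fun t _ => by positivity) fun t _ _ => by linarith [(Nat.cast_nonneg t : (0 : ℝ) ≤ t)]
  have hfact : (i.factorial * j.factorial : ℝ) ≤ (i + j).factorial := mod_cast
    Nat.le_of_dvd (Nat.factorial_pos _) (Nat.factorial_mul_factorial_dvd_factorial_add i j)
  rw [coreCoeff, div_le_iff₀ hΓ, ← mul_inv, ← mul_inv, inv_mul_eq_div, le_div_iff₀ (by positivity)]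
  calc (∏ t ∈ Ico j (i + j), (t + 1 + L)) *
        (Real.Gamma (2 * L + 2) * (i.factorial * j.factorial))
      ≤ (∏ t ∈ range (i + j), (t + 1 + L)) * (Real.Gamma (2 * L + 2) * (i + j).factorial) := by
        gcongr
    _ ≤ Real.Gamma (2 * (i + j) + 2 * L + 2) := by
        rw [mul_comm (Real.Gamma _)]
        exact_mod_cast prod_range_mul_factorial_mul_gamma_le hL (i + j)

lemma pi_div_radialMoment_wfun {n L : ℝ} (hL : 0 ≤ L) {k : ℕ} (hk : (k : ℝ) + 1 ≤ n) :
    Real.pi / radialMoment (wfun n L) (2 * k + 1) =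
      Real.Gamma (2 * n - 2 * k + (2 * L + 2 + 2 * k)) /
        (Real.Gamma (2 * k + 2 * L + 2) * Real.Gamma (2 * n - 2 * k)) := by
  rw [radialMoment_wfun hL (by push_cast; linarith), div_mul_cancel_left₀ Real.pi_ne_zero,
    ProbabilityTheory.beta, inv_div]
  push_cast
  ring_nf

lemma scaledCoeff_eq {n L : ℝ} (hL : 0 ≤ L) {p : ℕ × ℕ} (hp : (p.1 : ℝ) + p.2 + 1 ≤ n) :
    scaledCoeff n L p =
      Real.Gamma ((2 * n - 2 * (p.1 + p.2)) + (2 * L + 2 + 2 * (p.1 + p.2))) /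
          (Real.Gamma (2 * n - 2 * (p.1 + p.2)) * (n + L) ^ (2 * L + 2 + 2 * ((p.1 : ℝ) + p.2))) *
        (∏ t ∈ Ico p.2 (p.1 + p.2), 2 * (n + L) / (2 * n - 1 - 2 * t)) * coreCoeff L p := by
  obtain ⟨i, j⟩ := p
  simp only at hp ⊢
  have hm : 0 < n + L := by linarith
  have hratio (t : ℕ) (ht : t ∈ Ico j (i + j)) : momentRatio (wfun n L) t =
      (t + 1 + L) * (2 * (n + L) / (2 * n - 1 - 2 * t)) * (n + L)⁻¹ := by
    have ht' : (t : ℝ) + 1 ≤ i + j := mod_cast (mem_Ico.mp ht).2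
    rw [momentRatio_wfun hL (by linarith)]
    field_simp
  have hmoment := pi_div_radialMoment_wfun (k := i + j) hL (by push_cast; exact hp)
  have hpow : (n + L) ^ (2 * L + 2 + 2 * ((i : ℝ) + j)) =
      (n + L) ^ (2 * L + 2 + i + 2 * j) * (n + L) ^ i := by
    rw [← Real.rpow_natCast, ← Real.rpow_add hm]
    ring_nf
  push_cast at hmoment
  rw [scaledCoeff, coreCoeff, mul_div_left_comm, hmoment, prod_congr rfl hratio, prod_mul_distrib,
    prod_mul_distrib, prod_const, Nat.card_Ico, Nat.add_sub_cancel, hpow, Real.rpow_neg hm.le,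
    inv_pow]
  field_simp

lemma tendsto_sub_const_div_add_const (c L : ℝ) :
    Tendsto (fun n : ℝ => (2 * n - c) / (n + L)) atTop (𝓝 2) := by
  have hatTop : Tendsto (fun n : ℝ => n + L) atTop atTop :=
    tendsto_atTop_add_const_right _ _ tendsto_id
  have hlim : Tendsto (fun n : ℝ => 2 - (2 * L + c) / (n + L)) atTop (𝓝 (2 - 0)) :=
    tendsto_const_nhds.sub (tendsto_const_nhds.div_atTop hatTop)
  rw [sub_zero] at hlim
  refine hlim.congr' ?_
  filter_upwards [hatTop.eventually_gt_atTop 0] with n hn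
  field_simp
  ring

lemma tendsto_scaledCoeff {L : ℝ} (hL : 0 ≤ L) (p : ℕ × ℕ) :
    Tendsto (fun n => scaledCoeff n L p) atTop (𝓝 (limitCoeff L p)) := by
  have hx : Tendsto (fun n : ℝ => 2 * n - 2 * ((p.1 : ℝ) + p.2)) atTop atTop :=
    tendsto_atTop_add_const_right _ _ (tendsto_id.const_mul_atTop two_pos)
  have hΓ := tendsto_gamma_add_div_gamma_mul_rpow (s := 2 * L + 2 + 2 * ((p.1 : ℝ) + p.2))
    (by positivity) two_pos hx (tendsto_sub_const_div_add_const _ L)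
  have hfactor (t : ℕ) : Tendsto (fun n => 2 * (n + L) / (2 * n - 1 - 2 * t)) atTop (𝓝 1) := by
    have hlim := ((tendsto_sub_const_div_add_const (1 + 2 * t) L).inv₀ two_ne_zero).const_mul 2
    rw [mul_inv_cancel₀ two_ne_zero] at hlim
    refine hlim.congr fun n => ?_
    rw [inv_div, ← mul_div_assoc, sub_sub]
  have hprod := tendsto_finsetProd (Ico p.2 (p.1 + p.2)) fun t _ => hfactor t
  rw [prod_const_one] at hprod
  have hlim := (hΓ.mul hprod).mul_const (coreCoeff L p)
  rw [mul_one] at hlim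
  refine hlim.congr' ?_
  filter_upwards [eventually_ge_atTop ((p.1 : ℝ) + p.2 + 1)] with n hn
  exact (scaledCoeff_eq hL hn).symm

lemma two_mul_add_div_le {n b L N t : ℝ} (hL : 0 ≤ L) (hb : 0 < b) (hN : 1 ≤ N)
    (hn : (b + 1) * N ≤ n) (ht : t + 1 ≤ N) :
    2 * (n + L) / (2 * n - 1 - 2 * t) ≤ (1 + L) * (b + 1) / b := by
  have hNn : N ≤ n := by nlinarith
  have hgap : 2 * b * n ≤ (b + 1) * (2 * n - 1 - 2 * t) := by nlinarith
  rw [div_le_div_iff₀ (by nlinarith) hb]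
  calc 2 * (n + L) * b ≤ 2 * (n + L * n) * b := by
        gcongr
        exact le_mul_of_one_le_right hL (hN.trans hNn)
    _ = (1 + L) * (2 * b * n) := by ring
    _ ≤ (1 + L) * ((b + 1) * (2 * n - 1 - 2 * t)) := by gcongr
    _ = (1 + L) * (b + 1) * (2 * n - 1 - 2 * t) := by ring

lemma abs_scaledCoeff_le {n b L : ℝ} (hL : 0 ≤ L) (hb : 0 < b) {N : ℕ} (hn : (b + 1) * N ≤ n)
    {p : ℕ × ℕ} (hp : p.1 + p.2 < N) : |scaledCoeff n L p| ≤ coeffBound b L p := by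
  obtain ⟨i, j⟩ := p
  have hpN : (i : ℝ) + j + 1 ≤ N := mod_cast hp
  have hNn : (N : ℝ) ≤ n := by nlinarith
  have hx : 0 < 2 * n - 2 * ((i : ℝ) + j) := by linarith
  have hΓ : Real.Gamma (2 * n - 2 * (i + j) + (2 * L + 2 + 2 * (i + j))) /
        (Real.Gamma (2 * n - 2 * (i + j)) * (n + L) ^ (2 * L + 2 + 2 * ((i : ℝ) + j))) ≤
      4 ^ (2 * L + 2 + 2 * ((i : ℝ) + j)) :=
    gamma_add_div_gamma_mul_rpow_le hx (by positivity) (by linarith) (by norm_num) (by linarith)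
  have hfactor (t : ℕ) (ht : t ∈ Ico j (i + j)) : 0 ≤ 2 * (n + L) / (2 * n - 1 - 2 * t) ∧
      2 * (n + L) / (2 * n - 1 - 2 * t) ≤ (1 + L) * (b + 1) / b := by
    have ht' : (t : ℝ) + 1 ≤ i + j := mod_cast (mem_Ico.mp ht).2
    exact ⟨div_nonneg (by linarith) (by linarith),
      two_mul_add_div_le hL hb (by linarith) hn (by linarith)⟩
  have hprod_nonneg := prod_nonneg fun t ht => (hfactor t ht).1
  have hprod : ∏ t ∈ Ico j (i + j), 2 * (n + L) / (2 * n - 1 - 2 * t) ≤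
      ((1 + L) * (b + 1) / b) ^ i := by
    refine (prod_le_prod (fun t ht => (hfactor t ht).1) fun t ht => (hfactor t ht).2).trans_eq ?_
    rw [prod_const, Nat.card_Ico, Nat.add_sub_cancel]
  have hΓ_nonneg : 0 ≤ Real.Gamma (2 * n - 2 * (i + j) + (2 * L + 2 + 2 * (i + j))) /
      (Real.Gamma (2 * n - 2 * (i + j)) * (n + L) ^ (2 * L + 2 + 2 * ((i : ℝ) + j))) :=
    div_nonneg (Real.Gamma_pos_of_pos (by linarith)).le
      (mul_pos (Real.Gamma_pos_of_pos hx) (Real.rpow_pos_of_pos (by linarith) _)).le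
  have hcore := coreCoeff_nonneg hL (i, j)
  rw [scaledCoeff_eq hL (by simpa using hpN.trans hNn), abs_of_nonneg (by positivity)]
  exact mul_le_mul (mul_le_mul hΓ hprod hprod_nonneg (by positivity)) (coreCoeff_le hL (i, j))
    hcore (by positivity)

lemma coeffBound_nonneg {b L : ℝ} (hb : 0 < b) (hL : 0 ≤ L) (p : ℕ × ℕ) : 0 ≤ coeffBound b L p := by
  unfold coeffBound
  positivity

lemma summable_coeffBound_mul_pow {b L R : ℝ} (hb : 0 < b) (hL : 0 ≤ L) :
    Summable fun p : ℕ × ℕ => coeffBound b L p * (2 * R ^ (2 * p.1 + 4 * p.2 + 1)) := by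
  set C := (1 + L) * (b + 1) / b
  have hsum := (Real.summable_pow_div_factorial (16 * C * R ^ 2)).mul_of_nonneg
    (Real.summable_pow_div_factorial (16 * R ^ 4)) (fun i => by positivity) fun j => by positivity
  refine (hsum.mul_left (4 ^ (2 * L + 2) * (Real.Gamma (2 * L + 2))⁻¹ * (2 * R))).congr ?_
  rintro ⟨i, j⟩
  have hpow : (4 : ℝ) ^ (2 * L + 2 + 2 * ((i : ℝ) + j)) = 4 ^ (2 * L + 2) * (16 ^ i * 16 ^ j) := by
    rw [Real.rpow_add four_pos, Real.rpow_mul four_pos.le, ← Nat.cast_add, Real.rpow_natCast,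
      pow_add]
    norm_num
  simp only [coeffBound]
  rw [hpow, pow_add R, pow_add R, pow_one, pow_mul, pow_mul, mul_pow, mul_pow, mul_pow]
  ring

end Coefficients

section LimitCoefficients

open ProbabilityTheory

lemma image_sq_Ioo_zero_one : (fun s : ℝ => s ^ 2) '' Set.Ioo 0 1 = Set.Ioo 0 1 := by
  ext x
  simp only [Set.mem_image, Set.mem_Ioo]
  constructor
  · rintro ⟨s, ⟨hs0, hs1⟩, rfl⟩
    exact ⟨by positivity, pow_lt_one₀ hs0.le hs1 two_ne_zero⟩
  · rintro ⟨hx0, hx1⟩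
    exact ⟨√x, ⟨Real.sqrt_pos.mpr hx0, by rwa [Real.sqrt_lt' one_pos, one_pow]⟩,
      Real.sq_sqrt hx0.le⟩

lemma integral_Ioo_zero_one_comp_sq {F : Type*} [NormedAddCommGroup F] [NormedSpace ℝ F]
    (f : ℝ → F) :
    ∫ x in Set.Ioo (0 : ℝ) 1, f x = ∫ s in Set.Ioo (0 : ℝ) 1, (2 * s) • f (s ^ 2) := by
  have hderiv (s : ℝ) (_ : s ∈ Set.Ioo (0 : ℝ) 1) :
      HasDerivWithinAt (fun s => s ^ 2) (2 * s) (Set.Ioo 0 1) s := by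
    simpa using (hasDerivAt_pow 2 s).hasDerivWithinAt
  have hinj : Set.InjOn (fun s : ℝ => s ^ 2) (Set.Ioo 0 1) := fun s hs t ht heq =>
    (pow_left_inj₀ hs.1.le ht.1.le two_ne_zero).mp heq
  conv_lhs => rw [← image_sq_Ioo_zero_one,
    integral_image_eq_integral_abs_deriv_smul measurableSet_Ioo hderiv hinj]
  refine setIntegral_congr_fun measurableSet_Ioo fun s hs => ?_
  have hs0 : 0 ≤ 2 * s := by linarith [hs.1]
  simp only [abs_of_nonneg hs0]

lemma integral_rpow_mul_one_sub_sq_rpow {a β : ℝ} (ha : -1 < a) (hβ : 0 < β) :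
    ∫ s in (0 : ℝ)..1, s ^ a * (1 - s ^ 2) ^ (β - 1) = beta ((a + 1) / 2) β / 2 := by
  rw [← integral_Ioo_rpow_mul_one_sub_rpow (by linarith) hβ, integral_Ioo_zero_one_comp_sq,
    intervalIntegral.integral_of_le zero_le_one, integral_Ioc_eq_integral_Ioo, ← integral_div]
  refine setIntegral_congr_fun measurableSet_Ioo fun s hs => ?_
  have hpow : (s ^ 2) ^ ((a + 1) / 2 - 1) = s ^ a / s := by
    rw [← Real.rpow_natCast_mul hs.1.le, ← Real.rpow_sub_one hs.1.ne']
    push_cast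
    ring_nf
  have hs0 := hs.1.ne'
  simp only [smul_eq_mul]
  rw [hpow]
  field_simp

lemma prod_Ico_mul_gamma {L : ℝ} (hL : 0 ≤ L) (i j : ℕ) :
    (∏ t ∈ Ico j (i + j), (t + 1 + L)) * Real.Gamma (j + L + 1) = Real.Gamma (i + j + L + 1) := by
  induction i with
  | zero => simp
  | succ i ih =>
    rw [add_right_comm, prod_Ico_succ_top (by lia), mul_right_comm, ih]
    push_cast
    have hpos : (i + j + L + 1 : ℝ) ≠ 0 := by positivity
    rw [show (i + 1 + j + L + 1 : ℝ) = i + j + L + 1 + 1 by ring, Real.Gamma_add_one hpos]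
    ring

lemma limitCoeff_eq_div_gamma {L : ℝ} (hL : 0 ≤ L) (i j : ℕ) :
    limitCoeff L (i, j) =
      2 * √Real.pi / (Real.Gamma (j + L + 1) * Real.Gamma (i + j + L + 3 / 2)) := by
  have hdup := Real.Gamma_mul_Gamma_add_half (i + j + L + 1)
  have hΓj : 0 < Real.Gamma (j + L + 1) := Real.Gamma_pos_of_pos (by positivity)
  have hpow : (2 : ℝ) ^ (2 * L + 2 + 2 * ((i : ℝ) + j)) * 2 ^ (1 - 2 * ((i : ℝ) + j + L + 1)) =
      2 := by
    rw [← Real.rpow_add two_pos]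
    ring_nf
    exact Real.rpow_one 2
  rw [limitCoeff, coreCoeff, eq_div_of_mul_eq hΓj.ne' (prod_Ico_mul_gamma hL i j),
    show 2 * ((i : ℝ) + j) + 2 * L + 2 = 2 * (i + j + L + 1) by ring,
    show (i + j + L + 3 / 2 : ℝ) = i + j + L + 1 + 1 / 2 by ring, div_div, mul_div_assoc',
    div_eq_div_iff (by positivity) (by positivity)]
  linear_combination Real.Gamma (j + L + 1) * (2 ^ (2 * L + 2 + 2 * ((i : ℝ) + j)) * hdup +
    Real.Gamma (2 * (i + j + L + 1)) * √Real.pi * hpow)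

lemma limitCoeff_eq_integral {L : ℝ} (hL : 0 ≤ L) (i j : ℕ) :
    limitCoeff L (i, j) =
      4 * 2 ^ (2 * L) * (4 ^ j / (i.factorial * Real.Gamma (2 * j + 1 + 2 * L))) *
        ∫ s in (0 : ℝ)..1, s ^ (2 * L + 2 * j) * (1 - s ^ 2) ^ i := by
  have hint := integral_rpow_mul_one_sub_sq_rpow (a := 2 * L + 2 * j) (β := i + 1)
    (by linarith [(j.cast_nonneg : (0 : ℝ) ≤ j)]) (by positivity)
  simp only [add_sub_cancel_right, Real.rpow_natCast] at hint
  have hdup := Real.Gamma_mul_Gamma_add_half (j + L + 1 / 2)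
  have hΓ : 0 < Real.Gamma (2 * j + 1 + 2 * L) := Real.Gamma_pos_of_pos (by positivity)
  have hΓj : 0 < Real.Gamma (j + L + 1) := Real.Gamma_pos_of_pos (by positivity)
  have hΓij : 0 < Real.Gamma (i + j + L + 3 / 2) := Real.Gamma_pos_of_pos (by positivity)
  have hpow : (2 : ℝ) ^ (2 * L) * 4 ^ j * 2 ^ (1 - (2 * j + 1 + 2 * L)) = 1 := by
    rw [show (4 : ℝ) = 2 ^ 2 by norm_num, ← pow_mul, ← Real.rpow_natCast, ← Real.rpow_add two_pos,
      ← Real.rpow_add two_pos]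
    push_cast
    ring_nf
    exact Real.rpow_zero 2
  rw [show (j + L + 1 / 2 + 1 / 2 : ℝ) = j + L + 1 by ring,
    show 2 * (j + L + 1 / 2) = 2 * (j : ℝ) + 1 + 2 * L by ring] at hdup
  rw [hint, limitCoeff_eq_div_gamma hL, beta, Real.Gamma_nat_eq_factorial,
    show (2 * L + 2 * j + 1) / 2 = j + L + 1 / 2 by ring,
    show (j + L + 1 / 2 + (i + 1) : ℝ) = i + j + L + 3 / 2 by ring]
  generalize Real.Gamma (j + L + 1 / 2) = Γ₁ at *
  generalize Real.Gamma (j + L + 1) = Γ₂ at *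
  generalize Real.Gamma (i + j + L + 3 / 2) = Γ₃ at *
  field_simp
  linear_combination -4 * (2 : ℝ) ^ (2 * L) * 4 ^ j * hdup -
    4 * Real.Gamma (2 * j + 1 + 2 * L) * √Real.pi * hpow

end LimitCoefficients

section LimitKernel

open ComplexConjugate

/-- For `p = (i, j)`, the antisymmetrized monomial of bidegree `(2j, 2(i+j)+1)` in `z` and `z̄`. -/
def skewMonomial (z : ℂ) (p : ℕ × ℕ) : ℂ :=
  z ^ (2 * p.2) * conj z ^ (2 * (p.1 + p.2) + 1) - z ^ (2 * (p.1 + p.2) + 1) * conj z ^ (2 * p.2)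

/-- The skew-symmetric power series in `z` and `z̄` with coefficients `a`, to which the rescaled
prekernels and their limit all belong. -/
def skewSeries (a : ℕ × ℕ → ℝ) (z : ℂ) : ℂ := ∑' p, (a p : ℂ) * skewMonomial z p

/-- The terms of the expansion of `z e^{u z²} - z̄ e^{u z̄²}` in powers of `u`. -/
def oddExpTerm (z : ℂ) (u : ℝ) (i : ℕ) : ℂ :=
  ((u ^ i / i.factorial : ℝ) : ℂ) * (z ^ (2 * i + 1) - conj z ^ (2 * i + 1))

/-- The terms of the Mittag-Leffler series `E_{2,1+2L}(x)`. -/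
def mittagLefflerTerm (L x : ℝ) (j : ℕ) : ℝ := x ^ j / Real.Gamma (2 * j + 1 + 2 * L)

/-- The integrand in the limiting kernel `κ_o(z, z̄)`. -/
def kernelIntegrand (L : ℝ) (z : ℂ) (s : ℝ) : ℂ :=
  ((s ^ (2 * L) : ℝ) : ℂ) *
    (z * Complex.exp ((1 - (s : ℂ) ^ 2) * z ^ 2) -
      conj z * Complex.exp ((1 - (s : ℂ) ^ 2) * (conj z) ^ 2)) *
    ((MLER L ((2 * s * ‖z‖ ^ 2) ^ 2) : ℝ) : ℂ)

/-- The terms of the expansion of `kernelIntegrand L z s` as a double series. -/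
def kernelTerm (L : ℝ) (z : ℂ) (s : ℝ) (p : ℕ × ℕ) : ℂ :=
  ((s ^ (2 * L) : ℝ) : ℂ) * oddExpTerm z (1 - s ^ 2) p.1 *
    (mittagLefflerTerm L ((2 * s * ‖z‖ ^ 2) ^ 2) p.2 : ℂ)

/-- A bound for `kernelTerm L z s`, uniform in `s ∈ [0, 1]`. -/
def kernelTermBound (L : ℝ) (z : ℂ) (p : ℕ × ℕ) : ℝ :=
  2 * ‖z‖ * ((‖z‖ ^ 2) ^ p.1 / p.1.factorial) *
    ((Real.Gamma (2 * L + 1))⁻¹ * (((2 * ‖z‖ ^ 2) ^ 2) ^ p.2 / p.2.factorial))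

lemma norm_oddExpTerm_le (z : ℂ) {u : ℝ} (hu0 : 0 ≤ u) (hu1 : u ≤ 1) (i : ℕ) :
    ‖oddExpTerm z u i‖ ≤ 2 * ‖z‖ * ((‖z‖ ^ 2) ^ i / i.factorial) := by
  have hodd : ‖z ^ (2 * i + 1) - conj z ^ (2 * i + 1)‖ ≤ 2 * ‖z‖ * (‖z‖ ^ 2) ^ i := by
    refine (norm_sub_le _ _).trans_eq ?_
    rw [norm_pow, norm_pow, RCLike.norm_conj]
    ring
  rw [oddExpTerm, norm_mul, Complex.norm_real, Real.norm_of_nonneg (by positivity)]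
  calc u ^ i / i.factorial * ‖z ^ (2 * i + 1) - conj z ^ (2 * i + 1)‖
      ≤ 1 / i.factorial * (2 * ‖z‖ * (‖z‖ ^ 2) ^ i) := by
        gcongr
        exact pow_le_one₀ hu0 hu1
    _ = 2 * ‖z‖ * ((‖z‖ ^ 2) ^ i / i.factorial) := by ring

lemma hasSum_oddExpTerm (z : ℂ) (u : ℝ) :
    HasSum (oddExpTerm z u)
      (z * Complex.exp (u * z ^ 2) - conj z * Complex.exp (u * (conj z) ^ 2)) := by
  have hexp (w : ℂ) : HasSum (fun i : ℕ => w ^ i / (i.factorial : ℂ)) (Complex.exp w) :=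
    Complex.exp_eq_exp_ℂ ▸ NormedSpace.expSeries_div_hasSum_exp w
  have hterm : oddExpTerm z u = fun i => z * ((u * z ^ 2) ^ i / i.factorial) -
      conj z * ((u * (conj z) ^ 2) ^ i / i.factorial) := by
    ext i
    rw [oddExpTerm]
    push_cast
    ring
  exact hterm ▸ ((hexp (u * z ^ 2)).mul_left z).sub ((hexp (u * (conj z) ^ 2)).mul_left (conj z))

lemma summable_norm_oddExpTerm (z : ℂ) {u : ℝ} (hu0 : 0 ≤ u) (hu1 : u ≤ 1) :
    Summable fun i => ‖oddExpTerm z u i‖ :=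
  .of_nonneg_of_le (fun _ => norm_nonneg _) (norm_oddExpTerm_le z hu0 hu1)
    ((Real.summable_pow_div_factorial (‖z‖ ^ 2)).mul_left (2 * ‖z‖))

lemma gamma_mul_factorial_le {a : ℝ} (ha : 1 ≤ a) (j : ℕ) :
    Real.Gamma a * j.factorial ≤ Real.Gamma (2 * j + a) := by
  induction j with
  | zero => simp
  | succ j ih =>
    calc Real.Gamma a * (j + 1).factorial
        = (j + 1) * (1 * (Real.Gamma a * j.factorial)) := by
          rw [Nat.factorial_succ]
          push_cast
          ring
      _ ≤ (2 * j + a + 1) * ((2 * j + a) * Real.Gamma (2 * j + a)) := by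
          gcongr ?_ * (?_ * ?_) <;> linarith
      _ = Real.Gamma (2 * (j + 1 : ℕ) + a) := by
          rw [← Real.Gamma_add_one (by positivity), ← Real.Gamma_add_one (by positivity)]
          push_cast
          ring_nf

lemma norm_mittagLefflerTerm_le {L : ℝ} (hL : 0 ≤ L) {x y : ℝ} (hx : 0 ≤ x) (hxy : x ≤ y) (j : ℕ) :
    ‖mittagLefflerTerm L x j‖ ≤ (Real.Gamma (2 * L + 1))⁻¹ * (y ^ j / j.factorial) := by
  have hfact := gamma_mul_factorial_le (show 1 ≤ 2 * L + 1 by linarith) j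
  rw [mittagLefflerTerm, add_assoc, add_comm 1, Real.norm_of_nonneg (by positivity),
    inv_mul_eq_div, div_div, mul_comm _ (Real.Gamma _)]
  have hy : 0 ≤ y := hx.trans hxy
  gcongr

lemma summable_norm_mittagLefflerTerm {L : ℝ} (hL : 0 ≤ L) {x : ℝ} (hx : 0 ≤ x) :
    Summable fun j => ‖mittagLefflerTerm L x j‖ :=
  .of_nonneg_of_le (fun _ => norm_nonneg _) (norm_mittagLefflerTerm_le hL hx le_rfl)
    ((Real.summable_pow_div_factorial x).mul_left _)

lemma hasSum_mittagLefflerTerm {L : ℝ} (hL : 0 ≤ L) {x : ℝ} (hx : 0 ≤ x) :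
    HasSum (mittagLefflerTerm L x) (MLER L x) :=
  (summable_norm_mittagLefflerTerm hL hx).of_norm.hasSum

lemma hasSum_kernelTerm {L : ℝ} (hL : 0 ≤ L) (z : ℂ) {s : ℝ} (hs : s ∈ Set.Icc (0 : ℝ) 1) :
    HasSum (kernelTerm L z s) (kernelIntegrand L z s) := by
  have hu0 : 0 ≤ 1 - s ^ 2 := by nlinarith [hs.1, hs.2]
  have hu1 : 1 - s ^ 2 ≤ 1 := by nlinarith [hs.1]
  have hx : 0 ≤ (2 * s * ‖z‖ ^ 2) ^ 2 := by positivity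
  have hML : Summable fun j => ‖(mittagLefflerTerm L ((2 * s * ‖z‖ ^ 2) ^ 2) j : ℂ)‖ := by
    simpa only [Complex.norm_real] using summable_norm_mittagLefflerTerm hL hx
  have hexp := hasSum_oddExpTerm z (1 - s ^ 2)
  push_cast at hexp
  have hsum : Summable fun p : ℕ × ℕ => oddExpTerm z (1 - s ^ 2) p.1 *
      (mittagLefflerTerm L ((2 * s * ‖z‖ ^ 2) ^ 2) p.2 : ℂ) :=
    ((summable_norm_oddExpTerm z hu0 hu1).mul_norm hML).of_norm
  have hprod := hexp.mul (Complex.hasSum_ofReal.mpr (hasSum_mittagLefflerTerm hL hx)) hsum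
  have hscaled := hprod.mul_left ((s ^ (2 * L) : ℝ) : ℂ)
  simp only [← mul_assoc] at hscaled
  exact hscaled

lemma norm_kernelTerm_le {L : ℝ} (hL : 0 ≤ L) (z : ℂ) {s : ℝ} (hs : s ∈ Set.Icc (0 : ℝ) 1)
    (p : ℕ × ℕ) : ‖kernelTerm L z s p‖ ≤ kernelTermBound L z p := by
  obtain ⟨hs0, hs1⟩ := hs
  have hexp := norm_oddExpTerm_le z (u := 1 - s ^ 2) (by nlinarith) (by nlinarith) p.1
  have hx : (2 * s * ‖z‖ ^ 2) ^ 2 ≤ (2 * ‖z‖ ^ 2) ^ 2 := by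
    gcongr
    linarith
  have hML := norm_mittagLefflerTerm_le hL (sq_nonneg _) hx p.2
  have hpow : s ^ (2 * L) ≤ 1 := Real.rpow_le_one hs0 hs1 (by positivity)
  rw [kernelTerm, kernelTermBound, norm_mul, norm_mul, Complex.norm_real, Complex.norm_real,
    Real.norm_of_nonneg (Real.rpow_nonneg hs0 _)]
  exact mul_le_mul ((mul_le_of_le_one_left (norm_nonneg _) hpow).trans hexp) hML
    (norm_nonneg _) (by positivity)

lemma summable_kernelTermBound {L : ℝ} (hL : 0 ≤ L) (z : ℂ) : Summable (kernelTermBound L z) := by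
  have hexp := (Real.summable_pow_div_factorial (‖z‖ ^ 2)).mul_left (2 * ‖z‖)
  have hML := (Real.summable_pow_div_factorial ((2 * ‖z‖ ^ 2) ^ 2)).mul_left
    (Real.Gamma (2 * L + 1))⁻¹
  have hprod := hexp.mul_of_nonneg hML (fun _ => by positivity) fun _ => by positivity
  exact hprod

lemma continuous_kernelTerm {L : ℝ} (hL : 0 ≤ L) (z : ℂ) (p : ℕ × ℕ) :
    Continuous fun s => kernelTerm L z s p := by
  have hpow : Continuous fun s : ℝ => s ^ (2 * L) := Real.continuous_rpow_const (by positivity)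
  unfold kernelTerm oddExpTerm mittagLefflerTerm
  fun_prop

lemma kernelTerm_eq {L : ℝ} (hL : 0 ≤ L) (z : ℂ) {s : ℝ} (hs : 0 ≤ s) (i j : ℕ) :
    kernelTerm L z s (i, j) =
      ((s ^ (2 * L + 2 * j) * (1 - s ^ 2) ^ i : ℝ) : ℂ) *
        (-((4 ^ j / (i.factorial * Real.Gamma (2 * j + 1 + 2 * L)) : ℝ) : ℂ) *
          skewMonomial z (i, j)) := by
  have hpow : s ^ (2 * L + 2 * j) = s ^ (2 * L) * s ^ (2 * j) := by
    rw [Real.rpow_add_of_nonneg hs (by positivity) (by positivity)]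
    norm_cast
  have hnorm : (‖z‖ : ℂ) ^ 2 = z * conj z := (Complex.mul_conj' z).symm
  rw [kernelTerm, oddExpTerm, mittagLefflerTerm, skewMonomial, hpow]
  push_cast
  rw [hnorm]
  ring

lemma integral_kernelTerm {L : ℝ} (hL : 0 ≤ L) (z : ℂ) (p : ℕ × ℕ) :
    ∫ s in (0 : ℝ)..1, kernelTerm L z s p =
      -(4 * ((2 ^ (2 * L) : ℝ) : ℂ))⁻¹ * ((limitCoeff L p : ℂ) * skewMonomial z p) := by
  obtain ⟨i, j⟩ := p
  have hcongr : Set.EqOn (fun s => kernelTerm L z s (i, j)) _ (Set.uIcc 0 1) := fun s hs =>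
    kernelTerm_eq hL z (Set.uIcc_of_le (zero_le_one' ℝ) ▸ hs).1 i j
  have h2 : ((2 ^ (2 * L) : ℝ) : ℂ) ≠ 0 := mod_cast (Real.rpow_pos_of_pos two_pos (2 * L)).ne'
  rw [intervalIntegral.integral_congr hcongr, intervalIntegral.integral_mul_const,
    intervalIntegral.integral_ofReal, limitCoeff_eq_integral hL]
  push_cast at h2 ⊢
  field_simp

lemma integral_kernelIntegrand {L : ℝ} (hL : 0 ≤ L) (z : ℂ) :
    ∫ s in (0 : ℝ)..1, kernelIntegrand L z s =
      -(4 * ((2 ^ (2 * L) : ℝ) : ℂ))⁻¹ * skewSeries (limitCoeff L) z := by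
  have hIcc {s : ℝ} (hs : s ∈ Set.uIoc (0 : ℝ) 1) : s ∈ Set.Icc (0 : ℝ) 1 :=
    Set.Ioc_subset_Icc_self (Set.uIoc_of_le (zero_le_one' ℝ) ▸ hs)
  have hsum := intervalIntegral.hasSum_integral_of_dominated_convergence (μ := volume)
    (F := fun p s => kernelTerm L z s p) (fun p _ => kernelTermBound L z p)
    (fun p => (continuous_kernelTerm hL z p).aestronglyMeasurable)
    (fun p => .of_forall fun s hs => norm_kernelTerm_le hL z (hIcc hs) p)
    (.of_forall fun _ _ => summable_kernelTermBound hL z) intervalIntegrable_const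
    (.of_forall fun s hs => hasSum_kernelTerm hL z (hIcc hs))
  rw [← hsum.tsum_eq, skewSeries, ← tsum_mul_left]
  exact tsum_congr (integral_kernelTerm hL z)

lemma mul_koConj_eq {L : ℝ} (hL : 0 ≤ L) (z : ℂ) :
    (conj z - z) * koConj L z =
      (z - conj z) / 2 * ((‖z‖ ^ (4 * L) : ℝ) : ℂ) * skewSeries (limitCoeff L) z := by
  have hko : koConj L z =
      2 * (((2 * ‖z‖ ^ 2) ^ (2 * L) : ℝ) : ℂ) * ∫ s in (0 : ℝ)..1, kernelIntegrand L z s := rfl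
  have hpow : (2 * ‖z‖ ^ 2) ^ (2 * L) = 2 ^ (2 * L) * ‖z‖ ^ (4 * L) := by
    rw [Real.mul_rpow two_pos.le (by positivity), ← Real.rpow_natCast_mul (norm_nonneg z)]
    ring_nf
  have h2 : ((2 ^ (2 * L) : ℝ) : ℂ) ≠ 0 := mod_cast (Real.rpow_pos_of_pos two_pos (2 * L)).ne'
  rw [hko, integral_kernelIntegrand hL, hpow, Complex.ofReal_mul]
  field_simp
  ring

end LimitKernel

section FiniteSize

open ComplexConjugate

/-- The coefficients of the rescaled prekernel at size `N`, extended by zero. -/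
def truncatedCoeff (n L : ℝ) (N : ℕ) (p : ℕ × ℕ) : ℝ :=
  if p.1 + p.2 < N then scaledCoeff n L p else 0

lemma tsum_ite_add_lt {M : Type*} [AddCommMonoid M] [TopologicalSpace M] [T2Space M]
    (N : ℕ) (f : ℕ × ℕ → M) :
    ∑' p : ℕ × ℕ, (if p.1 + p.2 < N then f p else 0) =
      ∑ k ∈ range N, ∑ i ∈ range (k + 1), f (k - i, i) := by
  have hdisj : Set.PairwiseDisjoint (range N : Set ℕ) (antidiagonal : ℕ → Finset (ℕ × ℕ)) :=
    fun k _ l _ hkl => disjoint_left.2 fun p hk hl =>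
      hkl ((mem_antidiagonal.1 hk).symm.trans (mem_antidiagonal.1 hl))
  calc ∑' p : ℕ × ℕ, (if p.1 + p.2 < N then f p else 0)
      = ∑ p ∈ (range N).biUnion antidiagonal, (if p.1 + p.2 < N then f p else 0) :=
        tsum_eq_sum fun p hp => if_neg (by simpa using hp)
    _ = ∑ p ∈ (range N).biUnion antidiagonal, f p :=
        sum_congr rfl fun p hp => if_pos (by simpa using hp)
    _ = ∑ k ∈ range N, ∑ i ∈ range (k + 1), f (k - i, i) := by
        rw [sum_biUnion hdisj]
        refine sum_congr rfl fun k _ => ?_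
        rw [← Nat.sum_antidiagonal_swap, Nat.sum_antidiagonal_eq_sum_range_succ_mk]
        rfl

lemma skewMonomial_div_ofReal (z : ℂ) (c : ℝ) (p : ℕ × ℕ) :
    skewMonomial (z / c) p = skewMonomial z p / (c : ℂ) ^ (2 * p.1 + 4 * p.2 + 1) := by
  simp only [skewMonomial, map_div₀, Complex.conj_ofReal, div_pow, div_mul_div_comm, ← pow_add]
  rw [sub_div]
  ring_nf

lemma pi_mul_coeff_div_sqrt_pow {n L : ℝ} (h : 0 < n + L) (p : ℕ × ℕ) :
    Real.pi * ((∏ t ∈ Ico p.2 (p.1 + p.2), momentRatio (wfun n L) t) /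
        radialMoment (wfun n L) (2 * (p.1 + p.2) + 1)) / √(n + L) ^ (2 * p.1 + 4 * p.2 + 1) =
      (n + L) ^ (2 * L + 3 / 2) * scaledCoeff n L p := by
  have hpow : (√(n + L) ^ (2 * p.1 + 4 * p.2 + 1))⁻¹ =
      (n + L) ^ (2 * L + 3 / 2) * (n + L) ^ (-(2 * L + 2 + p.1 + 2 * p.2)) := by
    rw [Real.sqrt_eq_rpow, ← Real.rpow_mul_natCast h.le, ← Real.rpow_neg h.le,
      ← Real.rpow_add h]
    push_cast
    ring_nf
  rw [div_eq_mul_inv, hpow, scaledCoeff]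
  ring

lemma pi_mul_prekernel_div_sqrt {n L : ℝ} (h : 0 < n + L) (N : ℕ) (z : ℂ) :
    Real.pi * prekernel (wfun n L) N (z / (√(n + L) : ℝ)) =
      (((n + L) ^ (2 * L + 3 / 2) : ℝ) : ℂ) * skewSeries (truncatedCoeff n L N) z := by
  have hseries : skewSeries (truncatedCoeff n L N) z =
      ∑ k ∈ range N, ∑ i ∈ range (k + 1),
        (scaledCoeff n L (k - i, i) : ℂ) * skewMonomial z (k - i, i) := by
    rw [← tsum_ite_add_lt N fun p => (scaledCoeff n L p : ℂ) * skewMonomial z p, skewSeries]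
    refine tsum_congr fun p => ?_
    rw [truncatedCoeff]
    split_ifs <;> simp
  rw [prekernel_eq_sum, hseries, mul_sum, mul_sum]
  refine sum_congr rfl fun k _ => ?_
  rw [mul_sum, mul_sum]
  refine sum_congr rfl fun i hi => ?_
  obtain ⟨j, rfl⟩ := Nat.exists_eq_add_of_le' (Nat.lt_succ_iff.1 (mem_range.1 hi))
  have hcoeff := congrArg ((↑) : ℝ → ℂ) (pi_mul_coeff_div_sqrt_pow h (j, i))
  rw [Complex.ofReal_mul (_ ^ _), Complex.ofReal_div, Complex.ofReal_mul, Complex.ofReal_pow]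
    at hcoeff
  rw [Nat.add_sub_cancel, ← mul_assoc, ← mul_assoc, ← hcoeff, div_mul_eq_mul_div, mul_div_assoc,
    ← skewMonomial_div_ofReal, skewMonomial]

lemma wfun_div_sqrt {n L : ℝ} (h : 0 < n + L) (z : ℂ) :
    wfun n L (z / (√(n + L) : ℝ)) =
      ‖z‖ ^ (4 * L) * (n + L) ^ (-(2 * L)) *
        (1 + ‖z‖ ^ 2 / (n + L)) ^ (-(2 * (n + L + 1))) := by
  have hsqrt : √(n + L) ^ (4 * L) = (n + L) ^ (2 * L) := by
    rw [Real.sqrt_eq_rpow, ← Real.rpow_mul h.le]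
    ring_nf
  rw [wfun, norm_div, Complex.norm_real, Real.norm_of_nonneg (Real.sqrt_nonneg _),
    Real.div_rpow (norm_nonneg z) (Real.sqrt_nonneg _), hsqrt, div_pow, Real.sq_sqrt h.le,
    Real.rpow_neg h.le, div_eq_mul_inv]

lemma natCast_mul_dlt_zero {N : ℕ} (hN : 0 < N) (n L : ℝ) : N * dlt N n L 0 = n + L := by
  have : (N : ℝ) ≠ 0 := by positivity
  simp [dlt, mul_div_cancel₀ _ this]

lemma inv_mul_R1_div_sc {n L : ℝ} (hL : 0 ≤ L) {N : ℕ} (hN : 0 < N) (hNn : N ≤ n) (z : ℂ) :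
    (((N * dlt N n L 0)⁻¹ * R1 N n L (z / (sc N n L 0 : ℂ)) : ℝ) : ℂ) =
      (z - conj z) / 2 * ((‖z‖ ^ (4 * L) : ℝ) : ℂ) *
        (((1 + ‖z‖ ^ 2 / (n + L)) ^ (-(2 * (n + L + 1))) : ℝ) : ℂ) *
        skewSeries (truncatedCoeff n L N) z := by
  have hm : 0 < n + L := by
    have : (0 : ℝ) < N := by positivity
    linarith
  have hpow : (n + L)⁻¹ * (√(n + L))⁻¹ * (n + L) ^ (-(2 * L)) * (n + L) ^ (2 * L + 3 / 2) = 1 := by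
    rw [Real.sqrt_eq_rpow, ← Real.rpow_neg hm.le, ← Real.rpow_neg_one, ← Real.rpow_add hm,
      ← Real.rpow_add hm, ← Real.rpow_add hm]
    ring_nf
    exact Real.rpow_zero _
  have hpowC := congrArg ((↑) : ℝ → ℂ) hpow
  push_cast at hpowC
  rw [sc, natCast_mul_dlt_zero hN, Complex.ofReal_mul, ofReal_R1_eq_prekernel hL hN hNn,
    mul_left_comm (Real.pi : ℂ), pi_mul_prekernel_div_sqrt hm, wfun_div_sqrt hm, map_div₀,
    Complex.conj_ofReal, ← sub_div]
  push_cast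
  linear_combination (z - conj z) / 2 * ((‖z‖ ^ (4 * L) : ℝ) : ℂ) *
        (((1 + ‖z‖ ^ 2 / (n + L)) ^ (-(2 * (n + L + 1))) : ℝ) : ℂ) *
        skewSeries (truncatedCoeff n L N) z * hpowC

end FiniteSize

section Convergence

open ComplexConjugate Topology

variable {ι : Type*} {l : Filter ι}

lemma tendsto_mul_log_one_add_div {m t : ι → ℝ} {s : ℝ} (hm : Tendsto m l atTop)
    (ht : Tendsto t l (𝓝 s)) :
    Tendsto (fun i => m i * Real.log (1 + t i / m i)) l (𝓝 s) := by
  have hbase : Tendsto (fun i => 1 + t i / m i) l (𝓝 1) := by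
    simpa using (ht.div_atTop hm).const_add 1
  have hlower : Tendsto (fun i => t i / (1 + t i / m i)) l (𝓝 s) := by
    simpa [Pi.div_def] using ht.div hbase one_ne_zero
  refine tendsto_of_tendsto_of_tendsto_of_le_of_le' hlower ht ?_ ?_ <;>
    filter_upwards [hm.eventually_gt_atTop 0, hbase.eventually_const_lt zero_lt_one] with i hmi hi
  · calc t i / (1 + t i / m i) = m i * (1 - (1 + t i / m i)⁻¹) := by
          have hadd : m i + t i = m i * (1 + t i / m i) := by field_simp
          have hne : m i + t i ≠ 0 := by rw [hadd]; positivity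
          field_simp
          ring
      _ ≤ m i * Real.log (1 + t i / m i) := by gcongr; exact Real.one_sub_inv_le_log_of_pos hi
  · calc m i * Real.log (1 + t i / m i) ≤ m i * (1 + t i / m i - 1) := by
          gcongr; exact Real.log_le_sub_one_of_pos hi
      _ = t i := by field_simp; ring

lemma tendsto_one_add_div_rpow_neg {m t : ι → ℝ} {s : ℝ} (hm : Tendsto m l atTop)
    (ht : Tendsto t l (𝓝 s)) :
    Tendsto (fun i => (1 + t i / m i) ^ (-(2 * (m i + 1)))) l (𝓝 (Real.exp (-(2 * s)))) := by
  have hbase : Tendsto (fun i => 1 + t i / m i) l (𝓝 1) := by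
    simpa using (ht.div_atTop hm).const_add 1
  have hlog : Tendsto (fun i => Real.log (1 + t i / m i)) l (𝓝 0) := by
    simpa using hbase.log one_ne_zero
  have hexp := (((tendsto_mul_log_one_add_div hm ht).add hlog).const_mul (-2)).rexp
  rw [add_zero, neg_mul] at hexp
  refine hexp.congr' ?_
  filter_upwards [hbase.eventually_const_lt zero_lt_one] with i hi
  rw [Real.rpow_def_of_pos hi]
  ring_nf

lemma norm_skewMonomial_le {z : ℂ} {R : ℝ} (hz : ‖z‖ ≤ R) (p : ℕ × ℕ) :
    ‖skewMonomial z p‖ ≤ 2 * R ^ (2 * p.1 + 4 * p.2 + 1) := by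
  calc ‖skewMonomial z p‖ ≤ 2 * ‖z‖ ^ (2 * p.1 + 4 * p.2 + 1) := by
        refine (norm_sub_le _ _).trans_eq ?_
        rw [norm_mul, norm_mul, norm_pow, norm_pow, norm_pow, norm_pow, RCLike.norm_conj]
        ring
    _ ≤ 2 * R ^ (2 * p.1 + 4 * p.2 + 1) := by gcongr

lemma continuous_skewMonomial (p : ℕ × ℕ) : Continuous fun z => skewMonomial z p := by
  unfold skewMonomial
  fun_prop

lemma tendsto_skewSeries {a : ι → ℕ × ℕ → ℝ} {c B : ℕ × ℕ → ℝ} {w : ι → ℂ} {z : ℂ}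
    (hB : Summable fun p => B p * (2 * (‖z‖ + 1) ^ (2 * p.1 + 4 * p.2 + 1)))
    (ha : ∀ᶠ i in l, ∀ p, |a i p| ≤ B p) (hac : ∀ p, Tendsto (a · p) l (𝓝 (c p)))
    (hw : Tendsto w l (𝓝 z)) :
    Tendsto (fun i => skewSeries (a i) (w i)) l (𝓝 (skewSeries c z)) := by
  refine tendsto_tsum_of_dominated_convergence hB (fun p => ?_) ?_
  · exact ((Complex.continuous_ofReal.tendsto _).comp (hac p)).mul
      (((continuous_skewMonomial p).tendsto z).comp hw)
  · filter_upwards [ha, hw.norm.eventually_lt_const (lt_add_one ‖z‖)] with i hai hwi p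
    rw [norm_mul, Complex.norm_real, Real.norm_eq_abs]
    exact mul_le_mul (hai p) (norm_skewMonomial_le hwi.le p) (norm_nonneg _)
      ((abs_nonneg _).trans (hai p))

lemma abs_limitCoeff_le {b L : ℝ} (hb : 0 < b) (hL : 0 ≤ L) (p : ℕ × ℕ) :
    |limitCoeff L p| ≤ coeffBound b L p :=
  le_of_tendsto (tendsto_scaledCoeff hL p).abs <|
    (eventually_ge_atTop ((b + 1) * (p.1 + p.2 + 1 : ℕ))).mono fun _ hn =>
      abs_scaledCoeff_le hL hb hn (Nat.lt_succ_self _)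

lemma continuous_skewPrefactor {L : ℝ} (hL : 0 ≤ L) :
    Continuous fun z : ℂ => (z - conj z) / 2 * ((‖z‖ ^ (4 * L) : ℝ) : ℂ) := by
  have hpow : Continuous fun z : ℂ => ‖z‖ ^ (4 * L) :=
    continuous_norm.rpow_const fun _ => .inr (by positivity)
  fun_prop

lemma continuous_skewSeries_limitCoeff {L : ℝ} (hL : 0 ≤ L) :
    Continuous (skewSeries (limitCoeff L)) :=
  continuous_iff_continuousAt.2 fun _ =>
    tendsto_skewSeries (summable_coeffBound_mul_pow one_pos hL)
      (.of_forall fun _ => abs_limitCoeff_le one_pos hL) (fun _ => tendsto_const_nhds) tendsto_id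

lemma abs_truncatedCoeff_le {b L n : ℝ} (hb : 0 < b) (hL : 0 ≤ L) {N : ℕ}
    (hn : (b + 1) * N ≤ n) (p : ℕ × ℕ) : |truncatedCoeff n L N p| ≤ coeffBound b L p := by
  rw [truncatedCoeff]
  split_ifs with hp
  · exact abs_scaledCoeff_le hL hb hn hp
  · simpa using coeffBound_nonneg hb hL p

lemma tendsto_truncatedCoeff {L : ℝ} (hL : 0 ≤ L) {n : ℕ → ℝ} (hn : Tendsto n atTop atTop)
    (p : ℕ × ℕ) :
    Tendsto (fun N => truncatedCoeff (n N) L N p) atTop (𝓝 (limitCoeff L p)) :=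
  ((tendsto_scaledCoeff hL p).comp hn).congr' <|
    (eventually_gt_atTop (p.1 + p.2)).mono fun _ hp => (if_pos hp).symm

lemma tendstoLocallyUniformly_of_tendsto_prod {α β : Type*} [TopologicalSpace α] [UniformSpace β]
    {F : ι → α → β} {f : α → β} (hf : Continuous f)
    (hF : ∀ x, Tendsto (fun q : ι × α => F q.1 q.2) (l ×ˢ 𝓝 x) (𝓝 (f x))) :
    TendstoLocallyUniformly F f l :=
  tendstoLocallyUniformly_iff_forall_tendsto.2 fun x =>
    (((hf.tendsto x).comp tendsto_snd).prodMk_nhds (hF x)).mono_right (nhds_le_uniformity _)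

lemma tendsto_inv_mul_R1_div_sc {b L : ℝ} (hL : 0 ≤ L) (hb : 0 < b) {n : ℕ → ℝ}
    (hn : ∀ᶠ N : ℕ in atTop, (b + 1) * N ≤ n N) (z : ℂ) :
    Tendsto
      (fun q : ℕ × ℂ => (((q.1 * dlt q.1 (n q.1) L 0)⁻¹ *
        R1 q.1 (n q.1) L (q.2 / (sc q.1 (n q.1) L 0 : ℂ)) : ℝ) : ℂ))
      (atTop ×ˢ 𝓝 z)
      (𝓝 ((z - conj z) / 2 * ((‖z‖ ^ (4 * L) : ℝ) : ℂ) *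
        ((Real.exp (-(2 * ‖z‖ ^ 2)) : ℝ) : ℂ) * skewSeries (limitCoeff L) z)) := by
  have hntop : Tendsto n atTop atTop :=
    tendsto_atTop_mono' _ hn (tendsto_natCast_atTop_atTop.const_mul_atTop (by linarith))
  have hn' : ∀ᶠ q : ℕ × ℂ in atTop ×ˢ 𝓝 z, (b + 1) * q.1 ≤ n q.1 := tendsto_fst.eventually hn
  have hz : Tendsto Prod.snd (atTop ×ˢ 𝓝 z : Filter (ℕ × ℂ)) (𝓝 z) := tendsto_snd
  have hprefactor : Tendsto (fun q : ℕ × ℂ => (q.2 - conj q.2) / 2 * ((‖q.2‖ ^ (4 * L) : ℝ) : ℂ))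
      (atTop ×ˢ 𝓝 z) (𝓝 ((z - conj z) / 2 * ((‖z‖ ^ (4 * L) : ℝ) : ℂ))) :=
    ((continuous_skewPrefactor hL).tendsto z).comp hz
  have hweight := tendsto_one_add_div_rpow_neg
    (tendsto_atTop_add_const_right _ L (hntop.comp tendsto_fst)) (hz.norm.pow 2)
  have hseries := tendsto_skewSeries (summable_coeffBound_mul_pow hb hL)
    (hn'.mono fun q hq => abs_truncatedCoeff_le hb hL hq)
    (fun p => (tendsto_truncatedCoeff hL hntop p).comp tendsto_fst) hz
  have hfactor := hprefactor.mul ((Complex.continuous_ofReal.tendsto _).comp hweight)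
  refine (hfactor.mul hseries).congr' ?_
  filter_upwards [hn', tendsto_fst.eventually (eventually_gt_atTop 0)] with q hq hpos
  have hle : (q.1 : ℝ) ≤ (b + 1) * q.1 := le_mul_of_one_le_left q.1.cast_nonneg (by linarith)
  exact (inv_mul_R1_div_sc hL hpos (hle.trans hq) q.2).symm

theorem one_point_universality_origin_general {L b : ℝ} (hL : 0 ≤ L) (hb : 0 < b) {n : ℕ → ℝ}
    (hn : ∀ᶠ N : ℕ in atTop, (b + 1) * N ≤ n N) {K : Set ℂ} (hK : IsCompact K) :
    TendstoUniformlyOn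
      (fun (N : ℕ) (z : ℂ) =>
        (((N * dlt N (n N) L 0)⁻¹ * R1 N (n N) L (z / (sc N (n N) L 0 : ℂ)) : ℝ) : ℂ))
      (fun z => (conj z - z) * ((Real.exp (-(2 * ‖z‖ ^ 2)) : ℝ) : ℂ) * koConj L z)
      atTop K := by
  have hlimit : (fun z => (conj z - z) * ((Real.exp (-(2 * ‖z‖ ^ 2)) : ℝ) : ℂ) * koConj L z) =
      fun z => (z - conj z) / 2 * ((‖z‖ ^ (4 * L) : ℝ) : ℂ) *
        ((Real.exp (-(2 * ‖z‖ ^ 2)) : ℝ) : ℂ) * skewSeries (limitCoeff L) z := by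
    funext z
    rw [mul_right_comm, mul_koConj_eq hL, mul_right_comm]
  have hcont := ((continuous_skewPrefactor hL).mul
    (show Continuous fun z : ℂ => ((Real.exp (-(2 * ‖z‖ ^ 2)) : ℝ) : ℂ) by fun_prop)).mul
    (continuous_skewSeries_limitCoeff hL)
  rw [hlimit, ← tendstoLocallyUniformlyOn_iff_tendstoUniformlyOn_of_compact hK]
  exact (tendstoLocallyUniformly_of_tendsto_prod hcont
    (tendsto_inv_mul_R1_div_sc hL hb hn)).tendstoLocallyUniformlyOn

end Convergence

/-- Theorem 1.2(c), k = 1: universality of the one-point function at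
the singular origin. -/
theorem one_point_universality_origin (L b : ℝ) (hL : 0 ≤ L) (hb : 0 < b)
    (K : Set ℂ) (hK : IsCompact K) :
    TendstoUniformlyOn
      (fun (N : ℕ) (z : ℂ) =>
        ((((N : ℝ) * dlt N ((b+1)*N) L 0)⁻¹ *
          R1 N ((b+1)*N) L (z / (sc N ((b+1)*N) L 0 : ℂ)) : ℝ) : ℂ))
      (fun z => ((starRingEnd ℂ) z - z) * ((Real.exp (-(2 * ‖z‖ ^ 2)) : ℝ) : ℂ) *
        koConj L z)
      (atTop ⊓ 𝓟 (Ssing b)) K :=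
  fun u hu => (one_point_universality_origin_general hL hb (.of_forall fun _ => le_rfl) hK u
    hu).filter_mono inf_le_left

end SI
end
end

section
/- Asymptotics of the inhomogeneous prefactors in the strong non-unitarity regime (Lemma 3.4(a)). Under the strong non-unitarity setup, fix p > 0 and for z, w ∈ ℂ set ζ := p + z/√(Nδ), η := p + w/√(Nδ) with δ := ((n+L)/N)(1+p²)^{−2}. Define I_N(z,w) := (1+p²)^{−3}(Nδ)^{−2}(1+ζ²)^{−1}·(1+ζη)^{2n+2L−1}·((1+ζ²)(1+η²))^{−(n+L−1/2)}·(2n+2L+1)(n+L); II_N(z,w) := (1+p²)^{−3}(Nδ)^{−2}·ζ^{2N+2L}·(1+ζ²)^{−(n+L+1/2)}·π·Γ(2n+2L+2)/(2^{2n+2L}·Γ(N+L+1/2)·Γ(n−N)·Γ(n+L+1/2)); III_N(z,w) := (1+p²)^{−3}(Nδ)^{−2}·ζ^{2L−1}·(1+ζ²)^{−(n+L+1/2)}·π·Γ(2n+2L+2)/(2^{2n+2L}·Γ(n+1/2)·Γ(L)·Γ(n+L+1/2)), complex powers with non-integer exponents being principal branches. Then, uniformly for (z,w) in compact subsets of ℂ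 × ℂ as N → ∞: I_N(z,w) = 2e^{−(z−w)²} + O(N^{−1/2}); II_N(z,w) = √2·e^{−2z²} + O(N^{−1/2}) if p = r₂, while II_N(z,w) → 0 exponentially fast in N if p ≠ r₂; and III_N(z,w) = √2·e^{−2z²} + O(N^{−1/2}) if p = r₁, while III_N(z,w) → 0 exponentially fast in N if p ≠ r₁. -/
open MeasureTheory Filter Finset

noncomputable section

namespace SI

/-- The kernel `G_N(ζ,η)` built from the skew-orthogonal polynomials of the
symplectic induced spherical ensemble (all powers are principal-branch `cpow`s,
which agree with the integer powers whenever `2L` is a nonnegative integer). -/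
def GK (N : ℕ) (n L : ℝ) (ζ η : ℂ) : ℂ :=
  ((Real.pi : ℂ) * Complex.Gamma ((2*n+2*L+2 : ℝ) : ℂ) / (2:ℂ) ^ ((2*n+2*L+1 : ℝ) : ℂ)) *
  ∑ k ∈ range N, ∑ l ∈ range (k+1),
    ζ ^ ((2*k+2*L+1 : ℝ) : ℂ) * η ^ ((2*l+2*L : ℝ) : ℂ) /
      (Complex.Gamma ((k+L+3/2 : ℝ) : ℂ) * Complex.Gamma ((n-k : ℝ) : ℂ) *
       Complex.Gamma ((n-l+1/2 : ℝ) : ℂ) * Complex.Gamma ((l+L+1 : ℝ) : ℂ))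

/-- The skew-symmetric kernel `κ̂_N(ζ,η) = G_N(ζ,η) - G_N(η,ζ)`. -/
def KK (N : ℕ) (n L : ℝ) (ζ η : ℂ) : ℂ := GK N n L ζ η - GK N n L η ζ

/-- The rescaled kernel `κ̃_N(z,w)`. -/
def resc (N : ℕ) (n L p : ℝ) (z w : ℂ) : ℂ :=
  (((1+p^2) ^ (-3 : ℝ) : ℝ) : ℂ) * (((N * dlt N n L p) ^ (-(3/2) : ℝ) : ℝ) : ℂ) *
  ((1 + ((p:ℂ) + z / (sc N n L p : ℂ))^2) * (1 + ((p:ℂ) + w / (sc N n L p : ℂ))^2))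
      ^ ((-(n+L-1/2) : ℝ) : ℂ) *
  KK N n L ((p:ℂ) + z / (sc N n L p : ℂ)) ((p:ℂ) + w / (sc N n L p : ℂ))

/-- The admissible system sizes in the strong non-unitarity regime:
positive `N` for which `L = aN` and `n = (b+1)N` are (nonnegative) integers. -/
def Sstrong (a b : ℝ) : Set ℕ :=
  {N | 0 < N ∧ (∃ Lm : ℕ, (Lm : ℝ) = a*N) ∧ (∃ nm : ℕ, (nm : ℝ) = (b+1)*N)}

/-- The inner radius `r₁ = √(a/(b+1))`. -/
def rIn (a b : ℝ) : ℝ := Real.sqrt (a/(b+1))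

/-- The outer radius `r₂ = √((1+a)/b)`. -/
def rOut (a b : ℝ) : ℝ := Real.sqrt ((1+a)/b)

/-- The rescaled zooming point `ζ = p + z/√(Nδ)`. -/
def zet (N : ℕ) (n L p : ℝ) (z : ℂ) : ℂ := (p:ℂ) + z / (sc N n L p : ℂ)

/-- The prefactor `I_N(z,w)` of Lemma 3.4. -/
def IN (N : ℕ) (n L p : ℝ) (z w : ℂ) : ℂ :=
  (((1+p^2) ^ (-3 : ℝ) : ℝ) : ℂ) * ((((N : ℝ) * dlt N n L p) ^ (-2 : ℝ) : ℝ) : ℂ) *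
  (1 + zet N n L p z ^ 2)⁻¹ *
  (1 + zet N n L p z * zet N n L p w) ^ ((2*n+2*L-1 : ℝ) : ℂ) *
  ((1 + zet N n L p z ^ 2) * (1 + zet N n L p w ^ 2)) ^ ((-(n+L-1/2) : ℝ) : ℂ) *
  (((2*n+2*L+1)*(n+L) : ℝ) : ℂ)

/-- The prefactor `II_N(z,w)` of Lemma 3.4. -/
def IIN (N : ℕ) (n L p : ℝ) (z w : ℂ) : ℂ :=
  (((1+p^2) ^ (-3 : ℝ) : ℝ) : ℂ) * ((((N : ℝ) * dlt N n L p) ^ (-2 : ℝ) : ℝ) : ℂ) *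
  zet N n L p z ^ ((2*(N:ℝ)+2*L : ℝ) : ℂ) *
  (1 + zet N n L p z ^ 2) ^ ((-(n+L+1/2) : ℝ) : ℂ) *
  ((Real.pi : ℂ) * Complex.Gamma ((2*n+2*L+2 : ℝ) : ℂ) /
    ((2:ℂ) ^ ((2*n+2*L : ℝ) : ℂ) * Complex.Gamma (((N:ℝ)+L+1/2 : ℝ) : ℂ) *
      Complex.Gamma ((n-(N:ℝ) : ℝ) : ℂ) * Complex.Gamma ((n+L+1/2 : ℝ) : ℂ)))

/-- The prefactor `III_N(z,w)` of Lemma 3.4. -/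
def IIIN (N : ℕ) (n L p : ℝ) (z w : ℂ) : ℂ :=
  (((1+p^2) ^ (-3 : ℝ) : ℝ) : ℂ) * ((((N : ℝ) * dlt N n L p) ^ (-2 : ℝ) : ℝ) : ℂ) *
  zet N n L p z ^ ((2*L-1 : ℝ) : ℂ) *
  (1 + zet N n L p z ^ 2) ^ ((-(n+L+1/2) : ℝ) : ℂ) *
  ((Real.pi : ℂ) * Complex.Gamma ((2*n+2*L+2 : ℝ) : ℂ) /
    ((2:ℂ) ^ ((2*n+2*L : ℝ) : ℂ) * Complex.Gamma ((n+1/2 : ℝ) : ℂ) *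
      Complex.Gamma ((L : ℝ) : ℂ) * Complex.Gamma ((n+L+1/2 : ℝ) : ℂ)))

open Asymptotics Topology

/-!
Put `M = n + L`. By Stirling's formula, `II_N` and `III_N` equal `exp (M φ_θ(ζ))` times a factor
that converges, where `φ_θ(u) = H(θ) + 2θ log u - log (1 + u²)`, `H` is the binary entropy, and
`θ` is the ratio `(N + L) / M` for `II_N` and `L / M` for `III_N` (which vanishes when `L = 0`).
With `σ = p² / (1 + p²)`, `φ_θ(p)` is minus the relative entropy of the Bernoulli law of parameter
`θ` with respect to that of parameter `σ`. Hence it is negative, forcing exponential decay, unless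
`σ = θ`, that is, unless `p` is the corresponding radius. In that case `p` is a nondegenerate saddle
point of `φ_θ`, and the second-order Taylor expansion at distance `O(M^(-1/2))` produces
the Gaussian `exp (-2z²)`.

For `I_N`, the identity `(1 + ζ²)(1 + η²) = (1 + ζη)² + (ζ - η)²` reduces the powers to
`(1 + t)^(-(M - 1/2))` with `t = ((ζ - η) / (1 + ζη))²`, and `M t` tends to `(z - w)²`.
-/

section Landau

variable {ι : Type*} {l : Filter ι} {h : ι → ℝ}

lemma isBigO_comp_sub {𝕜 E F : Type*} [NontriviallyNormedField 𝕜] [NormedAddCommGroup E]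
    [NormedSpace 𝕜 E] [NormedAddCommGroup F] [NormedSpace 𝕜 F] {g : E → F} {u : ι → E} {x₀ : E}
    (hg : DifferentiableAt 𝕜 g x₀) (hu : (fun i ↦ u i - x₀) =O[l] h) (hh : Tendsto h l (𝓝 0)) :
    (fun i ↦ g (u i) - g x₀) =O[l] h :=
  (hg.isBigO_sub.comp_tendsto (tendsto_sub_nhds_zero_iff.1 (hu.trans_tendsto hh))).trans hu

lemma isBigO_one_of_sub {E : Type*} [SeminormedAddCommGroup E] {f f₀ : ι → E}
    (hf : (fun i ↦ f i - f₀ i) =O[l] h) (hh : Tendsto h l (𝓝 0))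
    (hf₀ : f₀ =O[l] fun _ ↦ (1 : ℝ)) : f =O[l] fun _ ↦ (1 : ℝ) :=
  ((hf.trans (hh.isBigO_one ℝ)).add hf₀).congr_left fun _ ↦ sub_add_cancel _ _

lemma isBigO_mul_sub_mul {𝕜 : Type*} [NormedField 𝕜] {f f₀ g g₀ : ι → 𝕜}
    (hf : (fun i ↦ f i - f₀ i) =O[l] h) (hg : (fun i ↦ g i - g₀ i) =O[l] h)
    (hh : Tendsto h l (𝓝 0)) (hf₀ : f₀ =O[l] fun _ ↦ (1 : ℝ)) (hg₀ : g₀ =O[l] fun _ ↦ (1 : ℝ)) :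
    (fun i ↦ f i * g i - f₀ i * g₀ i) =O[l] h := by
  have hleft : (fun i ↦ f i * (g i - g₀ i)) =O[l] h := by
    simpa using (isBigO_one_of_sub hf hh hf₀).mul hg
  have hright : (fun i ↦ (f i - f₀ i) * g₀ i) =O[l] h := by simpa using hf.mul hg₀
  exact (hleft.add hright).congr_left fun i ↦ by ring

lemma isBigO_cexp_one {E : ι → ℂ} (hE : E =O[l] fun _ ↦ (1 : ℝ)) :
    (fun i ↦ Complex.exp (E i)) =O[l] fun _ ↦ (1 : ℝ) := by
  obtain ⟨C, hC⟩ := hE.bound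
  refine .of_bound (Real.exp C) ?_
  filter_upwards [hC] with i hi
  simp only [norm_one, mul_one] at hi ⊢
  rw [Complex.norm_exp]
  exact Real.exp_le_exp.2 ((Complex.re_le_norm _).trans hi)

lemma isBigO_cexp_sub_cexp {E E₀ : ι → ℂ} (hE : (fun i ↦ E i - E₀ i) =O[l] h)
    (hh : Tendsto h l (𝓝 0)) (hE₀ : E₀ =O[l] fun _ ↦ (1 : ℝ)) :
    (fun i ↦ Complex.exp (E i) - Complex.exp (E₀ i)) =O[l] h := by
  have hratio : (fun i ↦ Complex.exp (E i - E₀ i) - Complex.exp 0) =O[l] h :=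
    isBigO_comp_sub (𝕜 := ℂ) Complex.differentiableAt_exp (by simpa using hE) hh
  refine ((isBigO_cexp_one hE₀).mul hratio).congr (fun i ↦ ?_) fun i ↦ one_mul _
  rw [mul_sub, ← Complex.exp_add, Complex.exp_zero, mul_one, add_sub_cancel]

lemma inv_isBigO_inv_sqrt : (fun x : ℝ ↦ x⁻¹) =O[atTop] fun x ↦ (√x)⁻¹ := by
  refine .of_bound 1 ?_
  filter_upwards [eventually_ge_atTop 1] with x hx
  rw [one_mul, Real.norm_of_nonneg (by positivity), Real.norm_of_nonneg (by positivity)]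
  gcongr
  exact Real.sqrt_le_iff.2 ⟨by linarith, by nlinarith⟩

lemma isBigO_taylor_two {f f' : ℂ → ℂ} {f'' x : ℂ} (hf : ∀ᶠ u in 𝓝 x, HasDerivAt f (f' u) u)
    (hf' : HasDerivAt f' f'' x) :
    (fun u ↦ f u - (f x + f' x * (u - x) + f'' / 2 * (u - x) ^ 2)) =O[𝓝 x]
      fun u ↦ ‖u - x‖ ^ 3 := by
  have hanalytic : AnalyticAt ℂ f x :=
    Complex.analyticAt_iff_eventually_differentiableAt.2 (hf.mono fun _ hu ↦ hu.differentiableAt)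
  have hderiv : deriv f =ᶠ[𝓝 x] f' := hf.mono fun _ hu ↦ hu.deriv
  have hderiv₂ : iteratedDeriv 2 f x = f'' := by
    rw [iteratedDeriv_succ, iteratedDeriv_one, hderiv.deriv_eq, hf'.deriv]
  have htaylor := hanalytic.hasFPowerSeriesAt.isBigO_sub_partialSum_pow 3
  refine (htaylor.comp_tendsto (tendsto_sub_nhds_zero_iff.2 tendsto_id)).congr (fun u ↦ ?_) ?_
  · simp only [FormalMultilinearSeries.partialSum, FormalMultilinearSeries.apply_eq_prod_smul_coeff,
      prod_const, card_univ, Fintype.card_fin, FormalMultilinearSeries.coeff_ofScalars,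
      smul_eq_mul, sum_range_succ, range_one, sum_singleton, pow_zero, iteratedDeriv_zero,
      Nat.factorial_zero, Nat.cast_one, div_one, one_mul, pow_one, iteratedDeriv_one,
      hderiv.eq_of_nhds, Nat.factorial_one, hderiv₂, Nat.factorial_two, Nat.cast_ofNat, id_eq,
      Function.comp_apply, add_sub_cancel, sub_right_inj]
    ring
  · intro u; simp

end Landau

section Logarithm

variable {ι : Type*} {l : Filter ι} {f g : ι → ℂ} {r s : ℝ}

lemma eventually_log_mul (hf : Tendsto f l (𝓝 r)) (hr : 0 < r) (hg : Tendsto g l (𝓝 s))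
    (hs : 0 < s) : ∀ᶠ i in l, Complex.log (f i * g i) = Complex.log (f i) + Complex.log (g i) := by
  have harg {k : ι → ℂ} {t : ℝ} (hk : Tendsto k l (𝓝 t)) (ht : 0 < t) :
      Tendsto (fun i ↦ (k i).arg) l (𝓝 0) := by
    simpa [Complex.arg_ofReal_of_nonneg ht.le, Function.comp_def] using
      ((Complex.continuousAt_arg (Complex.ofReal_mem_slitPlane.2 ht)).tendsto.comp hk)
  have hsum : Tendsto (fun i ↦ (f i).arg + (g i).arg) l (𝓝 0) := by
    simpa using (harg hf hr).add (harg hg hs)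
  filter_upwards [hf.eventually_ne (Complex.ofReal_ne_zero.2 hr.ne'),
    hg.eventually_ne (Complex.ofReal_ne_zero.2 hs.ne'),
    hsum.eventually (Ioc_mem_nhds (neg_lt_zero.2 Real.pi_pos) Real.pi_pos)] with i hfi hgi hi
  exact Complex.log_mul hfi hgi hi

lemma log_one_add_sub_self_isBigO :
    (fun t : ℂ ↦ Complex.log (1 + t) - t) =O[𝓝 0] fun t ↦ t ^ 2 := by
  refine .of_bound 1 ?_
  filter_upwards [Metric.ball_mem_nhds (0 : ℂ) (by norm_num : (0 : ℝ) < 1 / 2)] with t ht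
  rw [mem_ball_zero_iff] at ht
  refine (Complex.norm_log_one_add_sub_self_le (by linarith)).trans ?_
  rw [norm_pow, one_mul]
  have hinv : (1 - ‖t‖)⁻¹ ≤ 2 := by
    rw [inv_le_comm₀ (by linarith) two_pos]; linarith
  nlinarith [sq_nonneg ‖t‖]

end Logarithm

section Stirling

/-- The Stirling approximation `(x - 1/2) log x - x + log (2π) / 2` to `log Γ(x)`. -/
def stirlingLog (x : ℝ) : ℝ :=
  (x - 1 / 2) * Real.log x - x + Real.log (2 * Real.pi) / 2

-- Robbins' bound: `log (stirlingSeq n) - 1 / (12 n)` increases to its limit `log √π`.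
lemma log_stirlingSeq_le {n : ℕ} (hn : n ≠ 0) :
    Real.log (Stirling.stirlingSeq n) ≤ Real.log Real.pi / 2 + 1 / (12 * n) := by
  have hmono : Monotone fun k : ℕ ↦
      Real.log (Stirling.stirlingSeq (k + 1)) - 1 / (12 * ((k : ℝ) + 1)) := by
    refine monotone_nat_of_le_succ fun k ↦ ?_
    have hstep := Stirling.log_stirlingSeq_sdiff_le (k + 1)
    have htele : (1 : ℝ) / (12 * ((k : ℝ) + 1) * ((k : ℝ) + 1 + 1)) =
        1 / (12 * ((k : ℝ) + 1)) - 1 / (12 * ((k : ℝ) + 1 + 1)) := by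
      field_simp; ring
    push_cast at hstep ⊢
    linarith
  have hlim : Tendsto (fun k : ℕ ↦
      Real.log (Stirling.stirlingSeq (k + 1)) - 1 / (12 * ((k : ℝ) + 1)))
      atTop (𝓝 (Real.log √Real.pi - 0)) := by
    refine .sub ((Real.continuousAt_log (by positivity)).tendsto.comp
      ((tendsto_add_atTop_iff_nat 1).2 Stirling.tendsto_stirlingSeq_sqrt_pi)) ?_
    simpa using (tendsto_one_div_add_atTop_nhds_zero_nat (𝕜 := ℝ)).mul_const 12⁻¹
  obtain ⟨k, rfl⟩ := Nat.exists_eq_succ_of_ne_zero hn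
  have hle := hmono.ge_of_tendsto hlim k
  rw [Real.log_sqrt Real.pi_pos.le] at hle
  push_cast
  linarith

lemma abs_log_Gamma_natCast_sub_stirlingLog_le {n : ℕ} (hn : n ≠ 0) :
    |Real.log (Real.Gamma n) - stirlingLog n| ≤ 1 / (12 * n) := by
  have hn' : (0 : ℝ) < n := by positivity
  have hfact : Real.log (n.factorial) = Real.log n + Real.log (Real.Gamma n) := by
    rw [← Real.log_mul hn'.ne' (Real.Gamma_pos_of_pos hn').ne', ← Real.Gamma_add_one hn'.ne',
      Real.Gamma_nat_eq_factorial]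
  have hupper := log_stirlingSeq_le hn
  have hlower := Stirling.le_log_factorial_stirling hn
  rw [Stirling.log_stirlingSeq_formula, Real.log_div hn'.ne' (Real.exp_pos 1).ne', Real.log_exp,
    Real.log_mul two_ne_zero hn'.ne'] at hupper
  have hlog2π := Real.log_mul two_ne_zero Real.pi_ne_zero
  have hpos : (0 : ℝ) < 1 / (12 * n) := by positivity
  unfold stirlingLog
  rw [abs_le]
  constructor <;> linarith

lemma abs_stirlingLog_add_sub_le {x s : ℝ} (hx : 1 / 2 ≤ x) (hs₀ : 0 ≤ s) (hs₁ : s ≤ 1) :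
    |stirlingLog (x + s) - (stirlingLog x + s * Real.log x)| ≤ 1 / (2 * x) := by
  have hx₀ : 0 < x := by linarith
  have hxs : 0 < x + s := by linarith
  have hdiff : stirlingLog (x + s) - (stirlingLog x + s * Real.log x) =
      (x + s - 1 / 2) * Real.log ((x + s) / x) - s := by
    rw [Real.log_div hxs.ne' hx₀.ne', stirlingLog, stirlingLog]; ring
  have hupper : Real.log ((x + s) / x) ≤ s / x :=
    (Real.log_le_sub_one_of_pos (by positivity)).trans_eq (by field_simp; ring)
  have hlower : s / (x + s) ≤ Real.log ((x + s) / x) :=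
    le_of_eq_of_le (by field_simp; ring) (Real.one_sub_inv_le_log_of_pos (by positivity))
  have hcoeff : 0 ≤ x + s - 1 / 2 := by linarith
  rw [hdiff, abs_le]
  constructor
  · calc -(1 / (2 * x)) ≤ (x + s - 1 / 2) * (s / (x + s)) - s := by
          field_simp; nlinarith
      _ ≤ _ := by gcongr
  · calc (x + s - 1 / 2) * Real.log ((x + s) / x) - s ≤ (x + s - 1 / 2) * (s / x) - s := by gcongr
      _ ≤ 1 / (2 * x) := by field_simp; nlinarith

-- Log-convexity pins `log Γ` between its chords at consecutive integers.
lemma abs_log_Gamma_natCast_add_sub_le {n : ℕ} {s : ℝ} (hn : 2 ≤ n) (hs₀ : 0 ≤ s) (hs₁ : s ≤ 1) :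
    |Real.log (Real.Gamma (n + s)) - (Real.log (Real.Gamma n) + s * Real.log n)| ≤ 2 / n := by
  rcases hs₀.eq_or_lt with rfl | hs
  · simp only [add_zero, zero_mul, sub_self, abs_zero]; positivity
  have hn' : (2 : ℝ) ≤ n := by exact_mod_cast hn
  have hfeq : ∀ {y : ℝ}, 0 < y →
      (Real.log ∘ Real.Gamma) (y + 1) = (Real.log ∘ Real.Gamma) y + Real.log y := fun {y} hy ↦ by
    rw [Function.comp_apply, Real.Gamma_add_one hy.ne',
      Real.log_mul hy.ne' (Real.Gamma_pos_of_pos hy).ne', add_comm, Function.comp_apply]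
  have hupper := Real.BohrMollerup.f_add_nat_le Real.convexOn_log_Gamma hfeq
    (by lia : n ≠ 0) hs hs₁
  have hlower := Real.BohrMollerup.f_add_nat_ge Real.convexOn_log_Gamma hfeq hn hs
  have hlog : Real.log n - Real.log (n - 1) ≤ 2 / n := by
    rw [← Real.log_div (by linarith) (by linarith)]
    refine (Real.log_le_sub_one_of_pos (div_pos (by linarith) (by linarith))).trans ?_
    rw [div_sub_one (by linarith), div_le_div_iff₀ (by linarith) (by linarith)]
    linarith
  have hlog_nonneg : 0 ≤ Real.log n - Real.log (n - 1) :=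
    sub_nonneg.2 (Real.log_le_log (by linarith) (by linarith))
  simp only [Function.comp_apply] at hupper hlower
  rw [abs_le]
  constructor <;> nlinarith

lemma log_Gamma_sub_stirlingLog_isBigO :
    (fun x : ℝ ↦ Real.log (Real.Gamma x) - stirlingLog x) =O[atTop] fun x ↦ x⁻¹ := by
  refine .of_bound 6 ?_
  filter_upwards [eventually_ge_atTop 2] with x hx
  set n := ⌊x⌋₊
  set s := x - n
  have hn : 2 ≤ n := Nat.le_floor (by exact_mod_cast hx)
  have hn' : (2 : ℝ) ≤ n := by exact_mod_cast hn
  have hs₀ : 0 ≤ s := sub_nonneg.2 (Nat.floor_le (by linarith))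
  have hs₁ : s ≤ 1 := by linarith [Nat.lt_floor_add_one x]
  have hx_eq : x = n + s := by ring
  have hnat := abs_log_Gamma_natCast_sub_stirlingLog_le (by lia : n ≠ 0)
  have hGamma := abs_log_Gamma_natCast_add_sub_le hn hs₀ hs₁
  have hstirling := abs_stirlingLog_add_sub_le (by linarith : (1 / 2 : ℝ) ≤ n) hs₀ hs₁
  have hsum : (1 : ℝ) / (12 * n) + 1 / (2 * n) + 2 / n ≤ 6 * x⁻¹ := by
    rw [← div_eq_mul_inv, le_div_iff₀ (by linarith)]
    field_simp
    linarith
  rw [Real.norm_of_nonneg (by positivity : 0 ≤ x⁻¹), Real.norm_eq_abs]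
  refine le_trans ?_ hsum
  rw [← hx_eq] at hGamma hstirling
  rw [abs_le] at *
  constructor <;> linarith

lemma log_Gamma_add_isBigO {s : ℝ} (hs₀ : 0 ≤ s) (hs₁ : s ≤ 1) :
    (fun x : ℝ ↦ Real.log (Real.Gamma (x + s)) - (stirlingLog x + s * Real.log x))
      =O[atTop] fun x ↦ x⁻¹ := by
  have hGamma : (fun x : ℝ ↦ Real.log (Real.Gamma (x + s)) - stirlingLog (x + s))
      =O[atTop] fun x ↦ x⁻¹ := by
    refine (log_Gamma_sub_stirlingLog_isBigO.comp_tendsto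
      (tendsto_atTop_add_const_right _ s tendsto_id)).trans (.of_bound 1 ?_)
    filter_upwards [eventually_gt_atTop 0] with x hx
    rw [one_mul, Function.comp_apply, id, Real.norm_of_nonneg (by positivity),
      Real.norm_of_nonneg (by positivity)]
    gcongr
    linarith
  have hstirling : (fun x : ℝ ↦ stirlingLog (x + s) - (stirlingLog x + s * Real.log x))
      =O[atTop] fun x ↦ x⁻¹ := by
    refine .of_bound (1 / 2) ?_
    filter_upwards [eventually_ge_atTop (1 / 2)] with x hx
    rw [Real.norm_of_nonneg (by positivity : 0 ≤ x⁻¹), Real.norm_eq_abs]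
    exact (abs_stirlingLog_add_sub_le hx hs₀ hs₁).trans_eq (by field_simp)
  exact (hGamma.add hstirling).congr_left fun x ↦ by ring

end Stirling

section GammaRatio

/-- The Gamma quotient occurring in `II_N` (with `X = N + L`, `Y = n - N`) and in `III_N`
(with `X = n`, `Y = L`). -/
def gammaRatio (X Y : ℝ) : ℝ :=
  Real.pi * Real.Gamma (2 * (X + Y) + 2) /
    ((2 : ℝ) ^ (2 * (X + Y)) * Real.Gamma (X + 1 / 2) * Real.Gamma Y * Real.Gamma (X + Y + 1 / 2))

lemma gammaRatio_eq {X Y : ℝ} (hXY : 0 < X + Y) :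
    gammaRatio X Y = √Real.pi * (2 * (X + Y) + 1) * Real.Gamma (X + Y + 1) /
      (Real.Gamma (X + 1 / 2) * Real.Gamma Y) := by
  have hdup := Real.Gamma_mul_Gamma_add_half (X + Y + 1 / 2)
  rw [add_assoc (X + Y), add_halves, show 2 * (X + Y + 1 / 2) = 2 * (X + Y) + 1 by ring,
    show 1 - (2 * (X + Y) + 1) = -(2 * (X + Y)) by ring, Real.rpow_neg zero_le_two] at hdup
  have hrec : Real.Gamma (2 * (X + Y) + 2) =
      (2 * (X + Y) + 1) * Real.Gamma (2 * (X + Y) + 1) := by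
    rw [← Real.Gamma_add_one (by positivity)]; ring_nf
  have hpow : (2 : ℝ) ^ (2 * (X + Y)) ≠ 0 := by positivity
  have hGamma₁ : Real.Gamma (2 * (X + Y) + 1) =
      Real.Gamma (X + Y + 1 / 2) * Real.Gamma (X + Y + 1) * (2 : ℝ) ^ (2 * (X + Y)) / √Real.pi := by
    rw [hdup]; field_simp
  rw [gammaRatio, hrec, hGamma₁]
  nth_rw 1 [← Real.mul_self_sqrt Real.pi_pos.le]
  field_simp

lemma log_gammaRatio {X Y : ℝ} (hX : 0 < X) (hY : 0 < Y) :
    Real.log (gammaRatio X Y) = Real.log Real.pi / 2 + Real.log (2 * (X + Y) + 1) +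
      Real.log (Real.Gamma (X + Y + 1)) - Real.log (Real.Gamma (X + 1 / 2)) -
      Real.log (Real.Gamma Y) := by
  rw [gammaRatio_eq (by positivity), Real.log_div (by positivity) (by positivity),
    Real.log_mul (by positivity) (by positivity), Real.log_mul (by positivity) (by positivity),
    Real.log_mul (by positivity) (by positivity), Real.log_sqrt Real.pi_pos.le]
  ring

lemma gammaRatio_pos {X Y : ℝ} (hX : 0 < X) (hY : 0 < Y) : 0 < gammaRatio X Y := by
  rw [gammaRatio_eq (by positivity)]
  positivity

lemma log_two_mul_add_one_sub_isBigO :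
    (fun x : ℝ ↦ Real.log (2 * x + 1) - (Real.log 2 + Real.log x)) =O[atTop] fun x ↦ x⁻¹ := by
  refine .of_bound 1 ?_
  filter_upwards [eventually_gt_atTop 0] with x hx
  rw [← Real.log_mul two_ne_zero hx.ne', ← Real.log_div (by positivity) (by positivity),
    Real.norm_of_nonneg (Real.log_nonneg ((one_le_div (by positivity)).2 (by linarith))),
    Real.norm_of_nonneg (by positivity)]
  refine (Real.log_le_sub_one_of_pos (by positivity)).trans ?_
  field_simp
  norm_num

lemma isBigO_inv_comp_const_mul {f : ℝ → ℝ} (hf : f =O[atTop] fun x ↦ x⁻¹) {c : ℝ} (hc : 0 < c) :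
    (fun x ↦ f (c * x)) =O[atTop] fun x ↦ x⁻¹ :=
  (hf.comp_tendsto (tendsto_id.const_mul_atTop hc)).trans <|
    (isBigO_const_mul_self c⁻¹ _ _).congr_left fun x ↦ by simp [mul_comm]

lemma log_gammaRatio_isBigO {θ : ℝ} (hθ₀ : 0 < θ) (hθ₁ : θ < 1) :
    (fun M : ℝ ↦ Real.log (gammaRatio (θ * M) ((1 - θ) * M)) -
      (2 * Real.log M + M * Real.binEntropy θ + Real.log (2 * (1 - θ)) / 2))
      =O[atTop] fun M ↦ M⁻¹ := by
  have hτ : 0 < 1 - θ := by linarith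
  have hsum := log_Gamma_add_isBigO zero_le_one le_rfl
  have hX := isBigO_inv_comp_const_mul
    (log_Gamma_add_isBigO (s := 1 / 2) (by norm_num) (by norm_num)) hθ₀
  have hY := isBigO_inv_comp_const_mul log_Gamma_sub_stirlingLog_isBigO hτ
  refine (((log_two_mul_add_one_sub_isBigO.add hsum).sub hX).sub hY).congr' ?_ .rfl
  filter_upwards [eventually_gt_atTop 0] with M hM
  have hM_eq : θ * M + (1 - θ) * M = M := by ring
  rw [log_gammaRatio (by positivity) (by positivity), hM_eq]
  simp only [stirlingLog, Real.binEntropy, Real.log_inv]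
  rw [Real.log_mul two_ne_zero Real.pi_ne_zero, Real.log_mul two_ne_zero hτ.ne',
    Real.log_mul hθ₀.ne' hM.ne', Real.log_mul hτ.ne' hM.ne']
  ring

/-- The Gamma quotient at `X = θ M`, `Y = (1 - θ) M`, divided by its growth `M² exp (M H(θ))`,
where `H` is the binary entropy. -/
def normGammaRatio (θ M : ℝ) : ℝ :=
  gammaRatio (θ * M) ((1 - θ) * M) / (M ^ 2 * Real.exp (M * Real.binEntropy θ))

lemma normGammaRatio_sub_isBigO {θ : ℝ} (hθ₀ : 0 < θ) (hθ₁ : θ < 1) :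
    (fun M : ℝ ↦ normGammaRatio θ M - √(2 * (1 - θ))) =O[atTop] fun M ↦ M⁻¹ := by
  have hexp_half : Real.exp (Real.log (2 * (1 - θ)) / 2) = √(2 * (1 - θ)) := by
    rw [← Real.log_sqrt (by positivity), Real.exp_log (by positivity)]
  have hlog : (fun M : ℝ ↦ (Real.log (gammaRatio (θ * M) ((1 - θ) * M)) -
      (2 * Real.log M + M * Real.binEntropy θ)) - Real.log (2 * (1 - θ)) / 2)
      =O[atTop] fun M ↦ M⁻¹ :=
    (log_gammaRatio_isBigO hθ₀ hθ₁).congr_left fun M ↦ by ring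
  refine (isBigO_comp_sub (𝕜 := ℝ) Real.differentiableAt_exp hlog tendsto_inv_atTop_zero).congr'
    ?_ .rfl
  filter_upwards [eventually_gt_atTop 0] with M hM
  rw [hexp_half, Real.exp_sub, Real.exp_log (gammaRatio_pos (by positivity) (by positivity)),
    Real.exp_add, two_mul, Real.exp_add, Real.exp_log hM, ← sq, normGammaRatio]

end GammaRatio

section Phase

/-- The exponential rate of the edge terms: the modulus of `exp (M * phase θ u)` governs the
size of `II_N` and `III_N` at `ζ = u`, with `M = n + L` and `θ M = N + L` or `θ M = L`. -/
def phase (θ : ℝ) (u : ℂ) : ℂ :=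
  Real.binEntropy θ + 2 * θ * Complex.log u - Complex.log (1 + u ^ 2)

lemma binEntropy_lt_crossEntropy {θ σ : ℝ} (hθ₀ : 0 < θ) (hθ₁ : θ < 1) (hσ₀ : 0 < σ) (hσ₁ : σ < 1)
    (hne : σ ≠ θ) : Real.binEntropy θ < θ * Real.log σ⁻¹ + (1 - θ) * Real.log (1 - σ)⁻¹ := by
  have hτ : 0 < 1 - θ := by linarith
  have hρ : 0 < 1 - σ := by linarith
  have hfirst : Real.log (σ / θ) < σ / θ - 1 :=
    Real.log_lt_sub_one_of_pos (by positivity) fun h ↦ hne ((div_eq_one_iff_eq hθ₀.ne').1 h)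
  have hsecond : Real.log ((1 - σ) / (1 - θ)) ≤ (1 - σ) / (1 - θ) - 1 :=
    Real.log_le_sub_one_of_pos (by positivity)
  rw [Real.log_div hσ₀.ne' hθ₀.ne', ← mul_lt_mul_iff_right₀ hθ₀] at hfirst
  rw [Real.log_div hρ.ne' hτ.ne', ← mul_le_mul_iff_right₀ hτ] at hsecond
  have hmass : θ * (σ / θ - 1) + (1 - θ) * ((1 - σ) / (1 - θ) - 1) = 0 := by
    field_simp; ring
  simp only [Real.binEntropy, Real.log_inv]
  linarith

variable {p : ℝ}

lemma phase_ofReal (hp : 0 < p) (θ : ℝ) :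
    phase θ p = ((Real.binEntropy θ - (θ * Real.log (p ^ 2 / (1 + p ^ 2))⁻¹ +
      (1 - θ) * Real.log (1 - p ^ 2 / (1 + p ^ 2))⁻¹) : ℝ) : ℂ) := by
  have hpp : 0 < 1 + p ^ 2 := by positivity
  have hσ : 1 - p ^ 2 / (1 + p ^ 2) = (1 + p ^ 2)⁻¹ := by field_simp; ring
  rw [hσ, inv_inv, Real.log_inv, Real.log_div (by positivity) hpp.ne', Real.log_pow, phase,
    ← Complex.ofReal_log hp.le, ← Complex.ofReal_pow, ← Complex.ofReal_one, ← Complex.ofReal_add,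
    ← Complex.ofReal_log hpp.le]
  push_cast
  ring

lemma phase_critical (hp : 0 < p) : phase (p ^ 2 / (1 + p ^ 2)) p = 0 := by
  rw [phase_ofReal hp, Real.binEntropy, sub_self, Complex.ofReal_zero]

lemma re_phase_neg {θ : ℝ} (hp : 0 < p) (hθ₀ : 0 < θ) (hθ₁ : θ < 1)
    (hne : p ^ 2 / (1 + p ^ 2) ≠ θ) : (phase θ p).re < 0 := by
  rw [phase_ofReal hp, Complex.ofReal_re, sub_neg]
  exact binEntropy_lt_crossEntropy hθ₀ hθ₁ (by positivity)
    ((div_lt_one (by positivity)).2 (by linarith)) hne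

lemma hasDerivAt_phase (θ : ℝ) {u : ℂ} (hu : u ∈ Complex.slitPlane)
    (hu' : 1 + u ^ 2 ∈ Complex.slitPlane) :
    HasDerivAt (phase θ) (2 * θ * u⁻¹ - 2 * u / (1 + u ^ 2)) u := by
  have hsq : HasDerivAt (fun v : ℂ ↦ 1 + v ^ 2) (2 * u) u := by
    simpa using (hasDerivAt_pow 2 u).const_add 1
  exact (((Complex.hasDerivAt_log hu).const_mul (2 * θ : ℂ)).const_add _).sub (hsq.clog hu')

lemma ofReal_mem_slitPlane_and_one_add_sq (hp : 0 < p) :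
    (p : ℂ) ∈ Complex.slitPlane ∧ 1 + (p : ℂ) ^ 2 ∈ Complex.slitPlane := by
  refine ⟨Complex.ofReal_mem_slitPlane.2 hp, ?_⟩
  rw [← Complex.ofReal_pow, ← Complex.ofReal_one, ← Complex.ofReal_add]
  exact Complex.ofReal_mem_slitPlane.2 (by positivity)

lemma eventually_hasDerivAt_phase (hp : 0 < p) (θ : ℝ) : ∀ᶠ u in 𝓝 (p : ℂ),
    HasDerivAt (phase θ) (2 * θ * u⁻¹ - 2 * u / (1 + u ^ 2)) u := by
  obtain ⟨hp₁, hp₂⟩ := ofReal_mem_slitPlane_and_one_add_sq hp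
  have hsq : ContinuousAt (fun u : ℂ ↦ 1 + u ^ 2) p := by fun_prop
  filter_upwards [Complex.isOpen_slitPlane.mem_nhds hp₁,
    hsq (Complex.isOpen_slitPlane.mem_nhds hp₂)] with u hu hu'
  exact hasDerivAt_phase θ hu hu'

lemma phase_critical_taylor (hp : 0 < p) :
    (fun u : ℂ ↦ phase (p ^ 2 / (1 + p ^ 2)) u + 2 * ((u - p) / (1 + p ^ 2)) ^ 2)
      =O[𝓝 (p : ℂ)] fun u ↦ ‖u - p‖ ^ 3 := by
  have hp' : (p : ℂ) ≠ 0 := Complex.ofReal_ne_zero.2 hp.ne'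
  have hpp : 1 + (p : ℂ) ^ 2 ≠ 0 :=
    Complex.slitPlane_ne_zero (ofReal_mem_slitPlane_and_one_add_sq hp).2
  have hderiv₂ : HasDerivAt
      (fun u : ℂ ↦ 2 * ((p ^ 2 / (1 + p ^ 2) : ℝ) : ℂ) * u⁻¹ - 2 * u / (1 + u ^ 2))
      (-4 / (1 + (p : ℂ) ^ 2) ^ 2) p := by
    have hsq : HasDerivAt (fun v : ℂ ↦ 1 + v ^ 2) (2 * (p : ℂ)) (p : ℂ) := by
      simpa using (hasDerivAt_pow 2 (p : ℂ)).const_add 1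
    refine (((hasDerivAt_inv hp').const_mul (2 * ((p ^ 2 / (1 + p ^ 2) : ℝ) : ℂ))).sub
      (((hasDerivAt_id' (p : ℂ)).const_mul 2).div hsq hpp)).congr_deriv ?_
    push_cast
    field_simp
    ring
  refine (isBigO_taylor_two (eventually_hasDerivAt_phase hp _) hderiv₂).congr_left fun u ↦ ?_
  rw [phase_critical hp]
  push_cast
  field_simp
  ring

end Phase

section Zoom

/-- The zooming point `ζ = p + z / √(Nδ)`, expressed through `M = n + L`. -/
def zoom (p M : ℝ) (z : ℂ) : ℂ := p + (1 + p ^ 2) * z / √M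

variable {ι : Type*} {l : Filter ι} {M : ι → ℝ} {z : ι → ℂ} {p : ℝ}

lemma tendsto_inv_sqrt (hM : Tendsto M l atTop) : Tendsto (fun i ↦ (√(M i))⁻¹) l (𝓝 0) :=
  tendsto_inv_atTop_zero.comp (Real.tendsto_sqrt_atTop.comp hM)

lemma zoom_sub_isBigO (p : ℝ) (M : ι → ℝ) (hz : z =O[l] fun _ ↦ (1 : ℝ)) :
    (fun i ↦ zoom p (M i) (z i) - p) =O[l] fun i ↦ (√(M i))⁻¹ := by
  have hinv : (fun i ↦ (((√(M i))⁻¹ : ℝ) : ℂ)) =O[l] fun i ↦ (√(M i))⁻¹ :=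
    .of_bound 1 (.of_forall fun i ↦ by rw [Complex.norm_real, one_mul])
  refine ((hz.const_mul_left (1 + (p : ℂ) ^ 2)).mul hinv).congr (fun i ↦ ?_) fun i ↦ one_mul _
  rw [zoom, add_sub_cancel_left, Complex.ofReal_inv, div_eq_mul_inv]

lemma tendsto_zoom (p : ℝ) (hM : Tendsto M l atTop) (hz : z =O[l] fun _ ↦ (1 : ℝ)) :
    Tendsto (fun i ↦ zoom p (M i) (z i)) l (𝓝 p) :=
  tendsto_sub_nhds_zero_iff.1 ((zoom_sub_isBigO p M hz).trans_tendsto (tendsto_inv_sqrt hM))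

lemma mul_phase_zoom_isBigO (hp : 0 < p) (hM : Tendsto M l atTop)
    (hz : z =O[l] fun _ ↦ (1 : ℝ)) :
    (fun i ↦ M i * phase (p ^ 2 / (1 + p ^ 2)) (zoom p (M i) (z i)) - -2 * z i ^ 2)
      =O[l] fun i ↦ (√(M i))⁻¹ := by
  have htaylor := ((phase_critical_taylor hp).comp_tendsto (tendsto_zoom p hM hz)).trans
    ((zoom_sub_isBigO p M hz).norm_left.pow 3)
  have hM_self : (fun i ↦ (M i : ℂ)) =O[l] M :=
    .of_bound 1 (.of_forall fun i ↦ by rw [Complex.norm_real, one_mul])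
  refine (hM_self.mul htaylor).congr' ?_ ?_
  all_goals filter_upwards [hM.eventually_gt_atTop 0] with i hi
  · have hsqrt : ((√(M i) : ℝ) : ℂ) ^ 2 = M i := by
      rw [← Complex.ofReal_pow, Real.sq_sqrt hi.le]
    have hsqrt' : ((√(M i) : ℝ) : ℂ) ≠ 0 := Complex.ofReal_ne_zero.2 (Real.sqrt_pos.2 hi).ne'
    have hpp : 1 + (p : ℂ) ^ 2 ≠ 0 :=
      Complex.slitPlane_ne_zero (ofReal_mem_slitPlane_and_one_add_sq hp).2
    simp only [Function.comp_apply, zoom, add_sub_cancel_left]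
    rw [← hsqrt]
    field_simp
    ring
  · have hsqrt : M i = √(M i) ^ 2 := (Real.sq_sqrt hi.le).symm
    have hsqrt' : √(M i) ≠ 0 := (Real.sqrt_pos.2 hi).ne'
    rw [inv_pow]
    nth_rw 1 [hsqrt]
    field_simp

lemma cexp_mul_phase_zoom_sub_isBigO (hp : 0 < p) (hM : Tendsto M l atTop)
    (hz : z =O[l] fun _ ↦ (1 : ℝ)) :
    (fun i ↦ Complex.exp (M i * phase (p ^ 2 / (1 + p ^ 2)) (zoom p (M i) (z i))) -
      Complex.exp (-2 * z i ^ 2)) =O[l] fun i ↦ (√(M i))⁻¹ :=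
  isBigO_cexp_sub_cexp (mul_phase_zoom_isBigO hp hM hz) (tendsto_inv_sqrt hM)
    (by simpa using (hz.pow 2).const_mul_left (-2))

lemma cexp_mul_phase_zoom_isBigO {θ c : ℝ} (hp : 0 < p) (hM : Tendsto M l atTop)
    (hz : z =O[l] fun _ ↦ (1 : ℝ)) (hc : (phase θ p).re < -c) :
    (fun i ↦ Complex.exp (M i * phase θ (zoom p (M i) (z i)))) =O[l]
      fun i ↦ Real.exp (-c * M i) := by
  have hcont : ContinuousAt (fun u ↦ (phase θ u).re) p :=
    Complex.continuous_re.continuousAt.comp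
      (eventually_hasDerivAt_phase hp θ).self_of_nhds.continuousAt
  refine .of_bound 1 ?_
  filter_upwards [hM.eventually_ge_atTop 0,
    (hcont.tendsto.comp (tendsto_zoom p hM hz)).eventually_lt_const hc] with i hi hre
  rw [one_mul, Complex.norm_exp, Real.norm_of_nonneg (Real.exp_pos _).le, Complex.re_ofReal_mul,
    mul_comm]
  gcongr
  exact hre.le

end Zoom

section Prefactors

/-- The subexponential factor common to `II_N` and `III_N` at `ζ = u`, up to the normalization
of the Gamma quotient (and one power of `ζ` in `III_N`). -/
def edgeFactor (p : ℝ) (u : ℂ) : ℂ :=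
  (1 + p ^ 2) * (1 + u ^ 2) ^ ((-(1 / 2) : ℝ) : ℂ)

lemma differentiableAt_edgeFactor {p : ℝ} (hp : 0 < p) : DifferentiableAt ℂ (edgeFactor p) p := by
  have hbase : DifferentiableAt ℂ (fun u : ℂ ↦ 1 + u ^ 2) p := by fun_prop
  exact (hbase.cpow_const (ofReal_mem_slitPlane_and_one_add_sq hp).2).const_mul _

lemma edgeFactor_self (p : ℝ) : edgeFactor p p = √(1 + p ^ 2) := by
  have hpow : (1 + (p : ℂ) ^ 2) ^ ((-(1 / 2) : ℝ) : ℂ) = ((√(1 + p ^ 2))⁻¹ : ℝ) := by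
    rw [Real.sqrt_eq_rpow, ← Real.rpow_neg (by positivity), Complex.ofReal_cpow (by positivity)]
    push_cast
    rfl
  have hreal : (1 + p ^ 2) * (√(1 + p ^ 2))⁻¹ = √(1 + p ^ 2) := by
    rw [← div_eq_mul_inv, Real.div_sqrt]
  rw [edgeFactor, hpow]
  exact_mod_cast congrArg (fun x : ℝ ↦ (x : ℂ)) hreal

variable {N : ℕ} {n L p : ℝ}

lemma natCast_mul_dlt (hN : N ≠ 0) (n L p : ℝ) : N * dlt N n L p = (n + L) / (1 + p ^ 2) ^ 2 := by
  rw [dlt, Real.rpow_neg (by positivity), Real.rpow_two]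
  field_simp

lemma zet_eq_zoom (hN : N ≠ 0) (n L p : ℝ) (z : ℂ) : zet N n L p z = zoom p (n + L) z := by
  rw [zet, zoom, sc, natCast_mul_dlt hN, Real.sqrt_div' _ (by positivity),
    Real.sqrt_sq (by positivity), Complex.ofReal_div, div_div_eq_mul_div]
  push_cast
  ring

lemma common_factor_eq (hN : N ≠ 0) (n L p : ℝ) :
    (((1 + p ^ 2) ^ (-3 : ℝ) : ℝ) : ℂ) * (((N * dlt N n L p) ^ (-2 : ℝ) : ℝ) : ℂ) =
      (1 + p ^ 2) / (n + L) ^ 2 := by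
  have hreal : (1 + p ^ 2) ^ (-3 : ℝ) * (N * dlt N n L p) ^ (-2 : ℝ) =
      (1 + p ^ 2) / (n + L) ^ 2 := by
    rw [natCast_mul_dlt hN, show (-3 : ℝ) = (-3 : ℤ) by norm_num,
      show (-2 : ℝ) = (-2 : ℤ) by norm_num, Real.rpow_intCast, Real.rpow_intCast]
    simp only [zpow_neg, zpow_ofNat, div_pow, inv_div]
    field_simp
  exact_mod_cast congrArg (fun x : ℝ ↦ (x : ℂ)) hreal

lemma ofReal_gammaRatio {X Y : ℝ} (h : X + Y = n + L) :
    (gammaRatio X Y : ℂ) = Real.pi * Complex.Gamma ((2 * n + 2 * L + 2 : ℝ) : ℂ) /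
      ((2 : ℂ) ^ ((2 * n + 2 * L : ℝ) : ℂ) * Complex.Gamma ((X + 1 / 2 : ℝ) : ℂ) *
        Complex.Gamma (Y : ℂ) * Complex.Gamma ((n + L + 1 / 2 : ℝ) : ℂ)) := by
  have htwo : (2 : ℂ) ^ ((2 * n + 2 * L : ℝ) : ℂ) = ((2 : ℝ) ^ (2 * n + 2 * L) : ℝ) := by
    rw [Complex.ofReal_cpow zero_le_two, Complex.ofReal_ofNat]
  rw [htwo, gammaRatio, h, mul_add]
  simp only [Complex.Gamma_ofReal]
  push_cast
  rfl

lemma cexp_mul_phase {u : ℂ} (hu : u ≠ 0) (hu' : 1 + u ^ 2 ≠ 0) (θ M : ℝ) :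
    Complex.exp (M * phase θ u) = Real.exp (M * Real.binEntropy θ) *
      (u ^ ((2 * (θ * M) : ℝ) : ℂ) * (1 + u ^ 2) ^ ((-M : ℝ) : ℂ)) := by
  rw [Complex.cpow_def_of_ne_zero hu, Complex.cpow_def_of_ne_zero hu', Complex.ofReal_exp,
    ← Complex.exp_add, ← Complex.exp_add, phase]
  push_cast
  ring_nf

variable {θ : ℝ} {z : ℂ}

lemma IIN_eq (hN : N ≠ 0) (hM : n + L ≠ 0) (hθ : N + L = θ * (n + L))
    (hζ : zoom p (n + L) z ≠ 0) (hζ' : 1 + zoom p (n + L) z ^ 2 ≠ 0) (w : ℂ) :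
    IIN N n L p z w = Complex.exp ((n + L : ℝ) * phase θ (zoom p (n + L) z)) *
      (edgeFactor p (zoom p (n + L) z) * normGammaRatio θ (n + L)) := by
  have hτ : n - N = (1 - θ) * (n + L) := by linear_combination -hθ
  have hpow : 2 * (N : ℝ) + 2 * L = 2 * (θ * (n + L)) := by linear_combination 2 * hθ
  have hM' : (n : ℂ) + L ≠ 0 := by exact_mod_cast hM
  have hexp := Complex.exp_ne_zero ((n + L) * Real.binEntropy θ)
  rw [IIN, zet_eq_zoom hN, common_factor_eq hN, ← ofReal_gammaRatio (by ring),
    cexp_mul_phase hζ hζ', hpow, normGammaRatio, edgeFactor, hτ, hθ, neg_add,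
    Complex.ofReal_add (-(n + L)), Complex.cpow_add _ _ hζ']
  push_cast
  field_simp

lemma IIIN_eq (hN : N ≠ 0) (hM : n + L ≠ 0) (hθ : L = θ * (n + L))
    (hζ : zoom p (n + L) z ≠ 0) (hζ' : 1 + zoom p (n + L) z ^ 2 ≠ 0) (w : ℂ) :
    IIIN N n L p z w = Complex.exp ((n + L : ℝ) * phase θ (zoom p (n + L) z)) *
      (edgeFactor p (zoom p (n + L) z) * (zoom p (n + L) z)⁻¹ *
        normGammaRatio (1 - θ) (n + L)) := by
  have hX : (1 - θ) * (n + L) = n := by linear_combination hθ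
  have hpow : (2 * L - 1 : ℝ) = 2 * (θ * (n + L)) + (-1 : ℝ) := by linear_combination 2 * hθ
  have hM' : (n : ℂ) + L ≠ 0 := by exact_mod_cast hM
  have hexp := Complex.exp_ne_zero ((n + L) * Real.binEntropy θ)
  rw [IIIN, zet_eq_zoom hN, common_factor_eq hN, ← ofReal_gammaRatio rfl, cexp_mul_phase hζ hζ',
    hpow, normGammaRatio, edgeFactor, sub_sub_cancel, hX, ← hθ, Real.binEntropy_one_sub, neg_add,
    Complex.ofReal_add (-(n + L)), Complex.cpow_add _ _ hζ', Complex.ofReal_add _ (-1),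
    Complex.cpow_add _ _ hζ, Complex.ofReal_neg, Complex.ofReal_one, Complex.cpow_neg_one]
  push_cast
  field_simp

lemma IIIN_eq_zero (N : ℕ) (n p : ℝ) (z w : ℂ) : IIIN N n 0 p z w = 0 := by
  simp [IIIN]

end Prefactors

section EdgeAsymptotics

variable {ι : Type*} {l : Filter ι} {M r : ι → ℝ} {z : ι → ℂ} {g : ℂ → ℂ} {p r₀ : ℝ}

lemma slow_factor_sub_isBigO (hM : Tendsto M l atTop) (hz : z =O[l] fun _ ↦ (1 : ℝ))
    (hg : DifferentiableAt ℂ g p) (hr : (fun i ↦ r i - r₀) =O[l] fun i ↦ (M i)⁻¹) :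
    (fun i ↦ g (zoom p (M i) (z i)) * r i - g p * r₀) =O[l] fun i ↦ (√(M i))⁻¹ := by
  have hr' : (fun i ↦ (r i : ℂ) - r₀) =O[l] fun i ↦ (√(M i))⁻¹ :=
    ((hr.trans (inv_isBigO_inv_sqrt.comp_tendsto hM)).norm_left.congr_left fun i ↦ by
      rw [← Complex.ofReal_sub, Complex.norm_real]).of_norm_left
  have hh := tendsto_inv_sqrt hM
  exact isBigO_mul_sub_mul (isBigO_comp_sub hg (zoom_sub_isBigO p M hz) hh) hr' hh
    (isBigO_const_const _ one_ne_zero l) (isBigO_const_const _ one_ne_zero l)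

lemma critical_edge_isBigO (hp : 0 < p) (hM : Tendsto M l atTop) (hz : z =O[l] fun _ ↦ (1 : ℝ))
    (hg : DifferentiableAt ℂ g p) (hr : (fun i ↦ r i - r₀) =O[l] fun i ↦ (M i)⁻¹) :
    (fun i ↦ Complex.exp (M i * phase (p ^ 2 / (1 + p ^ 2)) (zoom p (M i) (z i))) *
      (g (zoom p (M i) (z i)) * r i) - Complex.exp (-2 * z i ^ 2) * (g p * r₀))
      =O[l] fun i ↦ (√(M i))⁻¹ := by
  have hexp₀ : (fun i ↦ Complex.exp (-2 * z i ^ 2)) =O[l] fun _ ↦ (1 : ℝ) :=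
    isBigO_cexp_one (by simpa using (hz.pow 2).const_mul_left (-2))
  exact isBigO_mul_sub_mul (cexp_mul_phase_zoom_sub_isBigO hp hM hz)
    (slow_factor_sub_isBigO hM hz hg hr) (tendsto_inv_sqrt hM) hexp₀
    (isBigO_const_const _ one_ne_zero l)

lemma noncritical_edge_isBigO {θ : ℝ} (hp : 0 < p) (hθ₀ : 0 < θ) (hθ₁ : θ < 1)
    (hne : p ^ 2 / (1 + p ^ 2) ≠ θ) (hM : Tendsto M l atTop) (hz : z =O[l] fun _ ↦ (1 : ℝ))
    (hg : DifferentiableAt ℂ g p) (hr : (fun i ↦ r i - r₀) =O[l] fun i ↦ (M i)⁻¹) :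
    ∃ c > 0, (fun i ↦ Complex.exp (M i * phase θ (zoom p (M i) (z i))) *
      (g (zoom p (M i) (z i)) * r i)) =O[l] fun i ↦ Real.exp (-c * M i) := by
  have hneg := re_phase_neg hp hθ₀ hθ₁ hne
  refine ⟨-(phase θ p).re / 2, by linarith, ?_⟩
  have hslow := isBigO_one_of_sub (slow_factor_sub_isBigO hM hz hg hr) (tendsto_inv_sqrt hM)
    (isBigO_const_const (g p * r₀) one_ne_zero l)
  simpa using (cexp_mul_phase_zoom_isBigO (c := -(phase θ p).re / 2) hp hM hz (by linarith)).mul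
    hslow

end EdgeAsymptotics

section Edges

variable {ι : Type*} {l : Filter ι} {N : ι → ℕ} {n L : ι → ℝ} {z : ι → ℂ} {p θ : ℝ}

lemma eventually_zoom_ne (hp : 0 < p) {M : ι → ℝ} (hM : Tendsto M l atTop)
    (hz : z =O[l] fun _ ↦ (1 : ℝ)) :
    ∀ᶠ i in l, zoom p (M i) (z i) ≠ 0 ∧ 1 + zoom p (M i) (z i) ^ 2 ≠ 0 := by
  obtain ⟨hp₁, hp₂⟩ := ofReal_mem_slitPlane_and_one_add_sq hp
  have hζ := tendsto_zoom p hM hz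
  exact (hζ.eventually_ne (Complex.slitPlane_ne_zero hp₁)).and
    (((hζ.pow 2).const_add 1).eventually_ne (Complex.slitPlane_ne_zero hp₂))

lemma IIN_eventuallyEq (hp : 0 < p) (hN : ∀ᶠ i in l, N i ≠ 0)
    (hM : Tendsto (fun i ↦ n i + L i) l atTop) (hz : z =O[l] fun _ ↦ (1 : ℝ))
    (hθ : ∀ i, N i + L i = θ * (n i + L i)) (w : ι → ℂ) :
    (fun i ↦ Complex.exp ((n i + L i : ℝ) * phase θ (zoom p (n i + L i) (z i))) *
      (edgeFactor p (zoom p (n i + L i) (z i)) * normGammaRatio θ (n i + L i)))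
      =ᶠ[l] fun i ↦ IIN (N i) (n i) (L i) p (z i) (w i) := by
  filter_upwards [hN, hM.eventually_ne_atTop 0, eventually_zoom_ne hp hM hz] with i hNi hMi hζ
  exact (IIN_eq hNi hMi (hθ i) hζ.1 hζ.2 (w i)).symm

lemma IIIN_eventuallyEq (hp : 0 < p) (hN : ∀ᶠ i in l, N i ≠ 0)
    (hM : Tendsto (fun i ↦ n i + L i) l atTop) (hz : z =O[l] fun _ ↦ (1 : ℝ))
    (hθ : ∀ i, L i = θ * (n i + L i)) (w : ι → ℂ) :
    (fun i ↦ Complex.exp ((n i + L i : ℝ) * phase θ (zoom p (n i + L i) (z i))) *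
      (edgeFactor p (zoom p (n i + L i) (z i)) * (zoom p (n i + L i) (z i))⁻¹ *
        normGammaRatio (1 - θ) (n i + L i)))
      =ᶠ[l] fun i ↦ IIIN (N i) (n i) (L i) p (z i) (w i) := by
  filter_upwards [hN, hM.eventually_ne_atTop 0, eventually_zoom_ne hp hM hz] with i hNi hMi hζ
  exact (IIIN_eq hNi hMi (hθ i) hζ.1 hζ.2 (w i)).symm

lemma IIN_critical_isBigO (hp : 0 < p) (hN : ∀ᶠ i in l, N i ≠ 0)
    (hM : Tendsto (fun i ↦ n i + L i) l atTop) (hz : z =O[l] fun _ ↦ (1 : ℝ))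
    (hθ : ∀ i, N i + L i = p ^ 2 / (1 + p ^ 2) * (n i + L i)) (w : ι → ℂ) :
    (fun i ↦ IIN (N i) (n i) (L i) p (z i) (w i) - (√2 : ℂ) * Complex.exp (-2 * z i ^ 2))
      =O[l] fun i ↦ (√(n i + L i))⁻¹ := by
  have hpp : 0 < 1 + p ^ 2 := by positivity
  have hconst : √(1 + p ^ 2) * √(2 * (1 - p ^ 2 / (1 + p ^ 2))) = √2 := by
    rw [← Real.sqrt_mul hpp.le]
    congr 1
    field_simp
    ring
  have hedge := critical_edge_isBigO hp hM hz (differentiableAt_edgeFactor hp)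
    ((normGammaRatio_sub_isBigO (by positivity)
      ((div_lt_one hpp).2 (lt_one_add _))).comp_tendsto hM)
  refine hedge.congr' ((IIN_eventuallyEq hp hN hM hz hθ w).sub (.of_eq (funext fun i ↦ ?_))) .rfl
  rw [edgeFactor_self, ← hconst]
  push_cast
  ring

lemma IIIN_critical_isBigO (hp : 0 < p) (hN : ∀ᶠ i in l, N i ≠ 0)
    (hM : Tendsto (fun i ↦ n i + L i) l atTop) (hz : z =O[l] fun _ ↦ (1 : ℝ))
    (hθ : ∀ i, L i = p ^ 2 / (1 + p ^ 2) * (n i + L i)) (w : ι → ℂ) :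
    (fun i ↦ IIIN (N i) (n i) (L i) p (z i) (w i) - (√2 : ℂ) * Complex.exp (-2 * z i ^ 2))
      =O[l] fun i ↦ (√(n i + L i))⁻¹ := by
  have hpp : 0 < 1 + p ^ 2 := by positivity
  have hp' : (p : ℂ) ≠ 0 := Complex.ofReal_ne_zero.2 hp.ne'
  have hconst : √(1 + p ^ 2) * p⁻¹ * √(2 * (1 - (1 - p ^ 2 / (1 + p ^ 2)))) = √2 := by
    rw [sub_sub_cancel, Real.sqrt_mul zero_le_two, Real.sqrt_div (by positivity),
      Real.sqrt_sq hp.le]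
    field_simp
  have hedge := critical_edge_isBigO hp hM hz
    ((differentiableAt_edgeFactor hp).mul (differentiableAt_inv hp'))
    ((normGammaRatio_sub_isBigO (sub_pos.2 ((div_lt_one hpp).2 (lt_one_add _)))
      (sub_lt_self _ (by positivity))).comp_tendsto hM)
  refine hedge.congr' ((IIIN_eventuallyEq hp hN hM hz hθ w).sub (.of_eq (funext fun i ↦ ?_))) .rfl
  simp only [Pi.mul_apply, edgeFactor_self, ← hconst]
  push_cast
  ring

lemma IIN_noncritical_isBigO (hp : 0 < p) (hN : ∀ᶠ i in l, N i ≠ 0)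
    (hM : Tendsto (fun i ↦ n i + L i) l atTop) (hz : z =O[l] fun _ ↦ (1 : ℝ))
    (hθ : ∀ i, N i + L i = θ * (n i + L i)) (hθ₀ : 0 < θ) (hθ₁ : θ < 1)
    (hne : p ^ 2 / (1 + p ^ 2) ≠ θ) (w : ι → ℂ) :
    ∃ c > 0, (fun i ↦ IIN (N i) (n i) (L i) p (z i) (w i))
      =O[l] fun i ↦ Real.exp (-c * (n i + L i)) := by
  obtain ⟨c, hc, hbound⟩ := noncritical_edge_isBigO hp hθ₀ hθ₁ hne hM hz
    (differentiableAt_edgeFactor hp) ((normGammaRatio_sub_isBigO hθ₀ hθ₁).comp_tendsto hM)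
  exact ⟨c, hc, hbound.congr' (IIN_eventuallyEq hp hN hM hz hθ w) .rfl⟩

lemma IIIN_noncritical_isBigO (hp : 0 < p) (hN : ∀ᶠ i in l, N i ≠ 0)
    (hM : Tendsto (fun i ↦ n i + L i) l atTop) (hz : z =O[l] fun _ ↦ (1 : ℝ))
    (hθ : ∀ i, L i = θ * (n i + L i)) (hθ₀ : 0 ≤ θ) (hθ₁ : θ < 1)
    (hne : p ^ 2 / (1 + p ^ 2) ≠ θ) (w : ι → ℂ) :
    ∃ c > 0, (fun i ↦ IIIN (N i) (n i) (L i) p (z i) (w i))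
      =O[l] fun i ↦ Real.exp (-c * (n i + L i)) := by
  rcases hθ₀.eq_or_lt with rfl | hθ₀
  · have hL : ∀ i, L i = 0 := fun i ↦ (hθ i).trans (zero_mul _)
    exact ⟨1, one_pos, by simp only [hL, IIIN_eq_zero]; exact isBigO_zero _ _⟩
  obtain ⟨c, hc, hbound⟩ := noncritical_edge_isBigO hp hθ₀ hθ₁ hne hM hz
    ((differentiableAt_edgeFactor hp).mul
      (differentiableAt_inv (Complex.ofReal_ne_zero.2 hp.ne')))
    ((normGammaRatio_sub_isBigO (sub_pos.2 hθ₁) (sub_lt_self _ hθ₀)).comp_tendsto hM)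
  exact ⟨c, hc, hbound.congr' (IIIN_eventuallyEq hp hN hM hz hθ w) .rfl⟩

end Edges

section Bulk

/-- The quantity `tan² (arctan ζ - arctan η)`, which measures the failure of
`(1 + ζ²)(1 + η²) = (1 + ζη)²` in `I_N`. -/
def sqTanDiff (ζ η : ℂ) : ℂ := ((ζ - η) / (1 + ζ * η)) ^ 2

lemma one_add_sq_mul_one_add_sq {ζ η : ℂ} (h : 1 + ζ * η ≠ 0) :
    (1 + ζ ^ 2) * (1 + η ^ 2) = (1 + ζ * η) * (1 + ζ * η) * (1 + sqTanDiff ζ η) := by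
  rw [sqTanDiff]
  field_simp
  ring

lemma IN_eq {N : ℕ} {n L p : ℝ} {z w ζ η : ℂ} (hN : N ≠ 0) (hM : n + L ≠ 0)
    (hζ : zoom p (n + L) z = ζ) (hη : zoom p (n + L) w = η) (h : 1 + ζ * η ≠ 0)
    (ht : 1 + sqTanDiff ζ η ≠ 0)
    (hlog : Complex.log ((1 + ζ * η) * (1 + ζ * η) * (1 + sqTanDiff ζ η)) =
      Complex.log (1 + ζ * η) + Complex.log (1 + ζ * η) + Complex.log (1 + sqTanDiff ζ η)) :
    IN N n L p z w = (1 + p ^ 2) * (1 + ζ ^ 2)⁻¹ * (2 + (n + L)⁻¹ : ℝ) *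
      Complex.exp (-(((n + L : ℝ) - 1 / 2) * Complex.log (1 + sqTanDiff ζ η))) := by
  have hM' : (n : ℂ) + L ≠ 0 := by exact_mod_cast hM
  have hpow : (1 + ζ * η) ^ ((2 * n + 2 * L - 1 : ℝ) : ℂ) *
      ((1 + ζ ^ 2) * (1 + η ^ 2)) ^ ((-(n + L - 1 / 2) : ℝ) : ℂ) =
      Complex.exp (-(((n + L : ℝ) - 1 / 2) * Complex.log (1 + sqTanDiff ζ η))) := by
    rw [one_add_sq_mul_one_add_sq h, Complex.cpow_def_of_ne_zero h,
      Complex.cpow_def_of_ne_zero (mul_ne_zero (mul_ne_zero h h) ht), hlog, ← Complex.exp_add]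
    push_cast
    ring_nf
  rw [IN, zet_eq_zoom hN, zet_eq_zoom hN, common_factor_eq hN, hζ, hη, ← hpow]
  push_cast
  field_simp

variable {ι : Type*} {l : Filter ι} {M : ι → ℝ} {z w : ι → ℂ} {p : ℝ}

lemma isBigO_one_add_zoom_mul_zoom (p : ℝ) (hM : Tendsto M l atTop)
    (hz : z =O[l] fun _ ↦ (1 : ℝ)) (hw : w =O[l] fun _ ↦ (1 : ℝ)) :
    (fun i ↦ ((1 + p ^ 2) / (1 + zoom p (M i) (z i) * zoom p (M i) (w i))) ^ 2 - 1)
      =O[l] fun i ↦ (√(M i))⁻¹ := by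
  have hpp : 1 + (p : ℂ) * p ≠ 0 := by
    rw [← sq]; exact_mod_cast (by positivity : (0 : ℝ) < 1 + p ^ 2).ne'
  have hdiff : DifferentiableAt ℂ (fun q : ℂ × ℂ ↦ ((1 + (p : ℂ) ^ 2) / (1 + q.1 * q.2)) ^ 2)
      ((p : ℂ), (p : ℂ)) := by
    fun_prop (disch := exact hpp)
  refine (isBigO_comp_sub hdiff (u := fun i ↦ (zoom p (M i) (z i), zoom p (M i) (w i)))
    ((zoom_sub_isBigO p M hz).prod_left (zoom_sub_isBigO p M hw))
    (tendsto_inv_sqrt hM)).congr_left fun i ↦ ?_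
  rw [← sq (p : ℂ)] at hpp ⊢
  rw [div_self hpp, one_pow]

lemma mul_sqTanDiff_zoom {m : ℝ} (hm : 0 < m) (p : ℝ) (x y : ℂ) :
    m * sqTanDiff (zoom p m x) (zoom p m y) =
      (x - y) ^ 2 * ((1 + p ^ 2) / (1 + zoom p m x * zoom p m y)) ^ 2 := by
  have hsqrt : ((√m : ℝ) : ℂ) ^ 2 = m := by rw [← Complex.ofReal_pow, Real.sq_sqrt hm.le]
  have hsqrt' : ((√m : ℝ) : ℂ) ≠ 0 := Complex.ofReal_ne_zero.2 (Real.sqrt_pos.2 hm).ne'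
  have hdiff : zoom p m x - zoom p m y = (1 + p ^ 2) * (x - y) / √m := by
    rw [zoom, zoom]; ring
  rw [sqTanDiff, hdiff, ← hsqrt]
  field_simp

lemma mul_sqTanDiff_zoom_sub_isBigO (p : ℝ) (hM : Tendsto M l atTop)
    (hz : z =O[l] fun _ ↦ (1 : ℝ)) (hw : w =O[l] fun _ ↦ (1 : ℝ)) :
    (fun i ↦ M i * sqTanDiff (zoom p (M i) (z i)) (zoom p (M i) (w i)) - (z i - w i) ^ 2)
      =O[l] fun i ↦ (√(M i))⁻¹ := by
  have hsq : (fun i ↦ (z i - w i) ^ 2) =O[l] fun _ ↦ (1 : ℝ) := by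
    simpa using (hz.sub hw).pow 2
  refine (hsq.mul (isBigO_one_add_zoom_mul_zoom p hM hz hw)).congr' ?_ (by simp)
  filter_upwards [hM.eventually_gt_atTop 0] with i hi
  rw [mul_sqTanDiff_zoom hi]
  ring

lemma sqTanDiff_zoom_isBigO (p : ℝ) (hM : Tendsto M l atTop)
    (hz : z =O[l] fun _ ↦ (1 : ℝ)) (hw : w =O[l] fun _ ↦ (1 : ℝ)) :
    (fun i ↦ sqTanDiff (zoom p (M i) (z i)) (zoom p (M i) (w i))) =O[l] fun i ↦ (M i)⁻¹ := by
  have hsq : (fun i ↦ (z i - w i) ^ 2) =O[l] fun _ ↦ (1 : ℝ) := by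
    simpa using (hz.sub hw).pow 2
  have hscaled := isBigO_one_of_sub (mul_sqTanDiff_zoom_sub_isBigO p hM hz hw)
    (tendsto_inv_sqrt hM) hsq
  have hinv : (fun i ↦ ((M i)⁻¹ : ℂ)) =O[l] fun i ↦ (M i)⁻¹ :=
    .of_bound 1 (.of_forall fun i ↦ by rw [← Complex.ofReal_inv, Complex.norm_real, one_mul])
  refine (hinv.mul hscaled).congr' ?_ (by simp)
  filter_upwards [hM.eventually_ne_atTop 0] with i hi
  rw [inv_mul_cancel_left₀ (Complex.ofReal_ne_zero.2 hi)]

lemma mul_log_one_add_sqTanDiff_isBigO (p : ℝ) (hM : Tendsto M l atTop)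
    (hz : z =O[l] fun _ ↦ (1 : ℝ)) (hw : w =O[l] fun _ ↦ (1 : ℝ)) :
    (fun i ↦ (M i - 1 / 2) *
      Complex.log (1 + sqTanDiff (zoom p (M i) (z i)) (zoom p (M i) (w i))) - (z i - w i) ^ 2)
      =O[l] fun i ↦ (√(M i))⁻¹ := by
  set t := fun i ↦ sqTanDiff (zoom p (M i) (z i)) (zoom p (M i) (w i))
  have ht : t =O[l] fun i ↦ (M i)⁻¹ := sqTanDiff_zoom_isBigO p hM hz hw
  have ht₀ : Tendsto t l (𝓝 0) := ht.trans_tendsto (tendsto_inv_atTop_zero.comp hM)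
  have hinv : (fun i ↦ (M i)⁻¹) =O[l] fun i ↦ (√(M i))⁻¹ := inv_isBigO_inv_sqrt.comp_tendsto hM
  have hM_self : (fun i ↦ (M i : ℂ) - 1 / 2) =O[l] M := by
    refine .of_bound 1 ?_
    filter_upwards [hM.eventually_ge_atTop 1] with i hi
    rw [one_mul, show (M i : ℂ) - 1 / 2 = ((M i - 1 / 2 : ℝ) : ℂ) by push_cast; rfl,
      Complex.norm_real, Real.norm_of_nonneg (by linarith), Real.norm_of_nonneg (by linarith)]
    linarith
  have hlog : (fun i ↦ (M i - 1 / 2) * (Complex.log (1 + t i) - t i)) =O[l] fun i ↦ (M i)⁻¹ := by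
    refine (hM_self.mul ((log_one_add_sub_self_isBigO.comp_tendsto ht₀).trans (ht.pow 2))).congr'
      .rfl ?_
    filter_upwards [hM.eventually_ne_atTop 0] with i hi
    field_simp
  have hhalf := ht.const_mul_left (1 / 2)
  exact (((hlog.trans hinv).add (mul_sqTanDiff_zoom_sub_isBigO p hM hz hw)).sub
    (hhalf.trans hinv)).congr_left fun i ↦ by ring

lemma IN_eventuallyEq {N : ι → ℕ} {n L : ι → ℝ} (p : ℝ) (hN : ∀ᶠ i in l, N i ≠ 0)
    (hM : Tendsto (fun i ↦ n i + L i) l atTop) (hz : z =O[l] fun _ ↦ (1 : ℝ))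
    (hw : w =O[l] fun _ ↦ (1 : ℝ)) :
    (fun i ↦ (1 + p ^ 2) * (1 + zoom p (n i + L i) (z i) ^ 2)⁻¹ * (2 + (n i + L i)⁻¹ : ℝ) *
      Complex.exp (-(((n i + L i : ℝ) - 1 / 2) *
        Complex.log (1 + sqTanDiff (zoom p (n i + L i) (z i)) (zoom p (n i + L i) (w i))))))
      =ᶠ[l] fun i ↦ IN (N i) (n i) (L i) p (z i) (w i) := by
  set ζ := fun i ↦ zoom p (n i + L i) (z i)
  set η := fun i ↦ zoom p (n i + L i) (w i)
  have hpp : 0 < 1 + p ^ 2 := by positivity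
  have hx : Tendsto (fun i ↦ 1 + ζ i * η i) l (𝓝 (1 + p ^ 2 : ℝ)) := by
    have hprod := ((tendsto_zoom p hM hz).mul (tendsto_zoom p hM hw)).const_add 1
    rwa [← sq, ← Complex.ofReal_pow, ← Complex.ofReal_one, ← Complex.ofReal_add] at hprod
  have hxx : Tendsto (fun i ↦ (1 + ζ i * η i) * (1 + ζ i * η i)) l
      (𝓝 ((1 + p ^ 2) * (1 + p ^ 2) : ℝ)) := by
    rw [Complex.ofReal_mul]; exact hx.mul hx
  have ht : Tendsto (fun i ↦ 1 + sqTanDiff (ζ i) (η i)) l (𝓝 (1 : ℝ)) := by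
    simpa using ((sqTanDiff_zoom_isBigO p hM hz hw).trans_tendsto
      (tendsto_inv_atTop_zero.comp hM)).const_add 1
  filter_upwards [hN, hM.eventually_ne_atTop 0,
    hx.eventually_ne (Complex.ofReal_ne_zero.2 hpp.ne'),
    ht.eventually_ne (Complex.ofReal_ne_zero.2 one_ne_zero), eventually_log_mul hx hpp hx hpp,
    eventually_log_mul hxx (by positivity) ht one_pos] with i hNi hMi hxi hti hlog hlog'
  rw [IN_eq hNi hMi rfl rfl hxi hti (by rw [hlog', hlog])]

lemma IN_sub_isBigO {N : ι → ℕ} {n L : ι → ℝ} (p : ℝ) (hN : ∀ᶠ i in l, N i ≠ 0)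
    (hM : Tendsto (fun i ↦ n i + L i) l atTop) (hz : z =O[l] fun _ ↦ (1 : ℝ))
    (hw : w =O[l] fun _ ↦ (1 : ℝ)) :
    (fun i ↦ IN (N i) (n i) (L i) p (z i) (w i) - 2 * Complex.exp (-(z i - w i) ^ 2))
      =O[l] fun i ↦ (√(n i + L i))⁻¹ := by
  have hpp : 1 + (p : ℂ) ^ 2 ≠ 0 := by exact_mod_cast (by positivity : (0 : ℝ) < 1 + p ^ 2).ne'
  have hdiff : DifferentiableAt ℂ (fun u : ℂ ↦ (1 + (p : ℂ) ^ 2) * (1 + u ^ 2)⁻¹) p := by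
    fun_prop (disch := exact hpp)
  have hslow := slow_factor_sub_isBigO (r := fun i ↦ 2 + (n i + L i)⁻¹) (r₀ := 2) hM hz hdiff
    (by simpa using isBigO_refl _ _)
  have hE₀ : (fun i ↦ -(z i - w i) ^ 2) =O[l] fun _ ↦ (1 : ℝ) := by
    simpa using ((hz.sub hw).pow 2).neg_left
  have hexp := isBigO_cexp_sub_cexp
    ((mul_log_one_add_sqTanDiff_isBigO p hM hz hw).neg_left.congr_left fun i ↦ neg_sub' _ _)
    (tendsto_inv_sqrt hM) hE₀
  refine (isBigO_mul_sub_mul hslow hexp (tendsto_inv_sqrt hM) (isBigO_const_const _ one_ne_zero l)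
    (isBigO_cexp_one hE₀)).congr'
    ((IN_eventuallyEq p hN hM hz hw).sub (.of_eq (funext fun i ↦ ?_))) .rfl
  rw [mul_inv_cancel₀ hpp, one_mul, Complex.ofReal_ofNat]

end Bulk

section Uniform

lemma eq_sqrt_div_iff {p x y : ℝ} (hp : 0 < p) (hx : 0 ≤ x) (hy : 0 < y) :
    p = √(x / y) ↔ p ^ 2 / (1 + p ^ 2) = x / (x + y) := by
  rw [eq_comm, Real.sqrt_eq_iff_eq_sq (div_nonneg hx hy.le) hp.le, eq_comm, eq_div_iff hy.ne',
    div_eq_div_iff (by positivity) (by positivity)]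
  constructor <;> intro h <;> linarith

lemma exists_forall_norm_le_of_isBigO {X : Type*} {K : Set X} {l : Filter ℕ} {f : ℕ × X → ℂ}
    {g h : ℕ → ℝ} (hf : f =O[l ×ˢ 𝓟 K] fun q ↦ g q.1) (hgh : g =O[l] h) (hh : ∀ N, 0 ≤ h N) :
    ∃ C : ℝ, ∀ᶠ N in l, ∀ q ∈ K, ‖f (N, q)‖ ≤ C * h N := by
  obtain ⟨C, hC⟩ := (hf.trans (hgh.comp_tendsto tendsto_fst)).bound
  refine ⟨C, (eventually_prod_principal_iff.1 hC).mono fun N hN q hq ↦ (hN q hq).trans_eq ?_⟩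
  rw [Function.comp_apply, Real.norm_of_nonneg (hh N)]

lemma isBigO_one_of_isBounded {E X : Type*} [SeminormedAddCommGroup E] {K : Set E}
    (hK : Bornology.IsBounded K) (l : Filter X) :
    (Prod.snd : X × E → E) =O[l ×ˢ 𝓟 K] fun _ ↦ (1 : ℝ) := by
  obtain ⟨R, hR⟩ := hK.exists_norm_le
  refine .of_bound R (eventually_prod_principal_iff.2 (.of_forall fun _ q hq ↦ ?_))
  simpa using hR q hq

variable {a b : ℝ} {l : Filter ℕ} {K : Set (ℂ × ℂ)}

lemma natCast_le_system_size (ha : 0 ≤ a) (hb : 0 < b) (N : ℕ) : (N : ℝ) ≤ (b + 1) * N + a * N := by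
  nlinarith [N.cast_nonneg (α := ℝ), mul_nonneg ha N.cast_nonneg, mul_nonneg hb.le N.cast_nonneg]

lemma tendsto_system_size (ha : 0 ≤ a) (hb : 0 < b) (hl : l ≤ atTop) :
    Tendsto (fun q : ℕ × ℂ × ℂ ↦ (b + 1) * q.1 + a * q.1) (l ×ˢ 𝓟 K) atTop :=
  tendsto_atTop_mono (fun q ↦ natCast_le_system_size ha hb q.1)
    (tendsto_natCast_atTop_atTop.comp (tendsto_fst.mono_right hl))

lemma eventually_fst_ne_zero (hl : l ≤ atTop) :
    ∀ᶠ q : ℕ × ℂ × ℂ in l ×ˢ 𝓟 K, q.1 ≠ 0 :=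
  (tendsto_fst.mono_right hl).eventually (eventually_ne_atTop 0)

lemma exists_bound_div_sqrt (ha : 0 ≤ a) (hb : 0 < b) (hl : l ≤ atTop) {f : ℕ × ℂ × ℂ → ℂ}
    (hf : f =O[l ×ˢ 𝓟 K] fun q ↦ (√((b + 1) * q.1 + a * q.1))⁻¹) :
    ∃ C : ℝ, ∀ᶠ N : ℕ in l, ∀ q ∈ K, ‖f (N, q)‖ ≤ C / √N := by
  have hle : (fun N : ℕ ↦ (√((b + 1) * N + a * N))⁻¹) =O[l] fun N : ℕ ↦ (√N)⁻¹ := by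
    refine .of_bound' ?_
    filter_upwards [hl (eventually_gt_atTop 0)] with N hN
    rw [Real.norm_of_nonneg (by positivity), Real.norm_of_nonneg (by positivity)]
    gcongr
    exact natCast_le_system_size ha hb N
  exact exists_forall_norm_le_of_isBigO hf hle fun N ↦ by positivity

lemma exists_bound_exp_neg (ha : 0 ≤ a) (hb : 0 < b) {f : ℕ × ℂ × ℂ → ℂ}
    (hf : ∃ c > 0, f =O[l ×ˢ 𝓟 K] fun q ↦ Real.exp (-c * ((b + 1) * q.1 + a * q.1))) :
    ∃ c : ℝ, 0 < c ∧ ∃ C : ℝ, ∀ᶠ N : ℕ in l, ∀ q ∈ K, ‖f (N, q)‖ ≤ C * Real.exp (-c * N) := by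
  obtain ⟨c, hc, hf⟩ := hf
  refine ⟨c, hc, exists_forall_norm_le_of_isBigO
    (g := fun N ↦ Real.exp (-c * ((b + 1) * N + a * N))) hf (.of_norm_le fun N ↦ ?_)
    fun N ↦ by positivity⟩
  rw [Real.norm_of_nonneg (by positivity), Real.exp_le_exp]
  exact mul_le_mul_of_nonpos_left (natCast_le_system_size ha hb N) (neg_nonpos.2 hc.le)

end Uniform

theorem prefactor_asymptotics_strong_general (a b : ℝ) (ha : 0 ≤ a) (hb : 0 < b) (p : ℝ)
    (hp : 0 < p) {l : Filter ℕ} (hl : l ≤ atTop) (K : Set (ℂ × ℂ)) (hK : Bornology.IsBounded K) :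
    (∃ C : ℝ, ∀ᶠ N : ℕ in l, ∀ q ∈ K,
      ‖IN N ((b+1)*N) (a*N) p q.1 q.2 - 2 * Complex.exp (-(q.1-q.2)^2)‖
        ≤ C / Real.sqrt N) ∧
    ((p = rOut a b → ∃ C : ℝ, ∀ᶠ N : ℕ in l, ∀ q ∈ K,
        ‖IIN N ((b+1)*N) (a*N) p q.1 q.2 -
          (Real.sqrt 2 : ℂ) * Complex.exp (-2*q.1^2)‖ ≤ C / Real.sqrt N) ∧
      (p ≠ rOut a b → ∃ c : ℝ, 0 < c ∧ ∃ C : ℝ, ∀ᶠ N : ℕ in l, ∀ q ∈ K,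
          ‖IIN N ((b+1)*N) (a*N) p q.1 q.2‖ ≤ C * Real.exp (-c*N))) ∧
    ((p = rIn a b → ∃ C : ℝ, ∀ᶠ N : ℕ in l, ∀ q ∈ K,
        ‖IIIN N ((b+1)*N) (a*N) p q.1 q.2 -
          (Real.sqrt 2 : ℂ) * Complex.exp (-2*q.1^2)‖ ≤ C / Real.sqrt N) ∧
      (p ≠ rIn a b → ∃ c : ℝ, 0 < c ∧ ∃ C : ℝ, ∀ᶠ N : ℕ in l, ∀ q ∈ K,
          ‖IIIN N ((b+1)*N) (a*N) p q.1 q.2‖ ≤ C * Real.exp (-c*N))) := by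
  have hN := eventually_fst_ne_zero (K := K) hl
  have hM := tendsto_system_size (K := K) ha hb hl
  have hzw := isBigO_one_of_isBounded hK l
  have hz := isBigO_fst_prod.trans hzw
  have hw := isBigO_snd_prod.trans hzw
  have hθ_out (q : ℕ × ℂ × ℂ) :
      q.1 + a * q.1 = (1 + a) / (1 + a + b) * ((b + 1) * q.1 + a * q.1) := by
    field_simp
    ring
  have hθ_in (q : ℕ × ℂ × ℂ) : a * q.1 = a / (a + (b + 1)) * ((b + 1) * q.1 + a * q.1) := by
    field_simp
    ring
  refine ⟨exists_bound_div_sqrt ha hb hl (IN_sub_isBigO p hN hM hz hw), ⟨fun h ↦ ?_, fun h ↦ ?_⟩,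
    fun h ↦ ?_, fun h ↦ ?_⟩
  · have hσ := (eq_sqrt_div_iff hp (by positivity) hb).1 h
    exact exists_bound_div_sqrt ha hb hl
      (IIN_critical_isBigO hp hN hM hz (by rwa [hσ]) fun q ↦ q.2.2)
  · have hσ := (eq_sqrt_div_iff hp (by positivity) hb).not.1 h
    exact exists_bound_exp_neg ha hb (IIN_noncritical_isBigO hp hN hM hz hθ_out (by positivity)
      ((div_lt_one (by positivity)).2 (by linarith)) hσ fun q ↦ q.2.2)
  · have hσ := (eq_sqrt_div_iff hp ha (by positivity)).1 h
    exact exists_bound_div_sqrt ha hb hl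
      (IIIN_critical_isBigO hp hN hM hz (by rwa [hσ]) fun q ↦ q.2.2)
  · have hσ := (eq_sqrt_div_iff hp ha (by positivity)).not.1 h
    exact exists_bound_exp_neg ha hb (IIIN_noncritical_isBigO hp hN hM hz hθ_in (by positivity)
      ((div_lt_one (by positivity)).2 (by linarith)) hσ fun q ↦ q.2.2)

/-- Lemma 3.4(a): asymptotics of the inhomogeneous prefactors in the
strong non-unitarity regime. -/
theorem prefactor_asymptotics_strong (a b : ℝ) (ha : 0 ≤ a) (hb : 0 < b) (p : ℝ)
    (hp : 0 < p) (K : Set (ℂ × ℂ)) (hK : IsCompact K) :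
    (∃ C : ℝ, ∀ᶠ N : ℕ in atTop ⊓ 𝓟 (Sstrong a b), ∀ q ∈ K,
      ‖IN N ((b+1)*N) (a*N) p q.1 q.2 - 2 * Complex.exp (-(q.1-q.2)^2)‖
        ≤ C / Real.sqrt N) ∧
    ((p = rOut a b → ∃ C : ℝ, ∀ᶠ N : ℕ in atTop ⊓ 𝓟 (Sstrong a b), ∀ q ∈ K,
        ‖IIN N ((b+1)*N) (a*N) p q.1 q.2 -
          (Real.sqrt 2 : ℂ) * Complex.exp (-2*q.1^2)‖ ≤ C / Real.sqrt N) ∧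
      (p ≠ rOut a b → ∃ c : ℝ, 0 < c ∧ ∃ C : ℝ,
        ∀ᶠ N : ℕ in atTop ⊓ 𝓟 (Sstrong a b), ∀ q ∈ K,
          ‖IIN N ((b+1)*N) (a*N) p q.1 q.2‖ ≤ C * Real.exp (-c*N))) ∧
    ((p = rIn a b → ∃ C : ℝ, ∀ᶠ N : ℕ in atTop ⊓ 𝓟 (Sstrong a b), ∀ q ∈ K,
        ‖IIIN N ((b+1)*N) (a*N) p q.1 q.2 -
          (Real.sqrt 2 : ℂ) * Complex.exp (-2*q.1^2)‖ ≤ C / Real.sqrt N) ∧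
      (p ≠ rIn a b → ∃ c : ℝ, 0 < c ∧ ∃ C : ℝ,
        ∀ᶠ N : ℕ in atTop ⊓ 𝓟 (Sstrong a b), ∀ q ∈ K,
          ‖IIIN N ((b+1)*N) (a*N) p q.1 q.2‖ ≤ C * Real.exp (-c*N))) :=
  prefactor_asymptotics_strong_general a b ha hb p hp inf_le_left K hK.isBounded

end SI
end
end
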